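/- Fix a positive integer k and ε ∈ {1, 3}. There exist constants c > 0 and C > 0 such that for every real x ≥ 5 and every integer n with 0 < n ≤ (log x)^k one has |Σ_{p ≤ x, p prime, p ≡ ε (mod 4)} (n/p) − □(n) · π(x;4,ε)| ≤ C · π(x;4,ε) · exp(−c·√(log x)), where π(x;4,ε) = #{p ≤ x : p prime, p ≡ ε (mod 4)} and □(n) = 1 if n is a perfect square and □(n) = 0 otherwise. -/

import Mathlib

/-!
Writing `n = b² a` with `a` squarefree, `(n/p) = (a/p)` for all odd primes `p` not dividing `b`, and
by orthogonality modulo `4` the sum over `p ≡ ε` splits into sums of `(a/p)` and `(-a/p)` over all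
odd primes. For `D ≠ 1` squarefree, `n ↦ (D/n)` is a nontrivial quadratic character modulo `4 |D|`,
so everything follows from the Siegel–Walfisz theorem for these characters.

Siegel's theorem comes from Estermann's inequality: if `(s - 1) f(s)` is holomorphic and the Taylor
coefficients of `f` in powers of `2 - s` are nonnegative, then `f(β)` is bounded below in terms of
its residue at `1`. It is applied to `f(s) = ζ(s) L(s, χ) L(s, ψ) L(s, χψ)`, at a point `β` near `1`
where `f(β) ≤ 0`; for a bound on `L(1, χ)`, the character `ψ` is one whose `L`-function has a real
zero `β` if there is such a zero at all. Together with the classical zero-free region, obtained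
from Landau's local expansion of `f' / f` over the zeros near a point and the `3-4-1` inequality,
this leaves no zeros near the line `Re s = 1`. A Perron integral with the kernel
`X ^ s / (s (s + 1))` bounds the smoothed sums of `χ(n) Λ(n)`; a difference quotient removes the
smoothing, and partial summation passes from `Λ(n)` to the primes.
-/

/-- The Legendre symbol `(n/p)`, extended by `0` to non-prime `p`. -/
noncomputable def legendreSym' (p : ℕ) (n : ℤ) : ℤ :=
  if h : p.Prime then
    haveI : Fact p.Prime := ⟨h⟩
    legendreSym p n
  else 0

namespace SiegelWalfisz

section TailMellin

open Complex MeasureTheory Set Filter Topology Asymptotics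

/-- The Mellin transform at `-s` of the restriction of `g` to `(1, ∞)`. If `g` is the summatory
function of a sequence `a`, then `s * tailMellin g s` is the Dirichlet series of `a`. -/
noncomputable def tailMellin (g : ℝ → ℂ) (s : ℂ) : ℂ :=
  ∫ t in Ioi (1 : ℝ), g t * (t : ℂ) ^ (-(s + 1))

lemma tailMellin_eq_mellin (g : ℝ → ℂ) (s : ℂ) :
    tailMellin g s = mellin ((Ioi (1 : ℝ)).indicator g) (-s) := by
  have hsmul : ∀ t : ℝ, (t : ℂ) ^ (-s - 1) • (Ioi (1 : ℝ)).indicator g t =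
      (Ioi (1 : ℝ)).indicator (fun t => g t * (t : ℂ) ^ (-(s + 1))) t := fun t => by
    rw [← indicator_smul_apply (Ioi 1) (fun t : ℝ => (t : ℂ) ^ (-s - 1)) g]
    simp only [smul_eq_mul, mul_comm, neg_add']
  simp only [mellin, hsmul]
  rw [setIntegral_indicator measurableSet_Ioi,
    inter_eq_right.2 (Ioi_subset_Ioi zero_le_one), tailMellin]

lemma norm_mul_cpow_le {g : ℝ → ℂ} {K a : ℝ} (hb : ∀ t > 1, ‖g t‖ ≤ K * t ^ a) (s : ℂ) {t : ℝ}
    (ht : 1 < t) : ‖g t * (t : ℂ) ^ (-(s + 1))‖ ≤ K * t ^ (-(s.re - a) - 1) := by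
  have ht0 : 0 < t := zero_lt_one.trans ht
  calc ‖g t * (t : ℂ) ^ (-(s + 1))‖ = ‖g t‖ * t ^ (-(s + 1)).re := by
        rw [norm_mul, norm_cpow_eq_rpow_re_of_pos ht0]
    _ ≤ K * t ^ a * t ^ (-(s + 1)).re := by gcongr; exact hb t ht
    _ = K * t ^ (-(s.re - a) - 1) := by
        rw [mul_assoc, ← Real.rpow_add ht0]
        congr 2
        simp only [neg_re, add_re, one_re]
        ring

lemma integrableOn_tailMellin {g : ℝ → ℂ} (hg : Measurable g) {K a : ℝ}
    (hb : ∀ t > 1, ‖g t‖ ≤ K * t ^ a) {s : ℂ} (hs : a < s.re) :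
    IntegrableOn (fun t : ℝ => g t * (t : ℂ) ^ (-(s + 1))) (Ioi 1) := by
  refine ((integrableOn_Ioi_rpow_of_lt (a := -(s.re - a) - 1) (by linarith)
    one_pos).const_mul K).mono' (hg.mul (by fun_prop)).aestronglyMeasurable ?_
  exact (ae_restrict_iff' measurableSet_Ioi).2 (.of_forall fun t ht => norm_mul_cpow_le hb s ht)

lemma norm_tailMellin_le {g : ℝ → ℂ} {K a : ℝ} (hb : ∀ t > 1, ‖g t‖ ≤ K * t ^ a) {s : ℂ}
    (hs : a < s.re) : ‖tailMellin g s‖ ≤ K / (s.re - a) := by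
  have hint : IntegrableOn (fun t : ℝ => K * t ^ (-(s.re - a) - 1)) (Ioi 1) :=
    (integrableOn_Ioi_rpow_of_lt (by linarith) one_pos).const_mul K
  calc ‖tailMellin g s‖ ≤ ∫ t in Ioi (1 : ℝ), K * t ^ (-(s.re - a) - 1) :=
        norm_integral_le_of_norm_le hint ((ae_restrict_iff' measurableSet_Ioi).2
          (.of_forall fun t ht => norm_mul_cpow_le hb s ht))
    _ = K / (s.re - a) := by
        rw [integral_const_mul, integral_Ioi_rpow_of_lt (by linarith) one_pos, sub_add_cancel,
          Real.one_rpow, neg_div_neg_eq, mul_one_div]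

lemma differentiableAt_tailMellin {g : ℝ → ℂ} (hg : Measurable g) {K a : ℝ}
    (hb : ∀ t > 1, ‖g t‖ ≤ K * t ^ a) {s : ℂ} (hs : a < s.re) :
    DifferentiableAt ℂ (tailMellin g) s := by
  have hbound : ∀ t, ‖(Ioi (1 : ℝ)).indicator g t‖ ≤ ‖K * t ^ a‖ := by
    intro t
    by_cases h : t ∈ Ioi (1 : ℝ)
    · rw [indicator_of_mem h]
      exact (hb t h).trans (le_abs_self _)
    · rw [indicator_of_notMem h, norm_zero]
      positivity
  have hloc : LocallyIntegrableOn ((Ioi (1 : ℝ)).indicator g) (Ioi 0) := by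
    refine LocallyIntegrableOn.mono (f := fun t : ℝ => K * t ^ a) ?_
      (hg.indicator measurableSet_Ioi).aestronglyMeasurable
      (.of_forall hbound)
    exact ContinuousOn.locallyIntegrableOn (fun t ht => (continuousAt_const.mul
      (Real.continuousAt_rpow_const t a (.inl (mem_Ioi.1 ht).ne'))).continuousWithinAt)
      measurableSet_Ioi
  have htop : (Ioi (1 : ℝ)).indicator g =O[atTop] (· ^ (-(-a))) := by
    refine .of_bound |K| ?_
    filter_upwards [eventually_gt_atTop 0] with t _
    simpa using hbound t
  have hzero : (Ioi (1 : ℝ)).indicator g =O[𝓝[>] 0] (· ^ (-((-s).re - 1))) := by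
    refine .of_bound 0 ?_
    filter_upwards [nhdsWithin_le_nhds (eventually_lt_nhds zero_lt_one)] with t ht
    simp [indicator_of_notMem (show t ∉ Ioi (1 : ℝ) from ht.le.not_gt)]
  have hmellin := mellin_differentiableAt_of_isBigO_rpow (s := -s) hloc htop (by simpa using hs)
    hzero (by simp)
  rw [show tailMellin g = fun s => mellin ((Ioi (1 : ℝ)).indicator g) (-s) from
    funext (tailMellin_eq_mellin g)]
  exact hmellin.comp s differentiableAt_id.neg

lemma tailMellin_ofReal (g : ℝ → ℝ) (σ : ℝ) :
    tailMellin (fun t => (g t : ℂ)) σ = ((∫ t in Ioi (1 : ℝ), g t * t ^ (-(σ + 1)) : ℝ) : ℂ) := by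
  rw [tailMellin, ← integral_complex_ofReal]
  refine setIntegral_congr_fun measurableSet_Ioi fun t ht => ?_
  have ht0 : 0 ≤ t := zero_le_one.trans (mem_Ioi.1 ht).le
  push_cast [ofReal_cpow ht0]
  rfl

lemma measurable_natFloor_comp {E : Type*} [MeasurableSpace E] (a : ℕ → E) :
    Measurable fun t : ℝ => a ⌊t⌋₊ :=
  (measurable_from_nat (f := a)).comp Nat.measurable_floor

lemma eq_of_eq_on_one_lt_re {f g : ℂ → ℂ} (hf : DifferentiableOn ℂ f {s | 0 < s.re})
    (hg : DifferentiableOn ℂ g {s | 0 < s.re}) (h : ∀ s : ℂ, 1 < s.re → f s = g s) {s : ℂ}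
    (hs : 0 < s.re) : f s = g s := by
  have hopen : IsOpen {s : ℂ | 0 < s.re} := isOpen_lt continuous_const continuous_re
  have hev : f =ᶠ[𝓝 2] g := by
    filter_upwards [(isOpen_lt continuous_const continuous_re).mem_nhds
      (show (1 : ℝ) < (2 : ℂ).re by simp)] with z hz using h z hz
  exact (hf.analyticOnNhd hopen).eqOn_of_preconnected_of_eventuallyEq (hg.analyticOnNhd hopen)
    (convex_halfSpace_re_gt 0).isPreconnected (by simp) hev hs

end TailMellin

section CharacterSums

open Complex MeasureTheory Set Filter Topology Asymptotics

variable {q : ℕ} [NeZero q] {χ : DirichletCharacter ℂ q}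

/-- The partial sum `χ(1) + ⋯ + χ(n)`. -/
noncomputable def charSum {q : ℕ} (χ : DirichletCharacter ℂ q) (n : ℕ) : ℂ :=
  ∑ k ∈ Finset.Icc 1 n, χ (k : ZMod q)

lemma norm_charSum_le_self {q : ℕ} (χ : DirichletCharacter ℂ q) (n : ℕ) : ‖charSum χ n‖ ≤ n := by
  calc ‖charSum χ n‖ ≤ ∑ _k ∈ Finset.Icc 1 n, (1 : ℝ) :=
        norm_sum_le_of_le _ fun k _ => χ.norm_le_one _
    _ = n := by simp

lemma sum_range_natCast_add_zmod {M : Type*} [AddCommMonoid M] (f : ZMod q → M) (m : ℕ) :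
    ∑ k ∈ Finset.range q, f ((m + k : ℕ) : ZMod q) = ∑ a, f a := by
  rw [← Equiv.sum_comp (Equiv.addLeft (m : ZMod q)) f]
  refine Finset.sum_bij' (fun k _ => (k : ZMod q)) (fun a _ => a.val) (by simp)
    (fun a _ => by simpa using ZMod.val_lt a) (fun k hk => ?_) (by simp) (by simp)
  exact ZMod.val_cast_of_lt (Finset.mem_range.1 hk)

lemma charSum_periodic (hχ : χ ≠ 1) : Function.Periodic (charSum χ) q := by
  intro n
  have hblock : ∑ k ∈ Finset.Ico (n + 1) (n + 1 + q), χ (k : ZMod q) = 0 := by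
    rw [Finset.sum_Ico_eq_sum_range, Nat.add_sub_cancel_left, sum_range_natCast_add_zmod,
      MulChar.sum_eq_zero_of_ne_one hχ]
  have hsplit := Finset.sum_Ico_consecutive (fun k : ℕ => χ (k : ZMod q))
    (Nat.le_add_left 1 n) (Nat.le_add_right (n + 1) q)
  rw [hblock, add_zero, add_right_comm] at hsplit
  exact hsplit.symm

lemma norm_charSum_le (hχ : χ ≠ 1) (n : ℕ) : ‖charSum χ n‖ ≤ q := by
  rw [← (charSum_periodic hχ).map_mod_nat n]
  refine (norm_charSum_le_self χ _).trans ?_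
  exact_mod_cast (Nat.mod_lt n (NeZero.pos q)).le

-- Interpolates between the trivial bound and periodicity.
lemma norm_charSum_floor_le (hχ : χ ≠ 1) {ε : ℝ} (hε0 : 0 ≤ ε) (hε1 : ε ≤ 1) {t : ℝ} (ht : 0 < t) :
    ‖charSum χ ⌊t⌋₊‖ ≤ (q : ℝ) ^ ε * t ^ (1 - ε) := by
  have htriv : ‖charSum χ ⌊t⌋₊‖ ≤ t := (norm_charSum_le_self χ _).trans (Nat.floor_le ht.le)
  rcases (norm_nonneg (charSum χ ⌊t⌋₊)).eq_or_lt with h | h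
  · rw [← h]
    positivity
  calc ‖charSum χ ⌊t⌋₊‖ = ‖charSum χ ⌊t⌋₊‖ ^ ε * ‖charSum χ ⌊t⌋₊‖ ^ (1 - ε) := by
        rw [← Real.rpow_add h, add_sub_cancel, Real.rpow_one]
    _ ≤ (q : ℝ) ^ ε * t ^ (1 - ε) := by
        gcongr
        exact norm_charSum_le hχ _

lemma LFunction_eq_mul_tailMellin (hχ : χ ≠ 1) {s : ℂ} (hs : 0 < s.re) :
    χ.LFunction s = s * tailMellin (fun t => charSum χ ⌊t⌋₊) s := by
  refine eq_of_eq_on_one_lt_re (g := fun s => s * tailMellin (fun t => charSum χ ⌊t⌋₊) s)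
    (DirichletCharacter.differentiable_LFunction hχ).differentiableOn
    (fun s hs => (differentiableAt_id.mul (differentiableAt_tailMellin (K := q) (a := 0)
      (measurable_natFloor_comp _) (fun t _ => by simpa using norm_charSum_le hχ _)
      hs)).differentiableWithinAt) (fun s hs => ?_) hs
  rw [DirichletCharacter.LFunction_eq_LSeries χ hs]
  refine LSeries_eq_mul_integral (fun n : ℕ => χ (n : ZMod q)) le_rfl (zero_lt_one.trans hs)
    (DirichletCharacter.LSeriesSummable_of_one_lt_re χ hs) (.of_bound q (.of_forall fun n => ?_))
  simpa [charSum] using norm_charSum_le hχ n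

lemma norm_LFunction_le (hχ : χ ≠ 1) {ε : ℝ} (hε0 : 0 ≤ ε) (hε1 : ε ≤ 1) {s : ℂ}
    (hs0 : 0 < s.re) (hs : 1 - ε < s.re) :
    ‖χ.LFunction s‖ ≤ ‖s‖ * (q : ℝ) ^ ε / (s.re - (1 - ε)) := by
  rw [LFunction_eq_mul_tailMellin hχ hs0, norm_mul, mul_div_assoc]
  gcongr
  exact norm_tailMellin_le
    (fun t ht => norm_charSum_floor_le hχ hε0 hε1 (zero_lt_one.trans ht)) hs

lemma LFunction_ofReal_im (hχ : χ ≠ 1) (hreal : ∀ a, (χ a).im = 0) {σ : ℝ} (hσ : 0 < σ) :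
    (χ.LFunction σ).im = 0 := by
  have hsum : (fun t : ℝ => charSum χ ⌊t⌋₊) = fun t : ℝ => (((charSum χ ⌊t⌋₊).re : ℝ) : ℂ) := by
    ext t
    exact Complex.ext rfl (by simp [charSum, hreal])
  rw [LFunction_eq_mul_tailMellin hχ (by simpa using hσ), hsum, tailMellin_ofReal, ← ofReal_mul,
    ofReal_im]

end CharacterSums

section Zeta

open Complex MeasureTheory Set Filter Topology Asymptotics
open scoped ComplexOrder

/-- The entire function `(s - 1) ζ(s)`, with its removable singularity at `1` filled in. -/
noncomputable def zeta₁ : ℂ → ℂ := DirichletCharacter.LFunctionTrivChar₁ 1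

lemma differentiable_zeta₁ : Differentiable ℂ zeta₁ :=
  DirichletCharacter.differentiable_LFunctionTrivChar₁ 1

lemma zeta₁_one : zeta₁ 1 = 1 := by simp [zeta₁]

lemma zeta₁_of_ne_one {s : ℂ} (hs : s ≠ 1) : zeta₁ s = (s - 1) * riemannZeta s := by
  simp [zeta₁, Function.update_of_ne hs, DirichletCharacter.LFunctionTrivChar_eq_mul_riemannZeta hs]

lemma tailMellin_ofReal_self {s : ℂ} (hs : 1 < s.re) :
    tailMellin (fun t => (t : ℂ)) s = 1 / (s - 1) := by
  calc tailMellin (fun t => (t : ℂ)) s = ∫ t in Ioi (1 : ℝ), (t : ℂ) ^ (-s) := by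
        refine setIntegral_congr_fun measurableSet_Ioi fun t ht => ?_
        have ht0 : (t : ℂ) ≠ 0 := ofReal_ne_zero.2 (zero_lt_one.trans (mem_Ioi.1 ht)).ne'
        simp only [show -s = 1 + -(s + 1) by ring, cpow_add _ _ ht0, cpow_one]
    _ = 1 / (s - 1) := by
        rw [integral_Ioi_cpow_of_lt (by simpa using hs) one_pos, ofReal_one, one_cpow,
          neg_div, ← div_neg, neg_add, neg_neg, ← sub_eq_add_neg]

lemma mul_tailMellin_natFloor {s : ℂ} (hs : 1 < s.re) :
    s * tailMellin (fun t => (⌊t⌋₊ : ℂ)) s = riemannZeta s := by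
  have h := LSeries_eq_mul_integral (fun _ : ℕ => (1 : ℂ)) zero_le_one hs
    (LSeriesSummable_one_iff.2 hs) (.of_bound 1 (.of_forall fun n => by simp))
  rw [← LSeries_one_eq_riemannZeta hs]
  refine Eq.trans ?_ h.symm
  simp [tailMellin]

lemma norm_sub_natFloor_le {t : ℝ} (ht : 0 ≤ t) : ‖(t : ℂ) - ⌊t⌋₊‖ ≤ 1 := by
  rw [← ofReal_natCast, ← ofReal_sub, norm_real, Real.norm_eq_abs, abs_le]
  constructor <;> linarith [Nat.floor_le ht, Nat.lt_floor_add_one t]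

lemma zeta₁_eq_tailMellin {s : ℂ} (hs : 0 < s.re) :
    zeta₁ s = s - (s - 1) * (s * tailMellin (fun t => (t : ℂ) - ⌊t⌋₊) s) := by
  have hfloor : Measurable fun t : ℝ => (⌊t⌋₊ : ℂ) := measurable_natFloor_comp _
  refine eq_of_eq_on_one_lt_re
    (g := fun s => s - (s - 1) * (s * tailMellin (fun t => (t : ℂ) - ⌊t⌋₊) s))
    differentiable_zeta₁.differentiableOn (fun s hs => ?_) (fun s hs => ?_) hs
  · have := differentiableAt_tailMellin (K := 1) (a := 0) (measurable_ofReal.sub hfloor)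
      (fun t ht => by simpa using norm_sub_natFloor_le (zero_le_one.trans ht.le)) hs
    exact DifferentiableAt.differentiableWithinAt (by fun_prop)
  · have hs1 : s ≠ 1 := fun h => by simp [h] at hs
    have hsplit : tailMellin (fun t => (t : ℂ) - ⌊t⌋₊) s =
        1 / (s - 1) - tailMellin (fun t => (⌊t⌋₊ : ℂ)) s := by
      rw [← tailMellin_ofReal_self hs]
      simp only [tailMellin, sub_mul]
      refine integral_sub
        (integrableOn_tailMellin (K := 1) (a := 1) measurable_ofReal (fun t ht => ?_) hs)
        (integrableOn_tailMellin (K := 1) (a := 1) hfloor (fun t ht => ?_) hs)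
      · simp [abs_of_pos (zero_lt_one.trans ht)]
      · simpa using Nat.floor_le (zero_le_one.trans ht.le)
    rw [zeta₁_of_ne_one hs1, hsplit, ← mul_tailMellin_natFloor hs]
    field_simp [sub_ne_zero.2 hs1]
    ring

lemma norm_zeta₁_le {s : ℂ} (hs : 0 < s.re) : ‖zeta₁ s‖ ≤ ‖s‖ + ‖s - 1‖ * (‖s‖ / s.re) := by
  have htail : ‖tailMellin (fun t => (t : ℂ) - ⌊t⌋₊) s‖ ≤ 1 / (s.re - 0) :=
    norm_tailMellin_le
      (fun t ht => by simpa using norm_sub_natFloor_le (zero_le_one.trans ht.le)) hs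
  calc ‖zeta₁ s‖ ≤ ‖s‖ + ‖s - 1‖ * (‖s‖ * ‖tailMellin (fun t => (t : ℂ) - ⌊t⌋₊) s‖) := by
        rw [zeta₁_eq_tailMellin hs, ← norm_mul, ← norm_mul]
        exact norm_sub_le _ _
    _ ≤ ‖s‖ + ‖s - 1‖ * (‖s‖ / s.re) := by
        rw [div_eq_mul_one_div ‖s‖]
        gcongr
        simpa using htail

lemma zeta₁_ofReal_pos {σ : ℝ} (h0 : 0 < σ) (h1 : σ ≤ 1) : 0 < zeta₁ σ := by
  set I := ∫ t in Ioi (1 : ℝ), (t - ⌊t⌋₊) * t ^ (-(σ + 1)) with hI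
  have hI0 : 0 ≤ I := by
    refine setIntegral_nonneg measurableSet_Ioi fun t ht => ?_
    have ht0 : 0 ≤ t := zero_le_one.trans (mem_Ioi.1 ht).le
    exact mul_nonneg (sub_nonneg.2 (Nat.floor_le ht0)) (by positivity)
  have hval : zeta₁ σ = ((σ + (1 - σ) * (σ * I) : ℝ) : ℂ) := by
    have htail := tailMellin_ofReal (fun t => t - ⌊t⌋₊) σ
    push_cast at htail
    rw [zeta₁_eq_tailMellin (by simpa using h0), htail, hI]
    push_cast
    ring
  rw [hval]
  have : 0 ≤ 1 - σ := by linarith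
  exact_mod_cast (by positivity : 0 < σ + (1 - σ) * (σ * I))

end Zeta

section LocalFactorization

open Complex Set Metric

/-- The logarithmic derivative at `s` of the monic polynomial with multiset of roots `Z`. -/
noncomputable def polarSum (Z : Multiset ℂ) (s : ℂ) : ℂ :=
  (Z.map fun ρ => 1 / (s - ρ)).sum

variable {f g : ℂ → ℂ} {c ρ s : ℂ} {r R B : ℝ} {U : Set ℂ}

lemma norm_le_of_sphere_bound {M : ℝ} (hR : 0 < R) (hf : DifferentiableOn ℂ f (closedBall c R))
    (hb : ∀ s ∈ sphere c R, ‖f s‖ ≤ M) (hs : s ∈ closedBall c R) : ‖f s‖ ≤ M := by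
  rw [← closure_ball c hR.ne'] at hf hs
  refine norm_le_of_forall_mem_frontier_norm_le isBounded_ball hf.diffContOnCl ?_ hs
  rwa [frontier_ball c hR.ne']

lemma one_le_of_sphere_bound (hR : 0 < R) (hf : DifferentiableOn ℂ f (closedBall c R))
    (hc : f c ≠ 0) (hb : ∀ s ∈ sphere c R, ‖f s‖ ≤ B * ‖f c‖) : 1 ≤ B :=
  le_of_mul_le_mul_right
    ((one_mul _).trans_le (norm_le_of_sphere_bound hR hf hb (mem_closedBall_self hR.le)))
    (norm_pos_iff.2 hc)

lemma eq_sub_mul_dslope (hρ : f ρ = 0) (s : ℂ) : f s = (s - ρ) * dslope f ρ s := by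
  simpa [hρ] using (sub_smul_dslope f ρ s).symm

lemma norm_dslope_le_of_sphere_bound (hR : 0 < R) (hB : 0 ≤ B) (hρ : ρ ∈ closedBall c (R / 4))
    (hfρ : f ρ = 0) (hs : s ∈ sphere c R) (hb : ‖f s‖ ≤ B * ‖f c‖) :
    ‖dslope f ρ s‖ ≤ B / 3 * ‖dslope f ρ c‖ := by
  rw [mem_closedBall, dist_comm, dist_eq_norm] at hρ
  rw [mem_sphere, dist_eq_norm] at hs
  have hfar : 3 * R / 4 ≤ ‖s - ρ‖ := by
    linarith [norm_sub_le_norm_sub_add_norm_sub s ρ c, norm_sub_rev ρ c]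
  rw [eq_sub_mul_dslope hfρ s, eq_sub_mul_dslope hfρ c, norm_mul, norm_mul] at hb
  refine le_of_mul_le_mul_left ?_ (show 0 < 3 * R / 4 by positivity)
  calc 3 * R / 4 * ‖dslope f ρ s‖ ≤ ‖s - ρ‖ * ‖dslope f ρ s‖ := by gcongr
    _ ≤ B * (‖c - ρ‖ * ‖dslope f ρ c‖) := hb
    _ ≤ B * (R / 4 * ‖dslope f ρ c‖) := by gcongr
    _ = 3 * R / 4 * (B / 3 * ‖dslope f ρ c‖) := by ring

lemma logDeriv_eq_add_logDeriv_dslope (hf : DifferentiableAt ℂ (dslope f ρ) s) (hρ : f ρ = 0)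
    (hs : f s ≠ 0) : logDeriv f s = 1 / (s - ρ) + logDeriv (dslope f ρ) s := by
  rw [eq_sub_mul_dslope hρ s] at hs
  conv_lhs => rw [funext (eq_sub_mul_dslope hρ)]
  rw [logDeriv_mul s (left_ne_zero_of_mul hs) (right_ne_zero_of_mul hs) (by fun_prop) hf]
  simp [logDeriv_apply]

-- Dividing out one zero improves the bound `B` to `B / 3`, and `B` can never drop below `1`.
lemma exists_zeroFree_quotient (hU : IsOpen U) (hR : 0 < R) (hRU : closedBall c R ⊆ U) (n : ℕ) :
    ∀ (f : ℂ → ℂ) (B : ℝ), B < 3 ^ n → DifferentiableOn ℂ f U → f c ≠ 0 →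
      (∀ s ∈ sphere c R, ‖f s‖ ≤ B * ‖f c‖) →
      ∃ (Z : Multiset ℂ) (g : ℂ → ℂ), DifferentiableOn ℂ g U ∧
        (∀ ρ, ρ ∈ Z ↔ ρ ∈ closedBall c (R / 4) ∧ f ρ = 0) ∧
        (∀ s ∈ closedBall c (R / 4), g s ≠ 0) ∧
        (∀ s ∈ sphere c R, ‖g s‖ ≤ B * ‖g c‖) ∧
        ∀ s ∈ U, f s ≠ 0 → logDeriv f s = polarSum Z s + logDeriv g s := by
  induction n with
  | zero =>
    intro f B hB hf hc hb
    exact absurd hB (by simpa using one_le_of_sphere_bound hR (hf.mono hRU) hc hb)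
  | succ n ih =>
    intro f B hB hf hc hb
    have hB1 : 1 ≤ B := one_le_of_sphere_bound hR (hf.mono hRU) hc hb
    by_cases! hzero : ∃ ρ ∈ closedBall c (R / 4), f ρ = 0
    · obtain ⟨ρ, hρ, hfρ⟩ := hzero
      have hρU : ρ ∈ U := hRU (closedBall_subset_closedBall (by linarith) hρ)
      have hd : DifferentiableOn ℂ (dslope f ρ) U :=
        (differentiableOn_dslope (hU.mem_nhds hρU)).2 hf
      have hfac := eq_sub_mul_dslope hfρ
      obtain ⟨Z, g, hg, hZ, hg0, hgb, hlog⟩ := ih (dslope f ρ) (B / 3)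
        (by rw [pow_succ] at hB; linarith) hd (right_ne_zero_of_mul (hfac c ▸ hc))
        fun s hs => norm_dslope_le_of_sphere_bound hR (by linarith) hρ hfρ hs (hb s hs)
      refine ⟨ρ ::ₘ Z, g, hg, fun w => ?_, hg0, fun s hs => ?_, fun s hs hfs => ?_⟩
      · rw [Multiset.mem_cons, hZ, hfac w, mul_eq_zero, sub_eq_zero]
        exact ⟨by rintro (rfl | ⟨hw, h⟩) <;> tauto, by tauto⟩
      · exact (hgb s hs).trans (by gcongr; linarith)
      · rw [logDeriv_eq_add_logDeriv_dslope (hd.differentiableAt (hU.mem_nhds hs)) hfρ hfs,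
          hlog s hs (right_ne_zero_of_mul (hfac s ▸ hfs))]
        simp only [polarSum, Multiset.map_cons, Multiset.sum_cons, add_assoc]
    · exact ⟨0, f, hf, fun ρ => ⟨by simp, fun h => absurd h.2 (hzero ρ h.1)⟩, hzero, hb,
        by simp [polarSum]⟩

lemma exists_log_on_ball (hr : 0 < r) (hg : DifferentiableOn ℂ g (ball c r))
    (hg0 : ∀ s ∈ ball c r, g s ≠ 0) :
    ∃ F : ℂ → ℂ, F c = 0 ∧ (∀ z ∈ ball c r, HasDerivAt F (logDeriv g z) z) ∧
      ∀ z ∈ ball c r, g z = g c * exp (F z) := by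
  obtain ⟨F, hFc, hF : ∀ z ∈ ball c r, HasDerivAt F (logDeriv g z) z⟩ :=
    ((hg.deriv isOpen_ball).div hg hg0).isExactOn_ball.with_val_at c 0
  have hderiv : ∀ z ∈ ball c r, HasDerivAt (fun w => g w * exp (-F w)) 0 z := fun z hz => by
    have hgz := (hg.differentiableAt (isOpen_ball.mem_nhds hz)).hasDerivAt
    refine (hgz.fun_mul (hF z hz).fun_neg.cexp).congr_deriv ?_
    rw [logDeriv_apply]
    field_simp [hg0 z hz]
    ring
  refine ⟨F, hFc, hF, fun z hz => ?_⟩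
  have hconst := isOpen_ball.is_const_of_deriv_eq_zero (convex_ball c r).isPreconnected
    (fun w hw => (hderiv w hw).differentiableAt.differentiableWithinAt)
    (fun w hw => (hderiv w hw).deriv) (mem_ball_self hr) hz
  simp only [hFc, neg_zero, exp_zero, mul_one] at hconst
  rw [hconst, mul_assoc, ← exp_add, neg_add_cancel, exp_zero, mul_one]

lemma norm_le_of_re_le_of_map_center {F : ℂ → ℂ} {M : ℝ} (hr : 0 < r) (hM : 0 < M)
    (hF : DifferentiableOn ℂ F (ball c r)) (hFc : F c = 0) (hre : ∀ z ∈ ball c r, (F z).re ≤ M)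
    (hs : s ∈ closedBall c (3 * r / 4)) : ‖F s‖ ≤ 6 * M := by
  rw [mem_closedBall, dist_eq_norm] at hs
  have hmap : MapsTo (· + c) (ball (0 : ℂ) r) (ball c r) := fun w hw => by
    simpa [mem_ball, dist_eq_norm] using hw
  have hbound := borelCaratheodory_zero (f := fun w => F (w + c)) (z := s - c) hM
    (hF.comp (by fun_prop) hmap) (fun w hw => hre _ (hmap hw)) hr
    (by rw [mem_ball_zero_iff]; linarith) (by simpa using hFc)
  rw [sub_add_cancel] at hbound
  refine hbound.trans ?_
  rw [div_le_iff₀ (by linarith)]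
  nlinarith

lemma norm_logDeriv_le_of_zeroFree (hr : 0 < r) (hB : 1 < B) (hg : DifferentiableOn ℂ g (ball c r))
    (hg0 : ∀ s ∈ ball c r, g s ≠ 0) (hb : ∀ s ∈ ball c r, ‖g s‖ ≤ B * ‖g c‖)
    (hs : s ∈ closedBall c (r / 2)) : ‖logDeriv g s‖ ≤ 24 * Real.log B / r := by
  obtain ⟨F, hFc, hF, hexp⟩ := exists_log_on_ball hr hg hg0
  have hre : ∀ z ∈ ball c r, (F z).re ≤ Real.log B := fun z hz => by
    have hz' := hb z hz
    rw [hexp z hz, norm_mul, norm_exp, mul_comm] at hz'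
    exact (Real.le_log_iff_exp_le (by linarith)).2
      (le_of_mul_le_mul_right hz' (norm_pos_iff.2 (hg0 c (mem_ball_self hr))))
  have hFd : DifferentiableOn ℂ F (ball c r) := fun z hz =>
    (hF z hz).differentiableAt.differentiableWithinAt
  have hsub : closedBall s (r / 4) ⊆ closedBall c (3 * r / 4) :=
    closedBall_subset_closedBall' (by rw [mem_closedBall] at hs; linarith)
  have hsub' : closedBall c (3 * r / 4) ⊆ ball c r := closedBall_subset_ball (by linarith)
  have hcl : DiffContOnCl ℂ F (ball s (r / 4)) := DifferentiableOn.diffContOnCl <| by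
    rw [closure_ball _ (by positivity)]
    exact hFd.mono (hsub.trans hsub')
  have hcauchy := norm_deriv_le_of_forall_mem_sphere_norm_le (by positivity) hcl fun w hw =>
    norm_le_of_re_le_of_map_center hr (Real.log_pos hB) hFd hFc hre
      (hsub (sphere_subset_closedBall hw))
  rw [(hF s (closedBall_subset_ball (by linarith) hs)).deriv] at hcauchy
  exact hcauchy.trans_eq (by field_simp; ring)

lemma exists_norm_logDeriv_sub_polarSum_le (hU : IsOpen U) (hR : 0 < R) (hRU : closedBall c R ⊆ U)
    (hB : 1 < B) (hf : DifferentiableOn ℂ f U) (hc : f c ≠ 0)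
    (hb : ∀ s ∈ sphere c R, ‖f s‖ ≤ B * ‖f c‖) :
    ∃ Z : Multiset ℂ, (∀ ρ, ρ ∈ Z ↔ ρ ∈ closedBall c (R / 4) ∧ f ρ = 0) ∧
      ∀ s ∈ closedBall c (R / 8), f s ≠ 0 →
        ‖logDeriv f s - polarSum Z s‖ ≤ 96 * Real.log B / R := by
  obtain ⟨n, hn⟩ := pow_unbounded_of_one_lt B (by norm_num : (1 : ℝ) < 3)
  obtain ⟨Z, g, hg, hZ, hg0, hgb, hlog⟩ := exists_zeroFree_quotient hU hR hRU n f B hn hf hc hb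
  have hsub : closedBall c (R / 4) ⊆ closedBall c R := closedBall_subset_closedBall (by linarith)
  have hsub' : ball c (R / 4) ⊆ closedBall c (R / 4) := ball_subset_closedBall
  refine ⟨Z, hZ, fun s hs hfs => ?_⟩
  rw [hlog s (hRU (closedBall_subset_closedBall (by linarith) hs)) hfs, add_sub_cancel_left]
  refine (norm_logDeriv_le_of_zeroFree (r := R / 4) (by positivity) hB
    (hg.mono ((hsub'.trans hsub).trans hRU)) (fun z hz => hg0 z (hsub' hz))
    (fun z hz => norm_le_of_sphere_bound hR (hg.mono hRU) hgb (hsub (hsub' hz)))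
    (by rwa [div_div, show (4 * 2 : ℝ) = 8 by norm_num])).trans_eq ?_
  field_simp
  ring

end LocalFactorization

section LowerBounds

open Complex

variable {q : ℕ} [NeZero q] {χ : DirichletCharacter ℂ q} {s : ℂ} {σ : ℝ}

lemma hasSum_one_div_rpow (hσ : 1 < σ) :
    HasSum (fun n : ℕ => 1 / (n : ℝ) ^ σ) ‖riemannZeta σ‖ := by
  have hsum : Summable fun n : ℕ => 1 / (n : ℝ) ^ σ := Real.summable_one_div_nat_rpow.2 hσ
  have hzeta : riemannZeta σ = ((∑' n : ℕ, 1 / (n : ℝ) ^ σ : ℝ) : ℂ) := by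
    rw [zeta_eq_tsum_one_div_nat_cpow (by simpa using hσ), ofReal_tsum]
    simp [ofReal_cpow]
  rw [hzeta, norm_real, Real.norm_of_nonneg (tsum_nonneg fun n => by positivity)]
  exact hsum.hasSum

lemma norm_riemannZeta_ofReal_le (hσ : 1 < σ) : ‖riemannZeta σ‖ ≤ 2 + 1 / (σ - 1) := by
  have hσ1 : 0 < σ - 1 := sub_pos.2 hσ
  have h := norm_zeta₁_le (s := σ) (by simpa using (by linarith : 0 < σ))
  rw [zeta₁_of_ne_one (by exact_mod_cast hσ.ne'), norm_mul, ← ofReal_one, ← ofReal_sub, norm_real,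
    norm_real, ofReal_re, Real.norm_of_nonneg hσ1.le, Real.norm_of_nonneg (by linarith),
    div_self (by linarith)] at h
  refine le_of_mul_le_mul_left (h.trans_eq ?_) hσ1
  field_simp
  ring

lemma norm_LSeries_le {f : ℕ → ℂ} (hf : ∀ n, ‖f n‖ ≤ 1) (hs : 1 < s.re) :
    ‖LSeries f s‖ ≤ 2 + 1 / (s.re - 1) := by
  refine (tsum_of_norm_bounded (hasSum_one_div_rpow hs) fun n => ?_).trans
    (norm_riemannZeta_ofReal_le hs)
  rw [LSeries.norm_term_eq]
  split_ifs
  · positivity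
  · gcongr
    exact hf n

lemma one_le_norm_LFunction_mul (hs : 1 < s.re) :
    1 ≤ ‖χ.LFunction s‖ * (2 + 1 / (s.re - 1)) := by
  have hinv := congrArg norm (DirichletCharacter.LSeries.mul_mu_eq_one χ hs)
  rw [← DirichletCharacter.LFunction_eq_LSeries χ hs, norm_mul, norm_one] at hinv
  refine hinv.symm.le.trans ?_
  gcongr
  refine norm_LSeries_le (fun n => ?_) hs
  rw [Pi.mul_apply, norm_mul, norm_intCast]
  exact mul_le_one₀ (χ.norm_le_one _) (abs_nonneg _)
    (by exact_mod_cast ArithmeticFunction.abs_moebius_le_one)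

lemma one_le_norm_riemannZeta_mul (hs : 1 < s.re) :
    1 ≤ ‖riemannZeta s‖ * (2 + 1 / (s.re - 1)) := by
  simpa only [DirichletCharacter.LFunction_modOne_eq] using
    one_le_norm_LFunction_mul (χ := (1 : DirichletCharacter ℂ 1)) hs

lemma LFunction_ne_zero_of_one_le_re (hχ : χ ≠ 1) (hs : 1 ≤ s.re) : χ.LFunction s ≠ 0 :=
  DirichletCharacter.LFunction_ne_zero_of_one_le_re χ (.inl hχ) hs

lemma zeta₁_ne_zero_of_one_le_re (hs : 1 ≤ s.re) : zeta₁ s ≠ 0 := by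
  rcases eq_or_ne s 1 with rfl | hs1
  · rw [zeta₁_one]
    exact one_ne_zero
  · rw [zeta₁_of_ne_one hs1]
    exact mul_ne_zero (sub_ne_zero.2 hs1) (riemannZeta_ne_zero_of_one_le_re hs)

end LowerBounds

section LocalZeros

open Complex Set Metric

/-- `Z` lists, with multiplicity, the zeros of `f` within `1 / 8` of `1 + 1 / ℓ + it`, and the
partial fraction of `f' / f` over `Z` is accurate up to `2000 * ℓ` close to that point. Here `ℓ`
plays the role of the logarithm of the conductor. -/
structure IsLocalZeros (f : ℂ → ℂ) (ℓ t : ℝ) (Z : Multiset ℂ) : Prop where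
  mem_iff : ∀ ρ, ρ ∈ Z ↔ ρ ∈ closedBall (⟨1 + 1 / ℓ, t⟩ : ℂ) (1 / 8) ∧ f ρ = 0
  norm_logDeriv_sub_le : ∀ s ∈ closedBall (⟨1 + 1 / ℓ, t⟩ : ℂ) (1 / 16), f s ≠ 0 →
    ‖logDeriv f s - polarSum Z s‖ ≤ 2000 * ℓ

variable {f : ℂ → ℂ} {ℓ t : ℝ}

lemma half_le_re_of_mem_sphere {c s : ℂ} (hc : 1 ≤ c.re) (hs : s ∈ sphere c (1 / 2)) :
    1 / 2 ≤ s.re := by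
  rw [mem_sphere, dist_eq_norm] at hs
  have hre := (abs_le.1 ((abs_re_le_norm (s - c)).trans_eq hs)).1
  rw [sub_re] at hre
  linarith

lemma exp_sq_mul_le_exp_ten_mul (hℓ : 16 ≤ ℓ) :
    27 * Real.exp ℓ ^ 2 * (ℓ * (2 + ℓ)) ≤ Real.exp (10 * ℓ) := by
  set E := Real.exp ℓ with hE
  have hEℓ : ℓ + 1 ≤ E := Real.add_one_le_exp ℓ
  have hE10 : Real.exp (10 * ℓ) = E ^ 10 := by rw [hE, ← Real.exp_nat_mul]; norm_num
  calc 27 * E ^ 2 * (ℓ * (2 + ℓ)) ≤ E * E * E ^ 2 * (E * (E * E)) := by gcongr <;> nlinarith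
    _ = E ^ 7 := by ring
    _ ≤ E ^ 10 := pow_le_pow_right₀ (by linarith) (by norm_num)
    _ = Real.exp (10 * ℓ) := hE10.symm

lemma exists_isLocalZeros (hℓ : 16 ≤ ℓ) (ht : |t| ≤ 2 * Real.exp ℓ) (hf : Differentiable ℂ f)
    (hgrowth : ∀ s : ℂ, 1 / 2 ≤ s.re → ‖s‖ ≤ 3 * Real.exp ℓ → ‖f s‖ ≤ 27 * Real.exp ℓ ^ 2)
    (hc : 1 ≤ ‖f ⟨1 + 1 / ℓ, t⟩‖ * (ℓ * (2 + ℓ))) : ∃ Z, IsLocalZeros f ℓ t Z := by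
  set c : ℂ := ⟨1 + 1 / ℓ, t⟩
  set E := Real.exp ℓ
  have hEℓ : ℓ + 1 ≤ E := Real.add_one_le_exp ℓ
  have hinv : 1 / ℓ ≤ 1 := by rw [div_le_one (by linarith)]; linarith
  have hinv0 : 0 < 1 / ℓ := by positivity
  have hcn : ‖c‖ ≤ 2 + 2 * E := (norm_le_abs_re_add_abs_im c).trans <|
    add_le_add ((abs_of_pos (by positivity : 0 < 1 + 1 / ℓ)).trans_le (by linarith)) ht
  have hf0 : f c ≠ 0 := fun h => by norm_num [h] at hc
  obtain ⟨Z, hZ, hlog⟩ := exists_norm_logDeriv_sub_polarSum_le (R := 1 / 2) (B := Real.exp (10 * ℓ))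
    isOpen_univ (by norm_num) (subset_univ _) (Real.one_lt_exp_iff.2 (by linarith))
    hf.differentiableOn hf0 fun s hs => by
      have hsn : ‖s‖ ≤ 3 * E := by
        have h := norm_add_le (s - c) c
        rw [sub_add_cancel, ← dist_eq_norm, mem_sphere.1 hs] at h
        linarith
      calc ‖f s‖ ≤ 27 * E ^ 2 * 1 := by
            simpa using hgrowth s
              (half_le_re_of_mem_sphere (le_add_of_nonneg_right hinv0.le) hs) hsn
        _ ≤ 27 * E ^ 2 * (‖f c‖ * (ℓ * (2 + ℓ))) := by gcongr
        _ = 27 * E ^ 2 * (ℓ * (2 + ℓ)) * ‖f c‖ := by ring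
        _ ≤ Real.exp (10 * ℓ) * ‖f c‖ := by
          gcongr
          exact exp_sq_mul_le_exp_ten_mul hℓ
  rw [show (1 / 2 / 4 : ℝ) = 1 / 8 by norm_num] at hZ
  rw [Real.log_exp, show (1 / 2 / 8 : ℝ) = 1 / 16 by norm_num] at hlog
  exact ⟨Z, hZ, fun s hs hs' => (hlog s hs hs').trans (by linarith)⟩

variable {q : ℕ} [NeZero q] {χ : DirichletCharacter ℂ q}

lemma exists_isLocalZeros_LFunction (hχ : χ ≠ 1) (hℓ : 16 ≤ ℓ) (hq : q ≤ Real.exp ℓ)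
    (ht : |t| ≤ 2 * Real.exp ℓ) : ∃ Z, IsLocalZeros χ.LFunction ℓ t Z := by
  refine exists_isLocalZeros hℓ ht (DirichletCharacter.differentiable_LFunction hχ)
    (fun s hs hsn => ?_) ?_
  · have hb := norm_LFunction_le hχ (s := s) zero_le_one le_rfl (by linarith) (by linarith)
    rw [Real.rpow_one, sub_self, sub_zero] at hb
    refine hb.trans ?_
    rw [div_le_iff₀ (by linarith)]
    calc ‖s‖ * q ≤ 3 * Real.exp ℓ * Real.exp ℓ := by gcongr
      _ ≤ 27 * Real.exp ℓ ^ 2 * s.re := by nlinarith [Real.exp_pos ℓ]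
  · have hre : 1 < (⟨1 + 1 / ℓ, t⟩ : ℂ).re := lt_add_of_pos_right 1 (by positivity)
    have hb := one_le_norm_LFunction_mul (χ := χ) hre
    rw [add_sub_cancel_left, one_div_one_div] at hb
    exact hb.trans (by gcongr; nlinarith)

lemma exists_isLocalZeros_zeta₁ (hℓ : 16 ≤ ℓ) (ht : |t| ≤ 2 * Real.exp ℓ) :
    ∃ Z, IsLocalZeros zeta₁ ℓ t Z := by
  have hE := Real.add_one_le_exp ℓ
  refine exists_isLocalZeros hℓ ht differentiable_zeta₁ (fun s hs hsn => ?_) ?_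
  · have hs1 : ‖s - 1‖ ≤ 4 * Real.exp ℓ := (norm_sub_le s 1).trans (by rw [norm_one]; linarith)
    have hdiv : ‖s‖ / s.re ≤ 6 * Real.exp ℓ := by
      rw [div_le_iff₀ (by linarith)]
      nlinarith
    calc ‖zeta₁ s‖ ≤ ‖s‖ + ‖s - 1‖ * (‖s‖ / s.re) := norm_zeta₁_le (by linarith)
      _ ≤ 3 * Real.exp ℓ + 4 * Real.exp ℓ * (6 * Real.exp ℓ) := by gcongr
      _ ≤ 27 * Real.exp ℓ ^ 2 := by nlinarith
  · set c : ℂ := ⟨1 + 1 / ℓ, t⟩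
    have hre : 1 < c.re := lt_add_of_pos_right 1 (by positivity)
    have hb := one_le_norm_riemannZeta_mul hre
    rw [show c.re - 1 = 1 / ℓ from add_sub_cancel_left _ _, one_div_one_div] at hb
    have hc : 1 / ℓ ≤ ‖c - 1‖ := by
      simpa [c] using (le_abs_self _).trans (abs_re_le_norm (c - 1))
    rw [div_le_iff₀ (by linarith)] at hc
    calc (1 : ℝ) = 1 * 1 := (mul_one 1).symm
      _ ≤ ‖c - 1‖ * ℓ * (‖riemannZeta c‖ * (2 + ℓ)) := by gcongr
      _ = ‖zeta₁ c‖ * (ℓ * (2 + ℓ)) := by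
        rw [zeta₁_of_ne_one (by rintro h; simp [h] at hre), norm_mul]
        ring

end LocalZeros

section PolarSum

open Complex

variable {Z : Multiset ℂ} {s c ρ : ℂ}

lemma re_polarSum (Z : Multiset ℂ) (s : ℂ) :
    (polarSum Z s).re = (Z.map fun ρ => (1 / (s - ρ)).re).sum := by
  refine (map_multiset_sum reAddGroupHom _).trans ?_
  rw [Multiset.map_map]
  rfl

lemma re_one_div_pos {z : ℂ} (hz : 0 < z.re) : 0 < (1 / z).re := by
  rw [one_div, inv_re]
  exact div_pos hz (normSq_pos.2 (by rintro rfl; simp at hz))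

lemma re_polarSum_nonneg (h : ∀ ρ ∈ Z, ρ.re < s.re) : 0 ≤ (polarSum Z s).re := by
  rw [re_polarSum]
  refine Multiset.sum_nonneg ?_
  simp only [Multiset.mem_map, forall_exists_index, and_imp, forall_apply_eq_imp_iff₂]
  exact fun ρ hρ => (re_one_div_pos (by simpa using h ρ hρ)).le

lemma re_one_div_le_re_polarSum (h : ∀ ρ ∈ Z, ρ.re < s.re) (hρ : ρ ∈ Z) :
    (1 / (s - ρ)).re ≤ (polarSum Z s).re := by
  rw [re_polarSum]
  refine Multiset.single_le_sum ?_ _ (Multiset.mem_map_of_mem _ hρ)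
  simp only [Multiset.mem_map, forall_exists_index, and_imp, forall_apply_eq_imp_iff₂]
  exact fun ρ hρ => (re_one_div_pos (by simpa using h ρ hρ)).le

lemma norm_polarSum_sub_polarSum_le {K : ℝ}
    (h : ∀ ρ ∈ Z, ‖1 / (s - ρ) - 1 / (c - ρ)‖ ≤ K * (1 / (c - ρ)).re) :
    ‖polarSum Z s - polarSum Z c‖ ≤ K * (polarSum Z c).re := by
  rw [re_polarSum, ← Multiset.sum_map_mul_left, polarSum, polarSum, ← Multiset.sum_map_sub]
  refine (norm_multiset_sum_le _).trans ?_
  rw [Multiset.map_map]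
  exact Multiset.sum_map_le_sum_map _ _ h

lemma norm_one_div_sub_one_div_le {z w : ℂ} {b η : ℝ} (hb : 0 < b) (hb1 : b ≤ 1) (hη : 0 < η)
    (hz : b * η / 2 ≤ z.re) (hw : η ≤ w.re) (hzw : ‖w - z‖ ≤ 3 / 2 * η) :
    ‖1 / z - 1 / w‖ ≤ 8 / b * (1 / w).re := by
  have hzn : b * η / 2 ≤ ‖z‖ := hz.trans (re_le_norm z)
  have hz0 : 0 < ‖z‖ := lt_of_lt_of_le (by positivity) hzn
  have hw0 : 0 < ‖w‖ := hη.trans_le (hw.trans (re_le_norm w))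
  have hratio : b * ‖w‖ ≤ 4 * ‖z‖ := by
    have htri : ‖w‖ ≤ ‖w - z‖ + ‖z‖ := by simpa using norm_add_le (w - z) z
    nlinarith
  have hinv : 1 / ‖z‖ ≤ 4 / b / ‖w‖ := by
    rw [div_div, div_le_div_iff₀ hz0 (by positivity), one_mul]
    exact hratio
  rw [div_sub_div _ _ (norm_pos_iff.1 hz0) (norm_pos_iff.1 hw0), one_mul, mul_one, norm_div,
    norm_mul, one_div w, inv_re, normSq_eq_norm_sq]
  calc ‖w - z‖ / (‖z‖ * ‖w‖) = ‖w - z‖ * (1 / ‖z‖) / ‖w‖ := by field_simp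
    _ ≤ 2 * η * (4 / b / ‖w‖) / ‖w‖ := by gcongr; linarith
    _ = 8 / b * (η / ‖w‖ ^ 2) := by field_simp; ring
    _ ≤ 8 / b * (w.re / ‖w‖ ^ 2) := by gcongr

end PolarSum

namespace IsLocalZeros

open Complex Metric

variable {f : ℂ → ℂ} {a b ℓ σ t : ℝ} {Z : Multiset ℂ} {s ρ : ℂ}

lemma re_polarSum_le (hZ : IsLocalZeros f ℓ t Z)
    (hs : s ∈ closedBall (⟨1 + 1 / ℓ, t⟩ : ℂ) (1 / 16)) (hfs : f s ≠ 0) :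
    (polarSum Z s).re ≤ (logDeriv f s).re + 2000 * ℓ := by
  have h := (abs_le.1 ((abs_re_le_norm _).trans (hZ.norm_logDeriv_sub_le s hs hfs))).1
  rw [sub_re] at h
  linarith

lemma re_lt_one (hZ : IsLocalZeros f ℓ t Z) (hf : ∀ s : ℂ, 1 ≤ s.re → f s ≠ 0) (hρ : ρ ∈ Z) :
    ρ.re < 1 :=
  not_le.1 fun h => hf ρ h ((hZ.mem_iff ρ).1 hρ).2

lemma mem_closedBall_center (hℓ : 16 ≤ ℓ) (ha : 0 < a) (ha1 : a ≤ 1) (t : ℝ) :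
    (⟨1 + a / ℓ, t⟩ : ℂ) ∈ closedBall (⟨1 + 1 / ℓ, t⟩ : ℂ) (1 / 16) := by
  have hsub : (⟨1 + a / ℓ, t⟩ : ℂ) - ⟨1 + 1 / ℓ, t⟩ = ((a - 1) / ℓ : ℝ) := by
    apply Complex.ext <;> simp
    ring
  rw [mem_closedBall, dist_eq_norm, hsub, norm_real, Real.norm_eq_abs, abs_div,
    abs_of_pos (by linarith : 0 < ℓ), div_le_iff₀ (by linarith), abs_le]
  constructor <;> linarith

lemma re_logDeriv_nonneg (hZ : IsLocalZeros f ℓ t Z) (hf : ∀ s : ℂ, 1 ≤ s.re → f s ≠ 0)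
    (hℓ : 16 ≤ ℓ) (ha : 0 < a) (ha1 : a ≤ 1) :
    0 ≤ (logDeriv f ⟨1 + a / ℓ, t⟩).re + 2000 * ℓ := by
  have hre : 1 < (⟨1 + a / ℓ, t⟩ : ℂ).re := lt_add_of_pos_right 1 (by positivity)
  exact (re_polarSum_nonneg fun ρ hρ => (hZ.re_lt_one hf hρ).trans hre).trans
    (hZ.re_polarSum_le (mem_closedBall_center hℓ ha ha1 t) (hf _ hre.le))

lemma one_div_le_re_logDeriv (hZ : IsLocalZeros f ℓ t Z) (hf : ∀ s : ℂ, 1 ≤ s.re → f s ≠ 0)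
    (hℓ : 16 ≤ ℓ) (ha : 0 < a) (ha1 : a ≤ 1) {β : ℝ} (hβ : 1 - 1 / ℓ ≤ β) (hzero : f ⟨β, t⟩ = 0) :
    1 / (1 + a / ℓ - β) ≤ (logDeriv f ⟨1 + a / ℓ, t⟩).re + 2000 * ℓ := by
  have hβ1 : β < 1 := not_le.1 fun h => hf ⟨β, t⟩ h hzero
  have hre : 1 < (⟨1 + a / ℓ, t⟩ : ℂ).re := lt_add_of_pos_right 1 (by positivity)
  have hinv : 1 / ℓ ≤ 1 / 16 := by gcongr
  have hmem : (⟨β, t⟩ : ℂ) ∈ Z := by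
    have hsub : (⟨β, t⟩ : ℂ) - ⟨1 + 1 / ℓ, t⟩ = (β - 1 - 1 / ℓ : ℝ) := by
      apply Complex.ext <;> simp
      ring
    refine (hZ.mem_iff _).2 ⟨?_, hzero⟩
    rw [mem_closedBall, dist_eq_norm, hsub, norm_real, Real.norm_eq_abs, abs_le]
    constructor <;> linarith [one_div_pos.2 (by linarith : 0 < ℓ)]
  have hterm : (1 / ((⟨1 + a / ℓ, t⟩ : ℂ) - ⟨β, t⟩)).re = 1 / (1 + a / ℓ - β) := by
    rw [show (⟨1 + a / ℓ, t⟩ : ℂ) - ⟨β, t⟩ = ((1 + a / ℓ - β : ℝ) : ℂ) by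
      apply Complex.ext <;> simp, ← ofReal_one, ← ofReal_div, ofReal_re]
  rw [← hterm]
  exact (re_one_div_le_re_polarSum (fun ρ hρ => (hZ.re_lt_one hf hρ).trans hre) hmem).trans
    (hZ.re_polarSum_le (mem_closedBall_center hℓ ha ha1 t) (hf _ hre.le))

lemma norm_polarSum_sub_center_le (hZ : IsLocalZeros f ℓ t Z) (hb : 0 < b) (hb1 : b ≤ 1)
    (hℓ : 32 ≤ ℓ) (hzf : ∀ ρ ∈ closedBall (⟨1 + 1 / ℓ, t⟩ : ℂ) (1 / 8), f ρ = 0 → ρ.re < 1 - b / ℓ)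
    (hc0 : f ⟨1 + 1 / ℓ, t⟩ ≠ 0) (hc : ‖logDeriv f ⟨1 + 1 / ℓ, t⟩‖ ≤ 2001 * ℓ)
    (hσ : 1 - b / (2 * ℓ) ≤ σ) (hσ' : ‖(⟨1 + 1 / ℓ, t⟩ : ℂ) - ⟨σ, t⟩‖ ≤ 3 / 2 * (1 / ℓ)) :
    ‖polarSum Z ⟨σ, t⟩ - polarSum Z ⟨1 + 1 / ℓ, t⟩‖ ≤ 8 / b * (4001 * ℓ) := by
  have hη : 0 < 1 / ℓ := by positivity
  have hbη : b / ℓ = b * (1 / ℓ) := div_eq_mul_one_div b ℓ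
  have hbη' : b / (2 * ℓ) = b * (1 / ℓ) / 2 := by field_simp
  have hbη0 : 0 < b * (1 / ℓ) := by positivity
  refine (norm_polarSum_sub_polarSum_le fun ρ hρ => ?_).trans (b := 8 / b * (polarSum Z _).re) ?_
  · have hre := hzf ρ ((hZ.mem_iff ρ).1 hρ).1 ((hZ.mem_iff ρ).1 hρ).2
    refine norm_one_div_sub_one_div_le hb hb1 hη ?_ ?_ (by rwa [sub_sub_sub_cancel_right])
    · rw [sub_re, show (⟨σ, t⟩ : ℂ).re = σ from rfl]
      linarith
    · rw [sub_re, show (⟨1 + 1 / ℓ, t⟩ : ℂ).re = 1 + 1 / ℓ from rfl]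
      linarith
  · gcongr
    linarith [hZ.re_polarSum_le (mem_closedBall_self (by norm_num)) hc0,
      re_le_norm (logDeriv f ⟨1 + 1 / ℓ, t⟩)]

lemma norm_logDeriv_le (hZ : IsLocalZeros f ℓ t Z) (hb : 0 < b) (hb1 : b ≤ 1)
    (hℓ : 32 ≤ ℓ) (hzf : ∀ ρ ∈ closedBall (⟨1 + 1 / ℓ, t⟩ : ℂ) (1 / 8), f ρ = 0 → ρ.re < 1 - b / ℓ)
    (hc0 : f ⟨1 + 1 / ℓ, t⟩ ≠ 0) (hc : ‖logDeriv f ⟨1 + 1 / ℓ, t⟩‖ ≤ 2001 * ℓ)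
    (hs0 : f ⟨σ, t⟩ ≠ 0) (hσ : 1 - b / (2 * ℓ) ≤ σ) (hσ' : σ ≤ 1 + 1 / ℓ) :
    ‖logDeriv f ⟨σ, t⟩‖ ≤ 40000 / b * ℓ := by
  have hη32 : 1 / ℓ ≤ 1 / 32 := by gcongr
  have hbη : b / (2 * ℓ) ≤ 1 / ℓ / 2 := by
    rw [div_div, mul_comm ℓ]
    gcongr
  have hdist : ‖(⟨1 + 1 / ℓ, t⟩ : ℂ) - ⟨σ, t⟩‖ ≤ 3 / 2 * (1 / ℓ) := by
    rw [show (⟨1 + 1 / ℓ, t⟩ : ℂ) - ⟨σ, t⟩ = ((1 + 1 / ℓ - σ : ℝ) : ℂ) by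
      apply Complex.ext <;> simp, norm_real, Real.norm_of_nonneg (sub_nonneg.2 hσ')]
    linarith
  have hpolar := hZ.norm_polarSum_sub_center_le hb hb1 hℓ hzf hc0 hc hσ hdist
  have hs := hZ.norm_logDeriv_sub_le ⟨σ, t⟩
    (by rw [mem_closedBall, dist_comm, dist_eq_norm]; linarith) hs0
  have hc' := hZ.norm_logDeriv_sub_le _ (mem_closedBall_self (by norm_num)) hc0
  rw [norm_sub_rev] at hc'
  have hℓb : 6001 * ℓ ≤ 6001 * ℓ / b := by
    rw [le_div_iff₀ hb]
    exact mul_le_of_le_one_right (by positivity) hb1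
  calc ‖logDeriv f ⟨σ, t⟩‖ ≤ 2000 * ℓ + 8 / b * (4001 * ℓ) + 2000 * ℓ + 2001 * ℓ := by
        refine (norm_le_norm_sub_add _ _).trans (add_le_add ?_ hc)
        refine (norm_sub_le_norm_sub_add_norm_sub _ (polarSum Z ⟨1 + 1 / ℓ, t⟩) _).trans
          (add_le_add ?_ hc')
        exact (norm_sub_le_norm_sub_add_norm_sub _ _ _).trans (add_le_add hs hpolar)
    _ ≤ 40000 / b * ℓ := by
      rw [show 40000 / b * ℓ = 8 / b * (4001 * ℓ) + 6001 * ℓ / b + 1991 * ℓ / b by ring]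
      linarith [show 0 ≤ 1991 * ℓ / b by positivity]

end IsLocalZeros

section LogDeriv

open Complex ArithmeticFunction

variable {q : ℕ} {χ : DirichletCharacter ℂ q} {s : ℂ} {a ℓ σ t : ℝ}

lemma LSeries_vonMangoldt_eq_sub_logDeriv_zeta₁ (hs : 1 < s.re) :
    LSeries (fun n => (Λ n : ℂ)) s = 1 / (s - 1) - logDeriv zeta₁ s := by
  have hs1 : s ≠ 1 := by rintro rfl; simp at hs
  have heq : zeta₁ =ᶠ[nhds s] fun z => (z - 1) * riemannZeta z := by
    filter_upwards [isOpen_ne.mem_nhds hs1] with z hz using zeta₁_of_ne_one hz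
  have hlog : logDeriv zeta₁ s = 1 / (s - 1) + logDeriv riemannZeta s := by
    rw [logDeriv_apply, heq.deriv_eq, heq.eq_of_nhds, ← logDeriv_apply,
      logDeriv_mul (f := fun z => z - 1) s (sub_ne_zero.2 hs1)
        (riemannZeta_ne_zero_of_one_le_re hs.le) (by fun_prop) (differentiableAt_riemannZeta hs1)]
    simp [logDeriv_apply]
  rw [LSeries_vonMangoldt_eq_deriv_riemannZeta_div hs, hlog, logDeriv_apply]
  ring

lemma LSeries_mul_vonMangoldt_eq_neg_logDeriv [NeZero q] (hs : 1 < s.re) :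
    LSeries ((fun n : ℕ => χ n) * fun n => (Λ n : ℂ)) s = -logDeriv χ.LFunction s := by
  rw [DirichletCharacter.LSeries_twist_vonMangoldt_eq χ hs, logDeriv_apply,
    DirichletCharacter.deriv_LFunction_eq_deriv_LSeries χ hs,
    DirichletCharacter.LFunction_eq_LSeries χ hs, neg_div]

lemma re_LSeries_vonMangoldt_le (hℓ : 16 ≤ ℓ) (ht : |t| ≤ 2 * Real.exp ℓ) (ha : 0 < a)
    (ha1 : a ≤ 1) :
    (LSeries (fun n => (Λ n : ℂ)) ⟨1 + a / ℓ, t⟩).re ≤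
      a / ℓ / ((a / ℓ) ^ 2 + t ^ 2) + 2000 * ℓ := by
  obtain ⟨Z, hZ⟩ := exists_isLocalZeros_zeta₁ hℓ ht
  have hnonneg := hZ.re_logDeriv_nonneg (fun _ => zeta₁_ne_zero_of_one_le_re) hℓ ha ha1
  have hpole : (1 / ((⟨1 + a / ℓ, t⟩ : ℂ) - 1)).re = a / ℓ / ((a / ℓ) ^ 2 + t ^ 2) := by
    rw [one_div, inv_re, normSq_apply]
    simp [sq]
  rw [LSeries_vonMangoldt_eq_sub_logDeriv_zeta₁ (lt_add_of_pos_right 1 (by positivity)), sub_re,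
    hpole]
  linarith

lemma re_LSeries_vonMangoldt_ofReal_le (hℓ : 16 ≤ ℓ) (ha : 0 < a) (ha1 : a ≤ 1) :
    (LSeries (fun n => (Λ n : ℂ)) (1 + a / ℓ : ℝ)).re ≤ ℓ / a + 2000 * ℓ := by
  refine (re_LSeries_vonMangoldt_le (t := 0) hℓ (by rw [abs_zero]; positivity) ha ha1).trans_eq ?_
  field_simp
  ring

lemma re_ofReal_div_natCast_cpow {n : ℕ} (hn : n ≠ 0) (x : ℝ) (s : ℂ) :
    ((x : ℂ) / (n : ℂ) ^ s).re = x * (n : ℝ) ^ (-s.re) * Real.cos (s.im * Real.log n) := by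
  have hn0 : (n : ℂ) ≠ 0 := by exact_mod_cast hn
  rw [div_eq_mul_inv, ← cpow_neg, cpow_def_of_ne_zero hn0, re_ofReal_mul, ← natCast_log, exp_re,
    Real.rpow_def_of_pos (by positivity), re_ofReal_mul, im_ofReal_mul, neg_re, neg_im, mul_assoc,
    mul_neg (Real.log n) s.im, Real.cos_neg, mul_comm (Real.log n) s.im]

lemma exists_real_of_isQuadratic (hχ : χ.IsQuadratic) (a : ZMod q) :
    ∃ r : ℝ, χ a = r ∧ |r| ≤ 1 ∧ (r = 0 ∨ r ^ 2 = 1) := by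
  rcases hχ a with h | h | h
  · exact ⟨0, by simp [h]⟩
  · exact ⟨1, by simp [h]⟩
  · exact ⟨-1, by simp [h]⟩

lemma three_add_four_mul_cos_add_cos_two_mul_nonneg {r : ℝ} (hr : r = 0 ∨ r ^ 2 = 1) (θ : ℝ) :
    0 ≤ 3 + 4 * (r * Real.cos θ) + Real.cos (2 * θ) := by
  rw [Real.cos_two_mul]
  rcases hr with rfl | hr
  · nlinarith [sq_nonneg (Real.cos θ)]
  · nlinarith [sq_nonneg (r + Real.cos θ)]

lemma three_four_one (hχ : χ.IsQuadratic) (hσ : 1 < σ) (t : ℝ) :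
    0 ≤ 3 * (LSeries (fun n => (Λ n : ℂ)) ⟨σ, 0⟩).re
      + 4 * (LSeries ((fun n : ℕ => χ n) * fun n => (Λ n : ℂ)) ⟨σ, t⟩).re
      + (LSeries (fun n => (Λ n : ℂ)) ⟨σ, 2 * t⟩).re := by
  have hsum₀ := hasSum_re (LSeriesSummable_vonMangoldt (s := ⟨σ, 0⟩) hσ).hasSum
  have hsum₁ := hasSum_re
    (DirichletCharacter.LSeriesSummable_twist_vonMangoldt χ (s := ⟨σ, t⟩) hσ).hasSum
  have hsum₂ := hasSum_re (LSeriesSummable_vonMangoldt (s := ⟨σ, 2 * t⟩) hσ).hasSum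
  refine (((hsum₀.mul_left 3).add (hsum₁.mul_left 4)).add hsum₂).nonneg fun n => ?_
  rcases eq_or_ne n 0 with rfl | hn
  · simp
  obtain ⟨r, hr, -, hr01⟩ := exists_real_of_isQuadratic hχ n
  simp only [LSeries.term_of_ne_zero hn, Pi.mul_apply, hr, ← ofReal_mul,
    re_ofReal_div_natCast_cpow hn, zero_mul, Real.cos_zero]
  have hnonneg : 0 ≤ Λ n * (n : ℝ) ^ (-σ) := mul_nonneg vonMangoldt_nonneg (by positivity)
  convert mul_nonneg hnonneg
    (three_add_four_mul_cos_add_cos_two_mul_nonneg hr01 (t * Real.log n)) using 1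
  rw [← mul_assoc 2 t]
  ring

lemma norm_LSeries_mul_vonMangoldt_le (hs : 1 < s.re) :
    ‖LSeries ((fun n : ℕ => χ n) * fun n => (Λ n : ℂ)) s‖ ≤
      (LSeries (fun n => (Λ n : ℂ)) s.re).re := by
  have hsum := hasSum_re (LSeriesSummable_vonMangoldt (s := (s.re : ℂ)) hs).hasSum
  refine tsum_of_norm_bounded hsum fun n => ?_
  rcases eq_or_ne n 0 with rfl | hn
  · simp
  rw [LSeries.norm_term_eq, if_neg hn, LSeries.term_of_ne_zero hn, re_ofReal_div_natCast_cpow hn,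
    ofReal_re, ofReal_im, zero_mul, Real.cos_zero, mul_one, Real.rpow_neg n.cast_nonneg,
    ← div_eq_mul_inv, Pi.mul_apply, norm_mul, norm_real, Real.norm_of_nonneg vonMangoldt_nonneg]
  gcongr
  exact mul_le_of_le_one_left vonMangoldt_nonneg (χ.norm_le_one _)

lemma norm_logDeriv_LFunction_le_of_re_eq [NeZero q] (hℓ : 16 ≤ ℓ) (hs : s.re = 1 + 1 / ℓ) :
    ‖logDeriv χ.LFunction s‖ ≤ 2001 * ℓ := by
  have hs1 : 1 < s.re := hs ▸ lt_add_of_pos_right 1 (by positivity)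
  rw [← norm_neg, ← LSeries_mul_vonMangoldt_eq_neg_logDeriv hs1]
  refine (norm_LSeries_mul_vonMangoldt_le hs1).trans ?_
  rw [hs]
  exact (re_LSeries_vonMangoldt_ofReal_le hℓ one_pos le_rfl).trans_eq (by ring)

end LogDeriv

section ZeroFreeRegion

open Complex

variable {q : ℕ} [NeZero q] {χ : DirichletCharacter ℂ q} {s : ℂ} {a b ℓ : ℝ}

lemma LFunction_ne_zero_of_le_abs_im (hχ : χ ≠ 1) (hquad : χ.IsQuadratic) (ha : 0 < a)
    (ha1 : a ≤ 1 / 100000) (hℓ : 16 ≤ ℓ) (hq : q ≤ Real.exp ℓ) (hre : 1 - a / 7 / ℓ ≤ s.re)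
    (him : a / ℓ ≤ |s.im|) (him' : |s.im| ≤ Real.exp ℓ) : χ.LFunction s ≠ 0 := by
  intro hzero
  obtain ⟨β, t⟩ := s
  have hα : 0 < a / ℓ := by positivity
  have hf : ∀ s : ℂ, 1 ≤ s.re → χ.LFunction s ≠ 0 := fun _ => LFunction_ne_zero_of_one_le_re hχ
  have hβ : β < 1 := not_le.1 fun h => hf ⟨β, t⟩ h hzero
  have hβ' : 1 - a / ℓ / 7 ≤ β := by rwa [div_right_comm]
  obtain ⟨Z, hZ⟩ := exists_isLocalZeros_LFunction hχ hℓ hq (t := t)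
    (him'.trans (by linarith [Real.exp_pos ℓ]))
  have h341 := three_four_one hquad (lt_add_of_pos_right 1 hα) t
  rw [LSeries_mul_vonMangoldt_eq_neg_logDeriv (lt_add_of_pos_right 1 hα), neg_re] at h341
  have hpole : (LSeries _ ⟨1 + a / ℓ, 0⟩).re ≤ _ :=
    re_LSeries_vonMangoldt_ofReal_le hℓ ha (by linarith)
  have hzeta := re_LSeries_vonMangoldt_le (t := 2 * t) hℓ
    (by rw [abs_mul, abs_two]; linarith) ha (by linarith)
  have hL := hZ.one_div_le_re_logDeriv hf hℓ ha (by linarith)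
    (show 1 - 1 / ℓ ≤ β by
      have : a / ℓ ≤ 1 / ℓ := by gcongr; linarith
      linarith) hzero
  have hfar : a / ℓ / ((a / ℓ) ^ 2 + (2 * t) ^ 2) ≤ ℓ / a * (1 / 5) := by
    have ht2 : (a / ℓ) ^ 2 ≤ t ^ 2 := by rw [← sq_abs t]; gcongr
    calc _ ≤ a / ℓ / (5 * (a / ℓ) ^ 2) := by gcongr; nlinarith
      _ = ℓ / a * (1 / 5) := by field_simp
  have hnear : ℓ / a * (7 / 8) ≤ 1 / (1 + a / ℓ - β) := by
    calc ℓ / a * (7 / 8) = 1 / (a / ℓ + a / ℓ / 7) := by field_simp; norm_num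
      _ ≤ 1 / (1 + a / ℓ - β) := one_div_le_one_div_of_le (by linarith) (by linarith)
  have hbig : 100000 * ℓ ≤ ℓ / a := by
    rw [le_div_iff₀ ha]
    nlinarith
  linarith

lemma norm_logDeriv_LFunction_le (hχ : χ ≠ 1) (hb : 0 < b) (hb1 : b ≤ 1) (hℓ : 32 ≤ ℓ)
    (hq : q ≤ Real.exp ℓ)
    (hzf : ∀ s : ℂ, 1 - b / ℓ ≤ s.re → |s.im| ≤ Real.exp ℓ → χ.LFunction s ≠ 0)
    (hre : 1 - b / (2 * ℓ) ≤ s.re) (hre' : s.re ≤ 1 + 1 / ℓ) (him : |s.im| ≤ Real.exp ℓ - 1) :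
    ‖logDeriv χ.LFunction s‖ ≤ 40000 / b * ℓ := by
  obtain ⟨σ, t⟩ := s
  obtain ⟨Z, hZ⟩ := exists_isLocalZeros_LFunction hχ (by linarith : 16 ≤ ℓ) hq (t := t)
    (him.trans (by linarith [Real.exp_pos ℓ]))
  have hσ : 1 - b / ℓ ≤ σ := le_trans (by gcongr; linarith) hre
  refine hZ.norm_logDeriv_le hb hb1 hℓ (fun ρ hρ hzero => ?_)
    (LFunction_ne_zero_of_one_le_re hχ (le_add_of_nonneg_right (by positivity)))
    (norm_logDeriv_LFunction_le_of_re_eq (by linarith) rfl)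
    (hzf ⟨σ, t⟩ hσ (him.trans (by linarith))) hre hre'
  refine not_le.1 fun h => hzf ρ h ?_ hzero
  have him' : |ρ.im - t| ≤ 1 / 8 := (abs_im_le_norm (ρ - ⟨1 + 1 / ℓ, t⟩)).trans
    (by rwa [← dist_eq_norm])
  linarith [abs_sub_abs_le_abs_sub ρ.im t, show |t| ≤ Real.exp ℓ - 1 from him]

end ZeroFreeRegion

section QuadraticCharacters

open NumberTheorySymbols

variable {D E : ℤ} {m M : ℕ}

lemma exists_modEq_one_modEq_coprime {p c r : ℕ} (hp : p.Prime) (hm : m ≠ 0) (hc : ¬ p ∣ c)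
    (hr : ¬ p ∣ r) (j : ℕ) :
    ∃ M : ℕ, M ≡ 1 [MOD c] ∧ M ≡ r [MOD p ^ (j + 1)] ∧ m.Coprime M := by
  obtain ⟨i, m', hm', rfl⟩ := Nat.exists_eq_pow_mul_and_not_dvd hm p hp.ne_one
  have hcop : (c * m').Coprime (p ^ (j + 1)) :=
    (Nat.Coprime.pow_left _ ((hp.coprime_iff_not_dvd).2 fun h =>
      (hp.dvd_mul.1 h).elim hc hm')).symm
  obtain ⟨M, hM1, hMr⟩ := Nat.chineseRemainder hcop 1 r
  refine ⟨M, hM1.of_dvd (dvd_mul_right _ _), hMr, Nat.Coprime.mul_left (.pow_left _ ?_) ?_⟩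
  · exact hp.coprime_iff_not_dvd.2 fun h =>
      hr (((hMr.of_dvd (dvd_pow_self p j.succ_ne_zero)).dvd_iff dvd_rfl).1 h)
  · rw [Nat.coprime_comm, Nat.Coprime, (hM1.of_dvd (dvd_mul_left m' c)).gcd_eq, Nat.gcd_one_left]

lemma jacobiSym_eq_one_of_modEq_one (hM : Odd M) (h : M ≡ 1 [MOD 4 * D.natAbs]) : J(D | M) = 1 := by
  rw [jacobiSym.mod_right D hM, h, ← jacobiSym.mod_right D odd_one, jacobiSym.one_right]

lemma exists_jacobiSym_eq_neg_one_of_odd_prime_dvd {p : ℕ} (hD : Squarefree D) (hp : p.Prime)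
    (hp2 : p ≠ 2) (hpD : (p : ℤ) ∣ D) (hm : m ≠ 0) :
    ∃ M : ℕ, Odd M ∧ m.Coprime M ∧ J(D | M) = -1 := by
  have : Fact p.Prime := ⟨hp⟩
  obtain ⟨e, rfl⟩ := hpD
  have hpe : ¬ p ∣ e.natAbs := fun h => by
    have hunit := hD p (mul_dvd_mul_left _ (Int.natCast_dvd.2 h))
    exact (Nat.prime_iff_prime_int.1 hp).not_isUnit hunit
  have hp4 : ¬ p ∣ 4 * e.natAbs := fun h =>
    (hp.dvd_mul.1 h).elim (fun h4 =>
      hp2 ((Nat.prime_dvd_prime_iff_eq hp Nat.prime_two).1 (hp.dvd_of_dvd_pow (n := 2) h4))) hpe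
  obtain ⟨r, hr⟩ := FiniteField.exists_nonsquare (F := ZMod p)
    (by rwa [ZMod.ringChar_zmod_n])
  have hpr : ¬ p ∣ r.val := fun h => by
    rw [← ZMod.natCast_eq_zero_iff, ZMod.natCast_zmod_val] at h
    exact hr (h ▸ IsSquare.zero)
  obtain ⟨M, hM1, hMr, hmM⟩ := exists_modEq_one_modEq_coprime hp hm hp4 hpr 0
  have hM4 : M % 4 = 1 := hM1.of_dvd (dvd_mul_right _ _)
  have hMp : (M : ZMod p) = r := by
    rw [zero_add, pow_one] at hMr
    rw [(ZMod.natCast_eq_natCast_iff _ _ _).2 hMr, ZMod.natCast_zmod_val]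
  have hModd : Odd M := Nat.odd_iff.2 (by omega)
  refine ⟨M, hModd, hmM, ?_⟩
  rw [jacobiSym.mul_left, jacobiSym_eq_one_of_modEq_one hModd hM1, mul_one,
    jacobiSym.quadratic_reciprocity_one_mod_four' (hp.odd_of_ne_two hp2) hM4,
    ← jacobiSym.legendreSym.to_jacobiSym, legendreSym.eq_neg_one_iff]
  simpa only [Int.cast_natCast, hMp] using hr

lemma natAbs_dvd_two_of_forall_prime_dvd (hD : Squarefree D)
    (h : ∀ p : ℕ, p.Prime → (p : ℤ) ∣ D → p = 2) : D.natAbs ∣ 2 := by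
  rw [← Nat.prod_primeFactors_of_squarefree (Int.squarefree_natAbs.2 hD)]
  have hsub : D.natAbs.primeFactors ⊆ {2} := fun p hp => Finset.mem_singleton.2 <|
    h p (Nat.prime_of_mem_primeFactors hp) (Int.natCast_dvd.2 (Nat.dvd_of_mem_primeFactors hp))
  simpa only [Finset.prod_singleton] using Finset.prod_dvd_prod_of_subset _ _ (fun p => p) hsub

lemma exists_jacobiSym_eq_neg_one_of_natAbs_dvd_two (hD : D.natAbs ∣ 2) (hD1 : D ≠ 1)
    (hm : m ≠ 0) : ∃ M : ℕ, Odd M ∧ m.Coprime M ∧ J(D | M) = -1 := by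
  obtain ⟨r, hr, hJr⟩ : ∃ r : ℕ, Odd r ∧ J(D | r) = -1 := by
    have hcases : D = -1 ∨ D = 2 ∨ D = -2 := by
      have := (Nat.dvd_prime Nat.prime_two).1 hD
      omega
    rcases hcases with rfl | rfl | rfl
    exacts [⟨3, by decide, by norm_num⟩, ⟨5, by decide, by norm_num⟩, ⟨5, by decide, by norm_num⟩]
  obtain ⟨M, -, hMr, hmM⟩ := exists_modEq_one_modEq_coprime (c := 1) Nat.prime_two hm
    (by decide) (by rwa [← Nat.not_even_iff_odd, even_iff_two_dvd] at hr) 2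
  have hMr2 : M % 2 = r % 2 := hMr.of_dvd (by decide)
  have hModd : Odd M := Nat.odd_iff.2 (hMr2.trans (Nat.odd_iff.1 hr))
  refine ⟨M, hModd, hmM, ?_⟩
  have hMr' : M ≡ r [MOD 4 * D.natAbs] := hMr.of_dvd (Nat.mul_dvd_mul_left 4 hD)
  rw [← hJr, jacobiSym.mod_right D hModd, hMr', ← jacobiSym.mod_right D hr]

lemma exists_jacobiSym_eq_neg_one_of_squarefree (hD : Squarefree D) (hD1 : D ≠ 1) (hm : m ≠ 0) :
    ∃ M : ℕ, Odd M ∧ m.Coprime M ∧ J(D | M) = -1 := by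
  by_cases h : ∀ p : ℕ, p.Prime → (p : ℤ) ∣ D → p = 2
  · exact exists_jacobiSym_eq_neg_one_of_natAbs_dvd_two
      (natAbs_dvd_two_of_forall_prime_dvd hD h) hD1 hm
  · push Not at h
    obtain ⟨p, hp, hpD, hp2⟩ := h
    exact exists_jacobiSym_eq_neg_one_of_odd_prime_dvd hD hp hp2 hpD hm

lemma exists_squarefree_mul_sq (hD : D ≠ 0) :
    ∃ (b : ℤ) (m : ℕ), Squarefree b ∧ m ≠ 0 ∧ D = b * (m : ℤ) ^ 2 := by
  obtain ⟨a, m, hma, ha⟩ := Nat.sq_mul_squarefree D.natAbs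
  have hm : m ≠ 0 := by
    rintro rfl
    exact Int.natAbs_ne_zero.2 hD (by rw [← hma]; ring)
  refine ⟨D.sign * a, m, ?_, hm, ?_⟩
  · rwa [← Int.squarefree_natAbs, Int.natAbs_mul, Int.natAbs_sign_of_ne_zero hD, one_mul,
      Int.natAbs_natCast]
  · rw [mul_assoc, ← Nat.cast_pow, ← Nat.cast_mul, mul_comm a, hma, Int.sign_mul_natAbs]

lemma exists_jacobiSym_eq_neg_one (hD : ¬ IsSquare D) : ∃ M : ℕ, Odd M ∧ J(D | M) = -1 := by
  have hD0 : D ≠ 0 := fun h => hD (h ▸ IsSquare.zero)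
  obtain ⟨b, m, hb, hm, rfl⟩ := exists_squarefree_mul_sq hD0
  have hb1 : b ≠ 1 := by
    rintro rfl
    exact hD ⟨m, by ring⟩
  obtain ⟨M, hModd, hmM, hJ⟩ := exists_jacobiSym_eq_neg_one_of_squarefree hb hb1 hm
  exact ⟨M, hModd, by rw [jacobiSym.mul_left, hJ, jacobiSym.sq_one' (by simpa using hmM), mul_one]⟩

lemma eq_of_squarefree_of_isSquare_mul (hD : Squarefree D) (hE : Squarefree E)
    (h : IsSquare (D * E)) : D = E := by
  obtain ⟨c, hc⟩ := h
  obtain ⟨d, rfl⟩ : D ∣ c := by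
    rw [← hD.dvd_pow_iff_dvd two_ne_zero, sq, ← hc]
    exact dvd_mul_right D E
  have hEd : E = D * (d * d) := mul_left_cancel₀ hD.ne_zero (by linear_combination hc)
  rcases Int.isUnit_iff.1 (hE d ⟨D, by rw [hEd, mul_comm]⟩) with rfl | rfl <;> simpa using hEd.symm

/-- The symbol `(D / n)` restricted to odd `n`: the Jacobi symbol there and `0` at even `n`. As a
function of `n` it is periodic modulo `4 |D|`. -/
def oddJacobiSym (D : ℤ) (n : ℕ) : ℤ := if Odd n then J(D | n) else 0

lemma oddJacobiSym_of_odd {n : ℕ} (hn : Odd n) : oddJacobiSym D n = J(D | n) := if_pos hn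

lemma oddJacobiSym_mod (D : ℤ) (n : ℕ) :
    oddJacobiSym D (n % (4 * D.natAbs)) = oddJacobiSym D n := by
  have hodd : Odd (n % (4 * D.natAbs)) ↔ Odd n := by
    rw [Nat.odd_iff, Nat.odd_iff, Nat.mod_mod_of_dvd n ⟨2 * D.natAbs, by ring⟩]
  unfold oddJacobiSym
  rw [ite_cond_congr (propext hodd)]
  split_ifs with h
  exacts [(jacobiSym.mod_right D h).symm, rfl]

lemma oddJacobiSym_mul_right (D : ℤ) (m n : ℕ) :
    oddJacobiSym D (m * n) = oddJacobiSym D m * oddJacobiSym D n := by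
  unfold oddJacobiSym
  by_cases hm : Odd m <;> by_cases hn : Odd n <;>
    simp only [hm, hn, Nat.odd_mul, and_self, and_true, true_and, if_true, if_false, mul_zero,
      zero_mul]
  exact jacobiSym.mul_right' D hm.pos.ne' hn.pos.ne'

lemma oddJacobiSym_mul_left (D E : ℤ) (n : ℕ) :
    oddJacobiSym (D * E) n = oddJacobiSym D n * oddJacobiSym E n := by
  unfold oddJacobiSym
  split_ifs
  exacts [jacobiSym.mul_left .., (mul_zero 0).symm]

lemma oddJacobiSym_trichotomy (D : ℤ) (n : ℕ) :
    oddJacobiSym D n = 0 ∨ oddJacobiSym D n = 1 ∨ oddJacobiSym D n = -1 := by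
  unfold oddJacobiSym
  split_ifs
  exacts [jacobiSym.trichotomy D n, .inl rfl]

lemma oddJacobiSym_eq_zero_of_not_coprime {n : ℕ} (hn : ¬ n.Coprime (4 * D.natAbs)) :
    oddJacobiSym D n = 0 := by
  unfold oddJacobiSym
  split_ifs with hodd
  · have h4 : n.Coprime 4 := Nat.Coprime.pow_right 2 (Nat.coprime_two_right.2 hodd)
    refine jacobiSym.eq_zero_iff.2 ⟨hodd.pos.ne', fun h => hn (h4.mul_right ?_)⟩
    rwa [Nat.coprime_comm]
  · rfl

instance neZero_four_mul_natAbs [NeZero D] : NeZero (4 * D.natAbs) :=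
  ⟨mul_ne_zero four_ne_zero (Int.natAbs_ne_zero.2 (NeZero.ne D))⟩

/-- The quadratic Dirichlet character modulo `4 |D|` given by `n ↦ (D / n)` on odd `n`. -/
noncomputable def jacobiChar (D : ℤ) [NeZero D] : DirichletCharacter ℂ (4 * D.natAbs) where
  toFun a := oddJacobiSym D a.val
  map_one' := by
    have : Fact (1 < 4 * D.natAbs) := ⟨by have := NeZero.ne D; omega⟩
    rw [ZMod.val_one, oddJacobiSym_of_odd odd_one, jacobiSym.one_right, Int.cast_one]
  map_mul' a b := by rw [ZMod.val_mul, oddJacobiSym_mod, oddJacobiSym_mul_right, Int.cast_mul]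
  map_nonunit' a ha := by
    rw [← ZMod.natCast_zmod_val a, ZMod.isUnit_iff_coprime] at ha
    rw [oddJacobiSym_eq_zero_of_not_coprime ha, Int.cast_zero]

lemma jacobiChar_natCast (D : ℤ) [NeZero D] (n : ℕ) : jacobiChar D n = oddJacobiSym D n := by
  change (oddJacobiSym D (n : ZMod (4 * D.natAbs)).val : ℂ) = _
  rw [ZMod.val_natCast, oddJacobiSym_mod]

lemma isQuadratic_jacobiChar (D : ℤ) [NeZero D] : (jacobiChar D).IsQuadratic := fun a => by
  rw [← ZMod.natCast_zmod_val a, jacobiChar_natCast]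
  exact_mod_cast oddJacobiSym_trichotomy D a.val

lemma jacobiChar_ne_one [NeZero D] (hD : ¬ IsSquare D) : jacobiChar D ≠ 1 := by
  obtain ⟨M, hModd, hJ⟩ := exists_jacobiSym_eq_neg_one hD
  have hM : jacobiChar D M = -1 := by
    rw [jacobiChar_natCast, oddJacobiSym_of_odd hModd, hJ, Int.cast_neg, Int.cast_one]
  intro h
  rcases em (IsUnit (M : ZMod (4 * D.natAbs))) with hu | hu
  · norm_num [h, MulChar.one_apply hu] at hM
  · norm_num [h, MulChar.map_nonunit _ hu] at hM

end QuadraticCharacters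

section Estermann

open Complex Metric Filter Topology
open scoped ComplexOrder Nat

variable {f h F g : ℂ → ℂ} {M lam b β : ℝ}

lemma alternating_iteratedDeriv_of_deriv_eq_neg_mul {x : ℂ} (hf : AnalyticAt ℂ f x)
    (hh : AnalyticAt ℂ h x) (hd : deriv f =ᶠ[𝓝 x] fun s => -(h s * f s)) (hf0 : 0 ≤ f x)
    (halt : ∀ m, 0 ≤ (-1) ^ m * iteratedDeriv m h x) (m : ℕ) :
    0 ≤ (-1) ^ m * iteratedDeriv m f x := by
  induction m using Nat.strong_induction_on with
  | _ m ih =>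
    rcases m with _ | m
    · simpa using hf0
    · have hleibniz : iteratedDeriv (m + 1) f x = -∑ i ∈ Finset.range (m + 1),
          (m.choose i) * iteratedDeriv i h x * iteratedDeriv (m - i) f x := by
        rw [iteratedDeriv_succ', hd.iteratedDeriv_eq, iteratedDeriv_fun_neg,
          ← iteratedDeriv_mul hh.contDiffAt hf.contDiffAt]
        rfl
      rw [hleibniz, mul_neg, ← neg_mul, pow_succ, mul_neg_one, neg_neg, Finset.mul_sum]
      refine Finset.sum_nonneg fun i hi => ?_
      have him : i ≤ m := Finset.mem_range_succ_iff.1 hi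
      have hsplit : (-1 : ℂ) ^ m * (m.choose i * iteratedDeriv i h x * iteratedDeriv (m - i) f x) =
          m.choose i * ((-1) ^ i * iteratedDeriv i h x) *
            ((-1) ^ (m - i) * iteratedDeriv (m - i) f x) := by
        rw [← pow_sub_mul_pow (-1 : ℂ) him]
        ring
      rw [hsplit]
      exact mul_nonneg (mul_nonneg (Nat.cast_nonneg _) (halt i)) (ih (m - i) (by omega))

/-- The `m`-th Taylor coefficient of `f` at `2` in powers of `2 - s`; for an `L`-series with
nonnegative coefficients these are all nonnegative. -/
noncomputable def reflectedCoeff (f : ℂ → ℂ) (m : ℕ) : ℂ :=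
  (m ! : ℂ)⁻¹ * ((-1) ^ m * iteratedDeriv m f 2)

lemma norm_reflectedCoeff_le (hg : DifferentiableOn ℂ g (ball 2 2))
    (hM : ∀ s ∈ sphere (2 : ℂ) (3 / 2), ‖g s‖ ≤ M) (m : ℕ) :
    ‖reflectedCoeff g m‖ ≤ M * (2 / 3) ^ m := by
  have hcl : DiffContOnCl ℂ g (ball 2 (3 / 2)) := by
    refine DifferentiableOn.diffContOnCl ?_
    rw [closure_ball _ (by norm_num)]
    exact hg.mono (closedBall_subset_ball (by norm_num))
  have hm : (0 : ℝ) < m ! := Nat.cast_pos.2 m.factorial_pos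
  rw [reflectedCoeff, norm_mul, norm_mul, norm_inv, norm_pow, norm_neg, norm_one, one_pow, one_mul,
    Complex.norm_natCast, inv_mul_le_iff₀ hm]
  refine (norm_iteratedDeriv_le_of_forall_mem_sphere_norm_le m (by norm_num) hcl hM).trans_eq ?_
  rw [div_pow, div_pow]
  field_simp

lemma hasSum_re_reflectedCoeff (hg : DifferentiableOn ℂ g (ball 2 2)) (hβ : 0 < β) (hβ1 : β < 1) :
    HasSum (fun m => (reflectedCoeff g m).re * (2 - β) ^ m) (g β).re := by
  have hmem : (β : ℂ) ∈ ball (2 : ℂ) 2 := by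
    rw [mem_ball, dist_eq_norm, ← ofReal_ofNat, ← ofReal_sub, norm_real, Real.norm_eq_abs, abs_lt]
    constructor <;> linarith
  refine (hasSum_re (hasSum_taylorSeries_on_ball hg hmem)).congr_fun fun m => ?_
  have hsign : ((β : ℂ) - 2) ^ m = (-1) ^ m * (2 - β) ^ m := by rw [← neg_sub, neg_pow]
  rw [← re_mul_ofReal, reflectedCoeff, smul_eq_mul, smul_eq_mul, hsign]
  push_cast
  ring_nf

lemma reflectedCoeff_const_div (c : ℂ) (m : ℕ) :
    reflectedCoeff (fun s => c * (1 * s - 1)⁻¹) m = c := by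
  have hm : (m ! : ℂ) ≠ 0 := Nat.cast_ne_zero.2 m.factorial_ne_zero
  rw [reflectedCoeff, iteratedDeriv_const_mul_field, iteratedDeriv_eq_iterate,
    iter_deriv_inv_linear_sub]
  have hsign : (-1 : ℂ) ^ m * (-1) ^ m = 1 := by rw [← mul_pow]; simp
  norm_num
  field_simp
  linear_combination c * hsign

lemma reflectedCoeff_dslope (hf : ∀ s : ℂ, 0 < s.re → s ≠ 1 → f s = F s / (s - 1))
    (hF : DifferentiableOn ℂ F (ball 2 2)) (m : ℕ) :
    reflectedCoeff (dslope F 1) m = reflectedCoeff f m - F 1 := by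
  have hnhds : ∀ᶠ s : ℂ in 𝓝 2, 1 < s.re :=
    (isOpen_lt continuous_const continuous_re).mem_nhds (by simp)
  have hne : ∀ {s : ℂ}, 1 < s.re → s ≠ 1 := by
    rintro s hs rfl
    exact lt_irrefl _ hs
  have hdslope : dslope F 1 =ᶠ[𝓝 2] fun s => f s - F 1 * (1 * s - 1)⁻¹ := by
    filter_upwards [hnhds] with s hs
    rw [dslope_of_ne _ (hne hs), slope_def_field, hf s (zero_lt_one.trans hs) (hne hs), one_mul]
    ring
  have hfan : AnalyticAt ℂ f 2 := by
    refine ((hF.analyticAt (ball_mem_nhds 2 two_pos)).div (g := fun s => s - 1) (by fun_prop)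
      (by norm_num)).congr ?_
    filter_upwards [hnhds] with s hs
    exact (hf s (zero_lt_one.trans hs) (hne hs)).symm
  have hpole : AnalyticAt ℂ (fun s : ℂ => F 1 * (1 * s - 1)⁻¹) 2 :=
    analyticAt_const.mul (AnalyticAt.inv (by fun_prop) (by norm_num))
  rw [← reflectedCoeff_const_div (F 1) m, reflectedCoeff, reflectedCoeff, reflectedCoeff,
    hdslope.iteratedDeriv_eq, iteratedDeriv_fun_sub hfan.contDiffAt hpole.contDiffAt]
  ring

lemma sub_geom_sub_le_of_hasSum {c : ℕ → ℝ} {y S : ℝ} (hc0 : b - lam ≤ c 0)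
    (hc : ∀ m, -lam ≤ c m) (hcM : ∀ m, |c m| ≤ M * (2 / 3) ^ m) (hy1 : 1 < y) (hy : y ≤ 9 / 8)
    (hS : HasSum (fun m => c m * y ^ m) S) {N : ℕ} (hN : 1 ≤ N) :
    b - lam * ((y ^ N - 1) / (y - 1)) - 4 * M * (3 / 4) ^ N ≤ S := by
  have hM : 0 ≤ M := by simpa using (abs_nonneg _).trans (hcM 0)
  have hhead : b - lam * ((y ^ N - 1) / (y - 1)) ≤ ∑ m ∈ Finset.range N, c m * y ^ m := by
    obtain ⟨K, rfl⟩ := Nat.exists_eq_add_of_le' hN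
    rw [← geom_sum_eq hy1.ne', Finset.sum_range_succ', Finset.sum_range_succ', mul_add,
      Finset.mul_sum]
    have hterms : ∑ m ∈ Finset.range K, -(lam * y ^ (m + 1)) ≤
        ∑ m ∈ Finset.range K, c (m + 1) * y ^ (m + 1) := by
      refine Finset.sum_le_sum fun m _ => ?_
      rw [← neg_mul]
      gcongr
      exact hc (m + 1)
    rw [Finset.sum_neg_distrib] at hterms
    linarith
  have htail : -(4 * M * (3 / 4) ^ N) ≤ ∑' m, c (m + N) * y ^ (m + N) := by
    have hgeom := ((hasSum_geometric_of_lt_one (r := (3 / 4 : ℝ)) (by norm_num)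
      (by norm_num)).mul_left (M * (3 / 4 : ℝ) ^ N)).neg
    rw [show -(4 * M * (3 / 4 : ℝ) ^ N) = -(M * (3 / 4 : ℝ) ^ N * (1 - 3 / 4)⁻¹) by ring]
    refine hasSum_le (fun m => ?_) hgeom ((summable_nat_add_iff N).2 hS.summable).hasSum
    calc -(M * (3 / 4 : ℝ) ^ N * (3 / 4) ^ m)
        = -(M * (2 / 3) ^ (m + N) * (9 / 8) ^ (m + N)) := by
          rw [mul_assoc M, mul_assoc M, ← mul_pow, ← pow_add, add_comm N]
          norm_num
      _ ≤ -(M * (2 / 3) ^ (m + N) * y ^ (m + N)) := by gcongr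
      _ = -(M * (2 / 3) ^ (m + N)) * y ^ (m + N) := by ring
      _ ≤ c (m + N) * y ^ (m + N) := by
          gcongr
          exact (abs_le.1 (hcM _)).1
  linarith [hS.summable.sum_add_tsum_nat_add N, hS.tsum_eq]

lemma sub_pow_div_sub_le_re (hF : DifferentiableOn ℂ F (ball 2 2))
    (hM : ∀ s ∈ sphere (2 : ℂ) (3 / 2), ‖dslope F 1 s‖ ≤ M) (hlam : F 1 = lam)
    (hf : ∀ s : ℂ, 0 < s.re → s ≠ 1 → f s = F s / (s - 1))
    (halt : ∀ m, 0 ≤ (-1) ^ m * iteratedDeriv m f 2) (hb : b ≤ (f 2).re)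
    (hβ : 7 / 8 ≤ β) (hβ1 : β < 1) {N : ℕ} (hN : 1 ≤ N) :
    b - lam * ((2 - β) ^ N / (1 - β)) - 4 * M * (3 / 4) ^ N ≤ (f β).re := by
  have hg : DifferentiableOn ℂ (dslope F 1) (ball 2 2) :=
    (differentiableOn_dslope (isOpen_ball.mem_nhds (by norm_num [dist_eq_norm]))).2 hF
  have hcoeff : ∀ m, (reflectedCoeff (dslope F 1) m).re = (reflectedCoeff f m).re - lam :=
    fun m => by rw [reflectedCoeff_dslope hf hF, hlam, sub_re, ofReal_re]
  have hnonneg : ∀ m, 0 ≤ (reflectedCoeff f m).re := fun m =>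
    (Complex.nonneg_iff.1 (mul_nonneg (inv_nonneg.2 (Nat.cast_nonneg _)) (halt m))).1
  have hzero : b ≤ (reflectedCoeff f 0).re := by simpa [reflectedCoeff] using hb
  have hsum := sub_geom_sub_le_of_hasSum (b := b) (lam := lam) (by linarith [hcoeff 0])
    (fun m => by linarith [hcoeff m, hnonneg m])
    (fun m => (abs_re_le_norm _).trans (norm_reflectedCoeff_le hg hM m))
    (by linarith) (by linarith) (hasSum_re_reflectedCoeff hg (by linarith) hβ1) hN
  have hβne : (β : ℂ) ≠ 1 := by exact_mod_cast hβ1.ne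
  have hgβ : (dslope F 1 β).re = (f β).re + lam / (1 - β) := by
    have hfβ : dslope F 1 (β : ℂ) = f β - ((lam / (β - 1) : ℝ) : ℂ) := by
      rw [dslope_of_ne _ hβne, slope_def_field, hlam, hf β (by simp; linarith) hβne]
      push_cast
      ring
    rw [hfβ, sub_re, ofReal_re, ← neg_sub 1 β, div_neg, sub_neg_eq_add]
  rw [show 2 - β - 1 = 1 - β by ring, sub_div, mul_sub, hgβ] at hsum
  linarith [mul_one_div lam (1 - β)]

lemma exp_quarter_le : Real.exp (1 / 4) ≤ 4 / 3 := by
  refine le_of_pow_le_pow_left₀ four_ne_zero (by norm_num) ?_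
  rw [← Real.exp_nat_mul]
  norm_num
  linarith [Real.exp_one_lt_d9]

lemma le_four_thirds_pow {A : ℝ} (hA : 0 < A) {N : ℕ} (hN : 4 * Real.log A ≤ N) :
    A ≤ (4 / 3) ^ N := by
  calc A = Real.exp (Real.log A) := (Real.exp_log hA).symm
    _ ≤ Real.exp (N * (1 / 4)) := by
        gcongr
        linarith
    _ = Real.exp (1 / 4) ^ N := Real.exp_nat_mul _ _
    _ ≤ (4 / 3) ^ N := by
        gcongr
        exact exp_quarter_le

lemma one_add_pow_le_mul_rpow {A u : ℝ} (hA : 0 < A) (hu0 : 0 ≤ u) (hu1 : u ≤ 1) {N : ℕ}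
    (hN : N ≤ 4 * Real.log A + 1) : (1 + u) ^ N ≤ 3 * A ^ (4 * u) := by
  calc (1 + u) ^ N = (u + 1) ^ N := by rw [add_comm]
    _ ≤ Real.exp u ^ N := by
        gcongr
        exact Real.add_one_le_exp _
    _ = Real.exp (N * u) := by rw [← Real.exp_nat_mul]
    _ ≤ Real.exp ((4 * Real.log A + 1) * u) := by gcongr
    _ = Real.exp u * A ^ (4 * u) := by
        rw [Real.rpow_def_of_pos hA, ← Real.exp_add]
        ring_nf
    _ ≤ 3 * A ^ (4 * u) := by
        gcongr
        linarith [Real.exp_le_exp.2 hu1, Real.exp_one_lt_d9]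

/-- Estermann's inequality. -/
lemma half_sub_rpow_div_le_re (hF : DifferentiableOn ℂ F (ball 2 2))
    (hM : ∀ s ∈ sphere (2 : ℂ) (3 / 2), ‖dslope F 1 s‖ ≤ M) (hlam : F 1 = lam) (hlam0 : 0 ≤ lam)
    (hf : ∀ s : ℂ, 0 < s.re → s ≠ 1 → f s = F s / (s - 1))
    (halt : ∀ m, 0 ≤ (-1) ^ m * iteratedDeriv m f 2) (hb0 : 0 < b) (hb : b ≤ (f 2).re)
    (hbM : b ≤ M) (hβ : 7 / 8 ≤ β) (hβ1 : β < 1) :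
    b / 2 - 3 * lam * (8 * M / b) ^ (4 * (1 - β)) / (1 - β) ≤ (f β).re := by
  set A := 8 * M / b with hA
  have hA1 : 1 < A := (one_lt_div hb0).2 (by linarith)
  have hlog : 0 < Real.log A := Real.log_pos hA1
  have : 0 < 1 - β := by linarith
  set N := ⌈4 * Real.log A⌉₊
  have hN : 1 ≤ N := Nat.one_le_ceil_iff.2 (by positivity)
  have hNle : (N : ℝ) ≤ 4 * Real.log A + 1 := (Nat.ceil_lt_add_one (by positivity)).le
  have hpow : (2 - β) ^ N ≤ 3 * A ^ (4 * (1 - β)) := by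
    rw [show 2 - β = 1 + (1 - β) by ring]
    exact one_add_pow_le_mul_rpow (by linarith) (by linarith) (by linarith) hNle
  have htail : 4 * M * (3 / 4) ^ N ≤ b / 2 := by
    calc 4 * M * (3 / 4) ^ N = b / 2 * (A * (3 / 4) ^ N) := by rw [hA]; field_simp; ring
      _ ≤ b / 2 * ((4 / 3) ^ N * (3 / 4) ^ N) := by
          gcongr
          exact le_four_thirds_pow (by linarith) (Nat.le_ceil _)
      _ = b / 2 := by rw [← mul_pow]; norm_num
  have hmain : lam * ((2 - β) ^ N / (1 - β)) ≤ 3 * lam * A ^ (4 * (1 - β)) / (1 - β) := by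
    rw [← mul_div_assoc, mul_comm 3 lam, mul_assoc lam]
    gcongr
  linarith [sub_pow_div_sub_le_re hF hM hlam hf halt hb hβ hβ1 hN]

end Estermann

section Positivity

open Complex Set Filter
open scoped ComplexOrder

variable {q : ℕ} [NeZero q] {χ : DirichletCharacter ℂ q} {σ : ℝ}

lemma exists_re_LFunction_ofReal_pos (χ : DirichletCharacter ℂ q) (σ : ℝ) :
    ∃ x : ℝ, σ ≤ x ∧ 0 < (χ.LFunction x).re := by
  have habs : LSeries.abscissaOfAbsConv (fun n : ℕ => χ n) < ⊤ :=
    (LSeries.abscissaOfAbsConv_le_of_forall_lt_LSeriesSummable (x := 1) fun y hy =>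
      χ.LSeriesSummable_of_one_lt_re (by simpa using hy)).trans_lt (EReal.coe_lt_top 1)
  have hlim : Tendsto (fun x : ℝ => (LSeries (fun n : ℕ => χ n) x).re) atTop (nhds 1) := by
    have h := (continuous_re.tendsto _).comp (LSeries.tendsto_atTop habs)
    rwa [Nat.cast_one, map_one, one_re] at h
  obtain ⟨x, hpos, hx1, hσx⟩ := ((hlim.eventually (eventually_gt_nhds one_pos)).and
    ((eventually_gt_atTop 1).and (eventually_ge_atTop σ))).exists
  exact ⟨x, hσx, by rwa [χ.LFunction_eq_LSeries (by simpa using hx1)]⟩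

lemma LFunction_ofReal_pos (hχ : χ ≠ 1) (hquad : χ.IsQuadratic) (hσ : 0 < σ)
    (hzero : ∀ x : ℝ, σ ≤ x → x < 1 → χ.LFunction x ≠ 0) : 0 < χ.LFunction σ := by
  have him : ∀ x : ℝ, σ ≤ x → (χ.LFunction x).im = 0 := fun x hx =>
    LFunction_ofReal_im hχ (fun a => by rcases hquad a with h | h | h <;> simp [h]) (hσ.trans_le hx)
  have hne : ∀ x : ℝ, σ ≤ x → χ.LFunction x ≠ 0 := fun x hx =>
    (lt_or_ge x 1).elim (hzero x hx) fun h => LFunction_ne_zero_of_one_le_re hχ (by simpa using h)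
  refine Complex.pos_iff.2 ⟨not_le.1 fun hneg => ?_, (him σ le_rfl).symm⟩
  obtain ⟨y, hσy, hy⟩ := exists_re_LFunction_ofReal_pos χ σ
  have hcont : Continuous fun x : ℝ => (χ.LFunction x).re := continuous_re.comp
    ((DirichletCharacter.differentiable_LFunction hχ).continuous.comp continuous_ofReal)
  obtain ⟨x, hx, hx0⟩ := intermediate_value_Icc hσy hcont.continuousOn ⟨hneg, hy.le⟩
  exact hne x hx.1 (Complex.ext hx0 (him x hx.1))

lemma LFunction_ofReal_pos_of_one_le (hχ : χ ≠ 1) (hquad : χ.IsQuadratic) (hσ : 1 ≤ σ) :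
    0 < χ.LFunction σ :=
  LFunction_ofReal_pos hχ hquad (by linarith) fun _ h h' => absurd (hσ.trans h) (not_le.2 h')

end Positivity

section Biquadratic

open Complex Set Metric Filter Topology ArithmeticFunction
open scoped ComplexOrder

variable {q₁ q₂ q₃ : ℕ} [NeZero q₁] [NeZero q₂] [NeZero q₃] {χ : DirichletCharacter ℂ q₁}
  {ψ : DirichletCharacter ℂ q₂} {η : DirichletCharacter ℂ q₃} {s : ℂ} {β ε : ℝ}

/-- The characters `χ`, `ψ`, `η` are the three quadratic characters attached to a biquadratic
field: all are nontrivial, and `η = χ ψ` as functions on `ℕ`. -/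
structure IsBiquadraticTriple (χ : DirichletCharacter ℂ q₁) (ψ : DirichletCharacter ℂ q₂)
    (η : DirichletCharacter ℂ q₃) : Prop where
  fst_ne_one : χ ≠ 1
  snd_ne_one : ψ ≠ 1
  trd_ne_one : η ≠ 1
  fst_isQuadratic : χ.IsQuadratic
  snd_isQuadratic : ψ.IsQuadratic
  trd_isQuadratic : η.IsQuadratic
  apply_mul_apply : ∀ n : ℕ, χ n * ψ n = η n

/-- The product `ζ(s) L(s, χ) L(s, ψ) L(s, η)`; for a biquadratic triple this is, up to Euler
factors, the Dedekind zeta function of the field. -/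
noncomputable def biquadraticZeta (χ : DirichletCharacter ℂ q₁) (ψ : DirichletCharacter ℂ q₂)
    (η : DirichletCharacter ℂ q₃) (s : ℂ) : ℂ :=
  riemannZeta s * χ.LFunction s * ψ.LFunction s * η.LFunction s

/-- The entire function `(s - 1) ζ(s) L(s, χ) L(s, ψ) L(s, η)`. -/
noncomputable def biquadraticZeta₁ (χ : DirichletCharacter ℂ q₁) (ψ : DirichletCharacter ℂ q₂)
    (η : DirichletCharacter ℂ q₃) (s : ℂ) : ℂ :=
  zeta₁ s * χ.LFunction s * ψ.LFunction s * η.LFunction s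

lemma biquadraticZeta_eq_div (hs : s ≠ 1) :
    biquadraticZeta χ ψ η s = biquadraticZeta₁ χ ψ η s / (s - 1) := by
  have hs1 : s - 1 ≠ 0 := sub_ne_zero.2 hs
  rw [biquadraticZeta, biquadraticZeta₁, zeta₁_of_ne_one hs]
  field_simp

lemma norm_LFunction_le_of_mem_closedBall {q : ℕ} [NeZero q] {χ : DirichletCharacter ℂ q}
    (hχ : χ ≠ 1) (hs : s ∈ closedBall (2 : ℂ) (3 / 2)) : ‖χ.LFunction s‖ ≤ 7 * q := by
  rw [mem_closedBall, dist_eq_norm] at hs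
  have hre : 1 / 2 ≤ s.re := by
    have := (abs_le.1 ((abs_re_le_norm (s - 2)).trans hs)).1
    rw [sub_re, re_ofNat] at this
    linarith
  have hnorm : ‖s‖ ≤ 7 / 2 := by
    have := norm_add_le (s - 2) 2
    rw [sub_add_cancel, norm_ofNat] at this
    linarith
  calc ‖χ.LFunction s‖ ≤ ‖s‖ * (q : ℝ) ^ (1 : ℝ) / (s.re - (1 - 1)) :=
        norm_LFunction_le hχ zero_le_one le_rfl (by linarith) (by linarith)
    _ = ‖s‖ * q / s.re := by rw [Real.rpow_one, sub_self, sub_zero]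
    _ ≤ 7 / 2 * q / (1 / 2) := by gcongr
    _ = 7 * q := by ring

lemma norm_zeta₁_le_of_mem_closedBall (hs : s ∈ closedBall (2 : ℂ) (3 / 2)) : ‖zeta₁ s‖ ≤ 21 := by
  rw [mem_closedBall, dist_eq_norm] at hs
  have hre : 1 / 2 ≤ s.re := by
    have := (abs_le.1 ((abs_re_le_norm (s - 2)).trans hs)).1
    rw [sub_re, re_ofNat] at this
    linarith
  have hnorm : ‖s‖ ≤ 7 / 2 := by
    have := norm_add_le (s - 2) 2
    rw [sub_add_cancel, norm_ofNat] at this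
    linarith
  have hnorm1 : ‖s - 1‖ ≤ 5 / 2 := by
    have := norm_add_le (s - 2) 1
    rw [norm_one, show s - 2 + 1 = s - 1 by ring] at this
    linarith
  calc ‖zeta₁ s‖ ≤ ‖s‖ + ‖s - 1‖ * (‖s‖ / s.re) := norm_zeta₁_le (by linarith)
    _ ≤ 7 / 2 + 5 / 2 * (7 / 2 / (1 / 2)) := by gcongr
    _ = 21 := by norm_num

lemma rpow_four_mul_le {Q u ε : ℝ} (hQ : 1 ≤ Q) (hu : u ≤ ε) (hε : ε ≤ 1 / 8) :
    (2 ^ 25 * (Q * Q)) ^ (4 * u) ≤ 2 ^ 13 * Q ^ (8 * ε) := by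
  have hone : (1 : ℝ) ≤ 2 ^ 25 * (Q * Q) :=
    one_le_mul_of_one_le_of_one_le (by norm_num) (one_le_mul_of_one_le_of_one_le hQ hQ)
  calc (2 ^ 25 * (Q * Q)) ^ (4 * u)
      ≤ (2 ^ 25 * (Q * Q)) ^ (4 * ε) := Real.rpow_le_rpow_of_exponent_le hone (by linarith)
    _ = (2 : ℝ) ^ (25 * (4 * ε)) * Q ^ (8 * ε) := by
        rw [← sq, ← Real.rpow_natCast Q, Real.mul_rpow (by norm_num) (by positivity),
          ← Real.rpow_mul (by positivity), ← Real.rpow_natCast, ← Real.rpow_mul (by norm_num)]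
        ring_nf
    _ ≤ (2 : ℝ) ^ (13 : ℝ) * Q ^ (8 * ε) := by
        gcongr
        · norm_num
        · linarith
    _ = 2 ^ 13 * Q ^ (8 * ε) := by norm_num

namespace IsBiquadraticTriple

variable (h : IsBiquadraticTriple χ ψ η)
include h

lemma differentiable_biquadraticZeta₁ : Differentiable ℂ (biquadraticZeta₁ χ ψ η) :=
  ((differentiable_zeta₁.mul (DirichletCharacter.differentiable_LFunction h.fst_ne_one)).mul
    (DirichletCharacter.differentiable_LFunction h.snd_ne_one)).mul
    (DirichletCharacter.differentiable_LFunction h.trd_ne_one)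

lemma analyticAt_biquadraticZeta : AnalyticAt ℂ (biquadraticZeta χ ψ η) 2 := by
  refine ((h.differentiable_biquadraticZeta₁.analyticAt 2).div (g := fun s => s - 1)
    (by fun_prop) (by norm_num)).congr ?_
  filter_upwards [isOpen_ne.mem_nhds (OfNat.ofNat_ne_one 2)] with s hs
  exact (biquadraticZeta_eq_div hs).symm

lemma biquadraticZeta_two_pos : 0 < biquadraticZeta χ ψ η 2 := by
  have hzeta : 0 < riemannZeta 2 := by
    rw [riemannZeta_two]
    exact_mod_cast (by positivity : 0 < Real.pi ^ 2 / 6)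
  have hχ := LFunction_ofReal_pos_of_one_le h.fst_ne_one h.fst_isQuadratic one_le_two
  have hψ := LFunction_ofReal_pos_of_one_le h.snd_ne_one h.snd_isQuadratic one_le_two
  have hη := LFunction_ofReal_pos_of_one_le h.trd_ne_one h.trd_isQuadratic one_le_two
  rw [ofReal_ofNat] at hχ hψ hη
  exact mul_pos (mul_pos (mul_pos hzeta hχ) hψ) hη

lemma le_re_biquadraticZeta_two : 1 / 81 ≤ (biquadraticZeta χ ψ η 2).re := by
  have third_le : ∀ {x : ℝ}, 1 ≤ x * (2 + 1 / ((2 : ℂ).re - 1)) → 1 / 3 ≤ x := by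
    intro x hx
    norm_num at hx ⊢
    linarith
  have hre := congrArg re (Complex.norm_of_nonneg' h.biquadraticZeta_two_pos.le)
  rw [ofReal_re] at hre
  rw [← hre, biquadraticZeta, norm_mul, norm_mul, norm_mul]
  calc (1 : ℝ) / 81 = 1 / 3 * (1 / 3) * (1 / 3) * (1 / 3) := by norm_num
    _ ≤ _ := by
      gcongr
      · exact third_le (one_le_norm_riemannZeta_mul (by simp))
      all_goals exact third_le (one_le_norm_LFunction_mul (by simp))

lemma logDeriv_biquadraticZeta (hs : 1 < s.re) :
    logDeriv (biquadraticZeta χ ψ η) s = logDeriv riemannZeta s + logDeriv χ.LFunction s +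
      logDeriv ψ.LFunction s + logDeriv η.LFunction s := by
  have hs1 : s ≠ 1 := by
    rintro rfl
    exact lt_irrefl _ hs
  have hmul : ∀ {f g : ℂ → ℂ}, DifferentiableAt ℂ f s → DifferentiableAt ℂ g s → f s ≠ 0 →
      g s ≠ 0 → logDeriv (f * g) s = logDeriv f s + logDeriv g s :=
    fun df dg hf hg => logDeriv_mul s hf hg df dg
  have hζ := riemannZeta_ne_zero_of_one_lt_re hs
  have hχ := LFunction_ne_zero_of_one_le_re h.fst_ne_one hs.le
  have hψ := LFunction_ne_zero_of_one_le_re h.snd_ne_one hs.le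
  have hη := LFunction_ne_zero_of_one_le_re h.trd_ne_one hs.le
  have dζ := differentiableAt_riemannZeta hs1
  have dχ := DirichletCharacter.differentiable_LFunction h.fst_ne_one s
  have dψ := DirichletCharacter.differentiable_LFunction h.snd_ne_one s
  have dη := DirichletCharacter.differentiable_LFunction h.trd_ne_one s
  rw [show biquadraticZeta χ ψ η = riemannZeta * χ.LFunction * ψ.LFunction * η.LFunction from rfl,
    hmul ((dζ.mul dχ).mul dψ) dη (mul_ne_zero (mul_ne_zero hζ hχ) hψ) hη,
    hmul (dζ.mul dχ) dψ (mul_ne_zero hζ hχ) hψ, hmul dζ dχ hζ hχ]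

lemma LSeriesSummable_vonMangoldt_mul (hs : 1 < s.re) :
    LSeriesSummable (fun n => (Λ n : ℂ) * (1 + χ n) * (1 + ψ n)) s ∧
    LSeries (fun n => (Λ n : ℂ) * (1 + χ n) * (1 + ψ n)) s =
      -logDeriv (biquadraticZeta χ ψ η) s := by
  have hcoeff : (fun n : ℕ => (Λ n : ℂ) * (1 + χ n) * (1 + ψ n)) =
      (fun n : ℕ => (Λ n : ℂ)) + ((fun n : ℕ => χ n) * fun n => (Λ n : ℂ)) +
        ((fun n : ℕ => ψ n) * fun n => (Λ n : ℂ)) +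
        ((fun n : ℕ => η n) * fun n => (Λ n : ℂ)) := by
    funext n
    simp only [Pi.add_apply, Pi.mul_apply, ← h.apply_mul_apply]
    ring
  have sΛ := LSeriesSummable_vonMangoldt hs
  have sχ := DirichletCharacter.LSeriesSummable_twist_vonMangoldt χ hs
  have sψ := DirichletCharacter.LSeriesSummable_twist_vonMangoldt ψ hs
  have sη := DirichletCharacter.LSeriesSummable_twist_vonMangoldt η hs
  refine ⟨hcoeff ▸ ((sΛ.add sχ).add sψ).add sη, ?_⟩
  rw [hcoeff, LSeries_add ((sΛ.add sχ).add sψ) sη, LSeries_add (sΛ.add sχ) sψ, LSeries_add sΛ sχ,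
    LSeries_mul_vonMangoldt_eq_neg_logDeriv hs, LSeries_mul_vonMangoldt_eq_neg_logDeriv hs,
    LSeries_mul_vonMangoldt_eq_neg_logDeriv hs, LSeries_vonMangoldt_eq_deriv_riemannZeta_div hs,
    h.logDeriv_biquadraticZeta hs, logDeriv_apply riemannZeta]
  ring

lemma alternating_iteratedDeriv (m : ℕ) :
    0 ≤ (-1) ^ m * iteratedDeriv m (biquadraticZeta χ ψ η) 2 := by
  set a : ℕ → ℂ := fun n => (Λ n : ℂ) * (1 + χ n) * (1 + ψ n)
  have ha : 0 ≤ a := fun n => by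
    obtain ⟨r, hr, hr1, -⟩ := exists_real_of_isQuadratic h.fst_isQuadratic n
    obtain ⟨t, ht, ht1, -⟩ := exists_real_of_isQuadratic h.snd_isQuadratic n
    have hreal : a n = ((Λ n * (1 + r) * (1 + t) : ℝ) : ℂ) := by
      simp only [a, hr, ht]
      push_cast
      rfl
    rw [hreal, Pi.zero_apply, zero_le_real]
    have := (abs_le.1 hr1).1
    have := (abs_le.1 ht1).1
    exact mul_nonneg (mul_nonneg vonMangoldt_nonneg (by linarith)) (by linarith)
  have habs : LSeries.abscissaOfAbsConv a < (2 : ℝ) :=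
    (LSeries.abscissaOfAbsConv_le_of_forall_lt_LSeriesSummable (x := 1) fun y hy =>
      (h.LSeriesSummable_vonMangoldt_mul (by simpa using hy)).1).trans_lt
      (by exact_mod_cast one_lt_two)
  have hderiv : deriv (biquadraticZeta χ ψ η) =ᶠ[𝓝 2]
      fun s => -(LSeries a s * biquadraticZeta χ ψ η s) := by
    have hnhds : ∀ᶠ s : ℂ in 𝓝 2, 1 < s.re :=
      (isOpen_lt continuous_const continuous_re).mem_nhds (by simp)
    filter_upwards [hnhds, h.analyticAt_biquadraticZeta.continuousAt.eventually_ne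
      h.biquadraticZeta_two_pos.ne'] with s hs hne
    rw [(h.LSeriesSummable_vonMangoldt_mul hs).2, logDeriv_apply, neg_mul, neg_neg,
      div_mul_cancel₀ _ hne]
  refine alternating_iteratedDeriv_of_deriv_eq_neg_mul h.analyticAt_biquadraticZeta
    (LSeries_analyticOnNhd a 2 (by simpa using habs)) hderiv h.biquadraticZeta_two_pos.le
    (fun m => ?_) m
  simpa using LSeries.iteratedDeriv_alternating ha habs m

lemma norm_biquadraticZeta₁_le (hs : s ∈ closedBall (2 : ℂ) (3 / 2)) :
    ‖biquadraticZeta₁ χ ψ η s‖ ≤ 7203 * (q₁ * q₂ * q₃) := by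
  rw [biquadraticZeta₁, norm_mul, norm_mul, norm_mul]
  calc ‖zeta₁ s‖ * ‖χ.LFunction s‖ * ‖ψ.LFunction s‖ * ‖η.LFunction s‖
      ≤ 21 * (7 * q₁) * (7 * q₂) * (7 * q₃) := by
        gcongr
        exacts [norm_zeta₁_le_of_mem_closedBall hs,
          norm_LFunction_le_of_mem_closedBall h.fst_ne_one hs,
          norm_LFunction_le_of_mem_closedBall h.snd_ne_one hs,
          norm_LFunction_le_of_mem_closedBall h.trd_ne_one hs]
    _ = 7203 * (q₁ * q₂ * q₃) := by ring

lemma norm_dslope_biquadraticZeta₁_le (hs : s ∈ sphere (2 : ℂ) (3 / 2)) :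
    ‖dslope (biquadraticZeta₁ χ ψ η) 1 s‖ ≤ 28812 * (q₁ * q₂ * q₃) := by
  have hs1 : 1 / 2 ≤ ‖s - 1‖ := by
    have htri := norm_sub_le (s - 1) 1
    rw [mem_sphere, dist_eq_norm] at hs
    rw [norm_one, sub_sub, one_add_one_eq_two, hs] at htri
    linarith
  have hne : s ≠ 1 := by
    rintro rfl
    norm_num at hs1
  have hmem : (1 : ℂ) ∈ closedBall (2 : ℂ) (3 / 2) := by
    rw [mem_closedBall, dist_eq_norm]
    norm_num
  rw [dslope_of_ne _ hne, slope_def_module, norm_smul, norm_inv]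
  calc ‖s - 1‖⁻¹ * ‖biquadraticZeta₁ χ ψ η s - biquadraticZeta₁ χ ψ η 1‖
      ≤ (1 / 2)⁻¹ * (7203 * (q₁ * q₂ * q₃) + 7203 * (q₁ * q₂ * q₃)) := by
        gcongr
        exact (norm_sub_le _ _).trans (add_le_add
          (h.norm_biquadraticZeta₁_le (sphere_subset_closedBall hs))
          (h.norm_biquadraticZeta₁_le hmem))
    _ = 28812 * (q₁ * q₂ * q₃) := by ring

lemma biquadraticZeta₁_one :
    biquadraticZeta₁ χ ψ η 1 =
      ((‖χ.LFunction 1‖ * ‖ψ.LFunction 1‖ * ‖η.LFunction 1‖ : ℝ) : ℂ) := by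
  have hnorm : ∀ {q : ℕ} [NeZero q] {χ : DirichletCharacter ℂ q}, χ ≠ 1 → χ.IsQuadratic →
      (‖χ.LFunction 1‖ : ℂ) = χ.LFunction 1 := fun hχ hquad => by
    have hpos := LFunction_ofReal_pos_of_one_le hχ hquad le_rfl
    rw [ofReal_one] at hpos
    exact Complex.norm_of_nonneg' hpos.le
  rw [biquadraticZeta₁, zeta₁_one, one_mul]
  push_cast
  rw [hnorm h.fst_ne_one h.fst_isQuadratic, hnorm h.snd_ne_one h.snd_isQuadratic,
    hnorm h.trd_ne_one h.trd_isQuadratic]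

lemma half_sub_le_re_biquadraticZeta (hβ : 7 / 8 ≤ β) (hβ1 : β < 1) :
    1 / 162 - 3 * (‖χ.LFunction 1‖ * ‖ψ.LFunction 1‖ * ‖η.LFunction 1‖) *
      (2 ^ 25 * (q₁ * q₂ * q₃)) ^ (4 * (1 - β)) / (1 - β) ≤ (biquadraticZeta χ ψ η β).re := by
  have hQ : (1 : ℝ) ≤ q₁ * q₂ * q₃ := by
    exact_mod_cast Nat.one_le_iff_ne_zero.2
      (mul_ne_zero (mul_ne_zero (NeZero.ne q₁) (NeZero.ne q₂)) (NeZero.ne q₃))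
  have hest := half_sub_rpow_div_le_re (b := 1 / 81) (M := 2 ^ 25 / 648 * (q₁ * q₂ * q₃))
    h.differentiable_biquadraticZeta₁.differentiableOn
    (fun s hs => (h.norm_dslope_biquadraticZeta₁_le hs).trans (by gcongr; norm_num))
    h.biquadraticZeta₁_one (by positivity) (fun s _ hs => biquadraticZeta_eq_div hs)
    h.alternating_iteratedDeriv (by norm_num) h.le_re_biquadraticZeta_two (by linarith) hβ hβ1
  rwa [show (1 / 81 / 2 : ℝ) = 1 / 162 by norm_num,
    show 8 * (2 ^ 25 / 648 * (q₁ * q₂ * q₃ : ℝ)) / (1 / 81) = 2 ^ 25 * (q₁ * q₂ * q₃) by ring]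
    at hest

lemma le_norm_LFunction_one_mul (hε : ε ≤ 1 / 8) (hβ : 1 - ε ≤ β) (hβ1 : β < 1)
    (hneg : (biquadraticZeta χ ψ η β).re ≤ 0) (hq : q₃ ≤ q₁ * q₂) :
    (1 - β) * ε ≤
      2 ^ 22 * ‖χ.LFunction 1‖ * ‖ψ.LFunction 1‖ * (q₁ * q₂ : ℝ) ^ (9 * ε) := by
  have hε0 : 0 < ε := by linarith
  have hβ0 : 0 < 1 - β := by linarith
  have hq3 : (q₃ : ℝ) ≤ q₁ * q₂ := by exact_mod_cast hq
  have hqq : (1 : ℝ) ≤ q₁ * q₂ := by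
    exact_mod_cast Nat.one_le_iff_ne_zero.2 (mul_ne_zero (NeZero.ne q₁) (NeZero.ne q₂))
  have hη : ‖η.LFunction 1‖ ≤ (q₁ * q₂ : ℝ) ^ ε / ε := by
    have hle := norm_LFunction_le h.trd_ne_one hε0.le (by linarith) (s := 1) (by simp)
      (by simpa using hε0)
    rw [norm_one, one_mul, one_re, sub_sub_cancel] at hle
    exact hle.trans (by gcongr)
  have hpow : (2 ^ 25 * (q₁ * q₂ * q₃) : ℝ) ^ (4 * (1 - β)) ≤ 2 ^ 13 * (q₁ * q₂) ^ (8 * ε) :=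
    (by gcongr : _ ≤ (2 ^ 25 * (q₁ * q₂ * (q₁ * q₂)) : ℝ) ^ (4 * (1 - β))).trans
      (rpow_four_mul_le hqq (by linarith) hε)
  have hlower : 1 / 162 ≤ 3 * (‖χ.LFunction 1‖ * ‖ψ.LFunction 1‖ * ((q₁ * q₂ : ℝ) ^ ε / ε)) *
      (2 ^ 13 * (q₁ * q₂) ^ (8 * ε)) / (1 - β) := by
    have hest := (h.half_sub_le_re_biquadraticZeta (by linarith) hβ1).trans hneg
    refine (sub_nonpos.1 hest).trans ?_
    gcongr
  have hsplit : (q₁ * q₂ : ℝ) ^ (9 * ε) = (q₁ * q₂ : ℝ) ^ ε * (q₁ * q₂ : ℝ) ^ (8 * ε) := by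
    rw [← Real.rpow_add (by positivity)]
    ring_nf
  rw [le_div_iff₀ hβ0] at hlower
  calc (1 - β) * ε = 162 * ε * (1 / 162 * (1 - β)) := by ring
    _ ≤ 162 * ε * (3 * (‖χ.LFunction 1‖ * ‖ψ.LFunction 1‖ * ((q₁ * q₂ : ℝ) ^ ε / ε)) *
        (2 ^ 13 * (q₁ * q₂) ^ (8 * ε))) := by gcongr
    _ = 162 * 3 * 2 ^ 13 * ‖χ.LFunction 1‖ * ‖ψ.LFunction 1‖ * (q₁ * q₂ : ℝ) ^ (9 * ε) := by
        rw [hsplit]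
        field_simp
    _ ≤ 2 ^ 22 * ‖χ.LFunction 1‖ * ‖ψ.LFunction 1‖ * (q₁ * q₂ : ℝ) ^ (9 * ε) := by
        gcongr
        norm_num

end IsBiquadraticTriple

lemma re_biquadraticZeta_nonpos (hβ : 0 < β) (hβ1 : β < 1) (hχ : 0 < χ.LFunction β)
    (hψ : 0 < ψ.LFunction β) (hη : 0 < η.LFunction β) : (biquadraticZeta χ ψ η β).re ≤ 0 := by
  have hne : (β : ℂ) ≠ 1 := by exact_mod_cast hβ1.ne
  have hpos : 0 < biquadraticZeta₁ χ ψ η β :=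
    mul_pos (mul_pos (mul_pos (zeta₁_ofReal_pos hβ hβ1.le) hχ) hψ) hη
  rw [biquadraticZeta_eq_div hne, ← ofReal_one, ← ofReal_sub, div_ofReal_re]
  exact div_nonpos_of_nonneg_of_nonpos (Complex.pos_iff.1 hpos).1.le (by linarith)

lemma isBiquadraticTriple_jacobiChar {D E : ℤ} [NeZero D] [NeZero E] (hD : ¬ IsSquare D)
    (hE : ¬ IsSquare E) (hDE : ¬ IsSquare (D * E)) :
    IsBiquadraticTriple (jacobiChar D) (jacobiChar E) (jacobiChar (D * E)) where
  fst_ne_one := jacobiChar_ne_one hD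
  snd_ne_one := jacobiChar_ne_one hE
  trd_ne_one := jacobiChar_ne_one hDE
  fst_isQuadratic := isQuadratic_jacobiChar D
  snd_isQuadratic := isQuadratic_jacobiChar E
  trd_isQuadratic := isQuadratic_jacobiChar (D * E)
  apply_mul_apply n := by
    rw [jacobiChar_natCast, jacobiChar_natCast, jacobiChar_natCast, oddJacobiSym_mul_left,
      Int.cast_mul]

end Biquadratic

section Siegel

open scoped ComplexOrder

variable {ε : ℝ}

lemma not_isSquare_of_squarefree {D : ℤ} (hD : Squarefree D) (hD1 : D ≠ 1) : ¬ IsSquare D :=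
  fun h => hD1 (eq_of_squarefree_of_isSquare_mul hD squarefree_one (by rwa [mul_one]))

lemma exists_re_biquadraticZeta_nonpos (hε0 : 0 < ε) (hε1 : ε < 1) :
    ∃ (E : ℤ) (_ : NeZero E) (β : ℝ), Squarefree E ∧ E ≠ 1 ∧ 1 - ε ≤ β ∧ β < 1 ∧
      ∀ (D : ℤ) [NeZero D], Squarefree D → D ≠ 1 → D ≠ E →
        (biquadraticZeta (jacobiChar D) (jacobiChar E) (jacobiChar (D * E)) β).re ≤ 0 := by
  by_cases hzero : ∃ (E : ℤ) (_ : NeZero E) (β : ℝ), Squarefree E ∧ E ≠ 1 ∧ 1 - ε ≤ β ∧ β < 1 ∧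
      (jacobiChar E).LFunction β = 0
  · obtain ⟨E, hE0, β, hE, hE1, hβ, hβ1, hz⟩ := hzero
    refine ⟨E, hE0, β, hE, hE1, hβ, hβ1, fun D _ _ _ _ => ?_⟩
    rw [biquadraticZeta, hz, mul_zero, zero_mul, Complex.zero_re]
  · push Not at hzero
    have hne : NeZero (-1 : ℤ) := ⟨by norm_num⟩
    have hneg : Squarefree (-1 : ℤ) := isUnit_one.neg.squarefree
    have hpos : ∀ (D : ℤ) [NeZero D], Squarefree D → D ≠ 1 →
        0 < (jacobiChar D).LFunction (1 - ε : ℝ) := fun D hD0 hD hD1 =>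
      LFunction_ofReal_pos (jacobiChar_ne_one (not_isSquare_of_squarefree hD hD1))
        (isQuadratic_jacobiChar D) (by linarith) fun x hx hx1 => hzero D hD0 x hD hD1 hx hx1
    refine ⟨-1, hne, 1 - ε, hneg, by norm_num, le_rfl, by linarith,
      fun D hD0 hD hD1 hDE => ?_⟩
    have hDneg : NeZero (D * -1) := ⟨mul_ne_zero hD0.ne hne.ne⟩
    refine re_biquadraticZeta_nonpos (by linarith) (by linarith) (hpos D hD hD1)
      (hpos (-1) hneg (by norm_num)) (hpos (D * -1) ?_ fun h => hDE (by linarith))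
    rwa [mul_neg_one, ← Int.squarefree_natAbs, Int.natAbs_neg, Int.squarefree_natAbs]

/-- Siegel's theorem. -/
theorem exists_rpow_neg_le_norm_LFunction_one (hε0 : 0 < ε) (hε1 : ε ≤ 1 / 8) :
    ∃ c > 0, ∀ (D : ℤ) [NeZero D], Squarefree D → D ≠ 1 →
      c * (D.natAbs : ℝ) ^ (-(9 * ε)) ≤ ‖(jacobiChar D).LFunction 1‖ := by
  obtain ⟨E, hE0, β, hE, hE1, hβ, hβ1, hneg⟩ :=
    exists_re_biquadraticZeta_nonpos hε0 (by linarith)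
  have hE2 := not_isSquare_of_squarefree hE hE1
  have hLE : 0 < ‖(jacobiChar E).LFunction 1‖ := norm_pos_iff.2
    (LFunction_ne_zero_of_one_le_re (jacobiChar_ne_one hE2) le_rfl)
  have hβ0 : 0 < 1 - β := by linarith
  have hEpos : (0 : ℝ) < E.natAbs := by exact_mod_cast Int.natAbs_pos.2 (NeZero.ne E)
  set m : ℝ := 2 ^ 22 * ‖(jacobiChar E).LFunction 1‖ * (16 * E.natAbs) ^ (9 * ε) with hm
  have hm0 : 0 < m := by positivity
  refine ⟨min ((1 - β) * ε / m) ‖(jacobiChar E).LFunction 1‖,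
    lt_min (div_pos (mul_pos hβ0 hε0) hm0) hLE, fun D hD0 hD hD1 => ?_⟩
  have hDpos : (1 : ℝ) ≤ D.natAbs := by exact_mod_cast Int.natAbs_pos.2 (NeZero.ne D)
  obtain rfl | hDE := eq_or_ne D E
  · calc _ ≤ ‖(jacobiChar D).LFunction 1‖ * 1 := by
          gcongr
          · exact min_le_right _ _
          · exact Real.rpow_le_one_of_one_le_of_nonpos hDpos (by linarith)
      _ = ‖(jacobiChar D).LFunction 1‖ := mul_one _
  · have htriple := isBiquadraticTriple_jacobiChar (not_isSquare_of_squarefree hD hD1) hE2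
      fun h => hDE (eq_of_squarefree_of_isSquare_mul hD hE h)
    have hle := htriple.le_norm_LFunction_one_mul hε1 hβ hβ1 (hneg D hD hD1 hDE)
      (by rw [Int.natAbs_mul]; nlinarith [Nat.zero_le (D.natAbs * E.natAbs)])
    push_cast at hle
    rw [show (4 * D.natAbs * (4 * E.natAbs) : ℝ) = 16 * E.natAbs * D.natAbs by ring,
      Real.mul_rpow (by positivity) (by positivity)] at hle
    rw [Real.rpow_neg (by positivity), ← div_eq_mul_inv, div_le_iff₀ (by positivity)]
    refine (min_le_left _ _).trans ((div_le_iff₀ hm0).2 (hle.trans_eq ?_))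
    rw [hm]
    ring

end Siegel

section ZeroFreeRegion

open Complex Set Metric Filter

variable {q : ℕ} [NeZero q] {χ : DirichletCharacter ℂ q} {s : ℂ} {η : ℝ}

lemma norm_LFunction_le_of_mem_ball (hχ : χ ≠ 1) (hη0 : 0 < η) (hη1 : η ≤ 1)
    (hs : s ∈ ball (1 : ℂ) (η / 2)) : ‖χ.LFunction s‖ ≤ 4 * (q : ℝ) ^ η / η := by
  rw [mem_ball, dist_eq_norm] at hs
  have hre : 1 - η / 2 < s.re := by
    have habs := (abs_lt.1 ((abs_re_le_norm (s - 1)).trans_lt hs)).1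
    rw [sub_re, one_re] at habs
    linarith
  have hnorm : ‖s‖ ≤ 2 := by
    have htri := norm_le_norm_add_norm_sub 1 s
    rw [norm_one, norm_sub_rev] at htri
    linarith
  refine (norm_LFunction_le hχ hη0.le hη1 (by linarith) (by linarith)).trans ?_
  calc ‖s‖ * (q : ℝ) ^ η / (s.re - (1 - η)) ≤ 2 * (q : ℝ) ^ η / (η / 2) := by
        gcongr
        linarith
    _ = 4 * (q : ℝ) ^ η / η := by
        field_simp
        ring

lemma norm_LFunction_sub_LFunction_one_le (hχ : χ ≠ 1) (hη0 : 0 < η) (hη1 : η ≤ 1)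
    (hs : ‖s - 1‖ < η / 2) :
    ‖χ.LFunction s - χ.LFunction 1‖ ≤ 16 * (q : ℝ) ^ η / η ^ 2 * ‖s - 1‖ := by
  have hmaps : MapsTo χ.LFunction (ball 1 (η / 2))
      (closedBall (χ.LFunction 1) (8 * (q : ℝ) ^ η / η)) := fun z hz => by
    rw [mem_closedBall, dist_eq_norm]
    calc ‖χ.LFunction z - χ.LFunction 1‖ ≤ ‖χ.LFunction z‖ + ‖χ.LFunction 1‖ := norm_sub_le _ _
      _ ≤ 4 * (q : ℝ) ^ η / η + 4 * (q : ℝ) ^ η / η :=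
          add_le_add (norm_LFunction_le_of_mem_ball hχ hη0 hη1 hz)
            (norm_LFunction_le_of_mem_ball hχ hη0 hη1 (mem_ball_self (half_pos hη0)))
      _ = 8 * (q : ℝ) ^ η / η := by ring
  have hschwarz := Complex.dist_le_div_mul_dist_of_mapsTo_ball
    (DirichletCharacter.differentiable_LFunction hχ).differentiableOn hmaps
    (by rwa [mem_ball, dist_eq_norm])
  rw [dist_eq_norm, dist_eq_norm] at hschwarz
  convert hschwarz using 2
  field_simp
  ring

lemma rpow_sq_le_of_le_pow {d ℓ η : ℝ} {k : ℕ} (hd : 0 ≤ d) (hℓ : 1 ≤ ℓ) (hdℓ : d ≤ ℓ ^ k)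
    (hη : 0 ≤ η) (hkη : k * η ≤ 1 / 2) : (d ^ η) ^ 2 ≤ ℓ := by
  refine (Real.le_sqrt (by positivity) (by positivity)).1 ?_
  rw [Real.sqrt_eq_rpow]
  calc d ^ η ≤ (ℓ ^ k) ^ η := Real.rpow_le_rpow hd hdℓ hη
    _ = ℓ ^ (k * η) := by rw [← Real.rpow_natCast, ← Real.rpow_mul (by positivity)]
    _ ≤ ℓ ^ (1 / 2 : ℝ) := Real.rpow_le_rpow_of_exponent_le hℓ hkη

lemma exists_LFunction_ne_zero_of_norm_sub_one_le (k : ℕ) :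
    ∃ δ > 0, ∀ (D : ℤ) [NeZero D], Squarefree D → D ≠ 1 → ∀ ℓ : ℝ, 1 ≤ ℓ →
      (D.natAbs : ℝ) ≤ ℓ ^ k → ∀ s : ℂ, ‖s - 1‖ ≤ 2 * δ / ℓ → (jacobiChar D).LFunction s ≠ 0 := by
  set η : ℝ := 1 / (2 * (k + 1)) with hη
  have hη0 : 0 < η := by positivity
  have hη1 : η ≤ 1 / 2 := by
    rw [hη]
    gcongr
    linarith [k.cast_nonneg (α := ℝ)]
  have hkη : k * η ≤ 1 / 2 := by
    rw [hη, mul_one_div, div_le_div_iff₀ (by positivity) (by norm_num)]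
    linarith
  obtain ⟨c, hc, hsiegel⟩ := exists_rpow_neg_le_norm_LFunction_one (ε := η / 9) (by positivity)
    (by linarith)
  rw [show 9 * (η / 9) = η by ring] at hsiegel
  set δ := min (c * η ^ 2 / 256) (η / 8)
  have hδ0 : 0 < δ := by positivity
  refine ⟨δ, hδ0, fun D _ hD hD1 ℓ hℓ hDℓ s hs hzero => ?_⟩
  have hd : (0 : ℝ) < D.natAbs := by exact_mod_cast Int.natAbs_pos.2 (NeZero.ne D)
  set r : ℝ := (D.natAbs : ℝ) ^ η with hr
  have hr0 : 0 < r := by positivity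
  have hrsq : r ^ 2 ≤ ℓ := rpow_sq_le_of_le_pow hd.le hℓ hDℓ hη0.le hkη
  have hdist : ‖s - 1‖ < η / 2 := by
    calc ‖s - 1‖ ≤ 2 * δ / ℓ := hs
      _ ≤ 2 * δ := div_le_self (by positivity) hℓ
      _ < η / 2 := by linarith [min_le_right (c * η ^ 2 / 256) (η / 8)]
  have hfour : (4 : ℝ) ^ η ≤ 4 := Real.rpow_le_self_of_one_le (by norm_num) (by linarith)
  have hle : c * r⁻¹ ≤ 16 * (4 * r) / η ^ 2 * (2 * δ / ℓ) := by
    have hsub := norm_LFunction_sub_LFunction_one_le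
      (jacobiChar_ne_one (not_isSquare_of_squarefree hD hD1)) hη0 (by linarith) hdist
    rw [hzero, zero_sub, norm_neg, Nat.cast_mul, Nat.cast_ofNat,
      Real.mul_rpow (by norm_num) hd.le] at hsub
    rw [hr, ← Real.rpow_neg hd.le]
    exact (hsiegel D hD hD1).trans (hsub.trans (by gcongr))
  refine hle.not_gt ?_
  calc 16 * (4 * r) / η ^ 2 * (2 * δ / ℓ)
      ≤ 16 * (4 * r) / η ^ 2 * (2 * (c * η ^ 2 / 256) / r ^ 2) := by
        gcongr
        exact min_le_left _ _
    _ = c / 2 * r⁻¹ := by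
        field_simp
        norm_num
    _ < c * r⁻¹ := by
        gcongr
        linarith

lemma exists_LFunction_ne_zero_jacobiChar (k : ℕ) :
    ∃ b > 0, b ≤ 1 ∧ ∀ (D : ℤ) [NeZero D], Squarefree D → D ≠ 1 → ∀ ℓ : ℝ, 16 ≤ ℓ →
      (D.natAbs : ℝ) ≤ ℓ ^ k → ((4 * D.natAbs : ℕ) : ℝ) ≤ Real.exp ℓ → ∀ s : ℂ,
        1 - b / ℓ ≤ s.re → |s.im| ≤ Real.exp ℓ → (jacobiChar D).LFunction s ≠ 0 := by
  obtain ⟨δ, hδ, hnear⟩ := exists_LFunction_ne_zero_of_norm_sub_one_le k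
  set a := min δ (1 / 100000)
  have ha : 0 < a := lt_min hδ (by norm_num)
  have ha1 : a ≤ 1 / 100000 := min_le_right _ _
  refine ⟨a / 7, by positivity, by linarith, fun D _ hD hD1 ℓ hℓ hDℓ hq s hre him => ?_⟩
  have hχ := jacobiChar_ne_one (not_isSquare_of_squarefree hD hD1)
  obtain h1 | h1 := le_or_gt 1 s.re
  · exact LFunction_ne_zero_of_one_le_re hχ h1
  obtain hfar | hclose := le_or_gt (a / ℓ) |s.im|
  · exact LFunction_ne_zero_of_le_abs_im hχ (isQuadratic_jacobiChar D) ha ha1 hℓ hq hre hfar him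
  · refine hnear D hD hD1 ℓ (by linarith) hDℓ s ?_
    have hre' : |s.re - 1| ≤ a / ℓ := by
      rw [abs_of_neg (by linarith)]
      have hle : a / 7 / ℓ ≤ a / ℓ := by
        gcongr
        linarith
      linarith
    have hnorm := norm_le_abs_re_add_abs_im (s - 1)
    rw [sub_re, one_re, sub_im, one_im, sub_zero] at hnorm
    calc ‖s - 1‖ ≤ a / ℓ + a / ℓ := by linarith
      _ = 2 * a / ℓ := by ring
      _ ≤ 2 * δ / ℓ := by
          gcongr
          exact min_le_left _ _

lemma exists_four_mul_pow_le_exp (k : ℕ) : ∃ ℓ₀ : ℝ, ∀ ℓ ≥ ℓ₀, 4 * ℓ ^ k ≤ Real.exp ℓ := by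
  have hlim := (Real.tendsto_pow_mul_exp_neg_atTop_nhds_zero k).eventually_lt_const
    (by norm_num : (0 : ℝ) < 1 / 4)
  obtain ⟨ℓ₀, h⟩ := eventually_atTop.1 hlim
  refine ⟨ℓ₀, fun ℓ hℓ => ?_⟩
  have hlt := h ℓ hℓ
  rw [Real.exp_neg, ← div_eq_mul_inv, div_lt_iff₀ (Real.exp_pos ℓ)] at hlt
  linarith

lemma exists_norm_logDeriv_LFunction_jacobiChar_le (k : ℕ) :
    ∃ b > 0, b ≤ 1 ∧ ∃ B > 0, ∃ ℓ₀ : ℝ, 32 ≤ ℓ₀ ∧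
      ∀ (D : ℤ) [NeZero D], Squarefree D → D ≠ 1 → ∀ ℓ : ℝ, ℓ₀ ≤ ℓ → (D.natAbs : ℝ) ≤ ℓ ^ k →
        ∀ s : ℂ, 1 - b / ℓ ≤ s.re → s.re ≤ 1 + 1 / ℓ → |s.im| ≤ Real.exp ℓ - 1 →
          (jacobiChar D).LFunction s ≠ 0 ∧ ‖logDeriv (jacobiChar D).LFunction s‖ ≤ B * ℓ := by
  obtain ⟨b, hb, hb1, hzf⟩ := exists_LFunction_ne_zero_jacobiChar k
  obtain ⟨ℓ₁, hℓ₁⟩ := exists_four_mul_pow_le_exp k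
  refine ⟨b / 2, by positivity, by linarith, 40000 / b, by positivity, max 32 ℓ₁, le_max_left _ _,
    fun D _ hD hD1 ℓ hℓ hDℓ s hre hre' him => ?_⟩
  obtain ⟨hℓ32, hℓ1⟩ := max_le_iff.1 hℓ
  have hq : ((4 * D.natAbs : ℕ) : ℝ) ≤ Real.exp ℓ := by
    push_cast
    linarith [hℓ₁ ℓ hℓ1]
  have hzf' := hzf D hD hD1 ℓ (by linarith) hDℓ hq
  have hbℓ : b / 2 / ℓ ≤ b / ℓ := by
    gcongr
    linarith
  exact ⟨hzf' s (by linarith) (by linarith),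
    norm_logDeriv_LFunction_le (jacobiChar_ne_one (not_isSquare_of_squarefree hD hD1)) hb hb1 hℓ32
      hq hzf' (by rwa [← div_div]) hre' him⟩

end ZeroFreeRegion

section Riesz

open Complex Set MeasureTheory Filter

variable {X κ : ℝ} {s : ℂ}

/-- The kernel `X ^ s / (s (s + 1))` of Perron's formula for the sums `∑ n ≤ X, a n * (1 - n / X)`,
written in partial fractions. -/
noncomputable def rieszKernel (X : ℝ) (s : ℂ) : ℂ := (X : ℂ) ^ s * (1 / s - 1 / (s + 1))

lemma ne_zero_of_re_pos (hs : 0 < s.re) : s ≠ 0 := by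
  rintro rfl
  exact lt_irrefl _ hs

lemma norm_one_div_sub_one_div_add_one_le (hs : 1 / 2 ≤ s.re) :
    ‖1 / s - 1 / (s + 1)‖ ≤ 4 * (1 + s.im ^ 2)⁻¹ := by
  have h0 : s ≠ 0 := ne_zero_of_re_pos (by linarith)
  have h1 : s + 1 ≠ 0 := ne_zero_of_re_pos (by rw [add_re, one_re]; linarith)
  have hsq : ‖s‖ ^ 2 = s.re ^ 2 + s.im ^ 2 := by
    rw [Complex.sq_norm, normSq_apply]
    ring
  have hsq1 : ‖s + 1‖ ^ 2 = (s.re + 1) ^ 2 + s.im ^ 2 := by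
    rw [Complex.sq_norm, normSq_apply, add_re, add_im, one_re, one_im]
    ring
  have hle : ‖s‖ ≤ ‖s + 1‖ := by
    rw [← sq_le_sq₀ (norm_nonneg _) (norm_nonneg _), hsq, hsq1]
    linarith
  have hprod : (1 + s.im ^ 2) / 4 ≤ ‖s‖ * ‖s + 1‖ := by nlinarith [norm_nonneg s]
  rw [show 1 / s - 1 / (s + 1) = 1 / (s * (s + 1)) by field_simp; ring, norm_div, norm_one,
    norm_mul]
  calc 1 / (‖s‖ * ‖s + 1‖) ≤ 1 / ((1 + s.im ^ 2) / 4) := by gcongr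
    _ = 4 * (1 + s.im ^ 2)⁻¹ := by field_simp

lemma norm_rieszKernel_le (hX : 0 < X) (hs : 1 / 2 ≤ s.re) :
    ‖rieszKernel X s‖ ≤ 4 * X ^ s.re * (1 + s.im ^ 2)⁻¹ := by
  rw [rieszKernel, norm_mul, norm_cpow_eq_rpow_re_of_pos hX, mul_right_comm, mul_comm]
  gcongr
  exact norm_one_div_sub_one_div_add_one_le hs

lemma differentiableAt_rieszKernel (hX : 0 < X) (hs : 0 < s.re) :
    DifferentiableAt ℂ (rieszKernel X) s := by
  have h0 : s ≠ 0 := ne_zero_of_re_pos hs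
  have h1 : s + 1 ≠ 0 := ne_zero_of_re_pos (by rw [add_re, one_re]; linarith)
  have hXc : (X : ℂ) ≠ 0 := ofReal_ne_zero.2 hX.ne'
  unfold rieszKernel
  fun_prop (disch := first | assumption | exact Or.inl hXc)

lemma continuous_rieszKernel (hX : 0 < X) (hκ : 0 < κ) :
    Continuous fun t : ℝ => rieszKernel X (κ + t * I) :=
  continuous_iff_continuousAt.2 fun t =>
    (differentiableAt_rieszKernel hX (by simpa using hκ)).continuousAt.comp
      (f := fun t : ℝ => (κ : ℂ) + t * I) (by fun_prop)

lemma norm_rieszKernel_vertical_le (hX : 0 < X) (hκ : 1 / 2 ≤ κ) (t : ℝ) :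
    ‖rieszKernel X (κ + t * I)‖ ≤ 4 * X ^ κ * (1 + t ^ 2)⁻¹ := by
  simpa using norm_rieszKernel_le hX (s := κ + t * I) (by simpa using hκ)

lemma integrable_rieszKernel (hX : 0 < X) (hκ : 1 / 2 ≤ κ) :
    Integrable fun t : ℝ => rieszKernel X (κ + t * I) :=
  (integrable_inv_one_add_sq.const_mul (4 * X ^ κ)).mono'
    (continuous_rieszKernel hX (by linarith)).aestronglyMeasurable
    (Eventually.of_forall (norm_rieszKernel_vertical_le hX hκ))

lemma hasMellin_indicator_one_sub (hs : 0 < s.re) :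
    HasMellin (indicator (Ioc 0 1) fun u : ℝ => (1 - u : ℂ)) s (1 / s - 1 / (s + 1)) := by
  have hone := hasMellin_one_Ioc hs
  have hid := hasMellin_cpow_Ioc 1 (s := s) (by rw [one_re]; linarith)
  have hsub := hasMellin_sub hone.1 hid.1
  rw [hone.2, hid.2] at hsub
  simp_rw [cpow_one] at hsub
  rwa [indicator_sub]

lemma indicator_one_sub_eq_max {u : ℝ} (hu : 0 < u) :
    indicator (Ioc 0 1) (fun u : ℝ => (1 - u : ℂ)) u = ((max 0 (1 - u) : ℝ) : ℂ) := by
  obtain h | h := le_or_gt u 1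
  · rw [indicator_of_mem (mem_Ioc.2 ⟨hu, h⟩), max_eq_right (by linarith), ofReal_sub, ofReal_one]
  · rw [indicator_of_notMem fun hmem => hmem.2.not_gt h, max_eq_left (by linarith), ofReal_zero]

lemma integral_rieszKernel (hX : 0 < X) (hκ : 1 / 2 ≤ κ) :
    (1 / (2 * Real.pi) : ℂ) * ∫ t : ℝ, rieszKernel X (κ + t * I) =
      ((max 0 (1 - 1 / X) : ℝ) : ℂ) := by
  have hX' : 0 < X⁻¹ := inv_pos.2 hX
  have hmellin : ∀ t : ℝ, mellin (indicator (Ioc 0 1) fun u : ℝ => (1 - u : ℂ)) (κ + t * I) =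
      1 / (κ + t * I) - 1 / (κ + t * I + 1) := fun t =>
    (hasMellin_indicator_one_sub (by simpa using by linarith)).2
  have hvert : VerticalIntegrable
      (mellin (indicator (Ioc 0 1) fun u : ℝ => (1 - u : ℂ))) κ volume := by
    refine (integrable_rieszKernel one_pos hκ).congr (Eventually.of_forall fun t => ?_)
    simp only [rieszKernel, hmellin, ofReal_one, one_cpow, one_mul]
  have hcont : ContinuousAt (indicator (Ioc 0 1) fun u : ℝ => (1 - u : ℂ)) X⁻¹ := by
    have hmax : ContinuousAt (fun u : ℝ => ((max 0 (1 - u) : ℝ) : ℂ)) X⁻¹ := by fun_prop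
    refine hmax.congr ?_
    filter_upwards [lt_mem_nhds hX'] with u hu
    exact (indicator_one_sub_eq_max hu).symm
  have hinv := mellinInv_mellin_eq κ _ hX'
    (hasMellin_indicator_one_sub (by simpa using by linarith)).1 hvert hcont
  rw [indicator_one_sub_eq_max hX', mellinInv, real_smul] at hinv
  rw [one_div X, ← hinv]
  push_cast
  congr 2
  funext t
  rw [hmellin, smul_eq_mul, cpow_neg, inv_cpow _ _ (by simp [arg_ofReal_of_nonneg hX.le,
    Real.pi_ne_zero.symm]), inv_inv, rieszKernel]

variable {a : ℕ → ℂ}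

lemma term_mul_rieszKernel {n : ℕ} (hn : n ≠ 0) (hX : 0 < X) (a : ℕ → ℂ) (s : ℂ) :
    LSeries.term a s n * rieszKernel X s = a n * rieszKernel (X / n) s := by
  rw [LSeries.term_of_ne_zero hn, rieszKernel, rieszKernel, ofReal_div,
    div_cpow_ofReal_nonneg hX.le n.cast_nonneg, ofReal_natCast]
  ring

lemma norm_term_mul_rieszKernel_le (hX : 0 < X) (hκ : 1 / 2 ≤ κ) (n : ℕ) (t : ℝ) :
    ‖LSeries.term a (κ + t * I) n * rieszKernel X (κ + t * I)‖ ≤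
      ‖LSeries.term a κ n‖ * (4 * X ^ κ * (1 + t ^ 2)⁻¹) := by
  have hterm : ‖LSeries.term a (κ + t * I) n‖ = ‖LSeries.term a κ n‖ := by
    simp [LSeries.norm_term_eq]
  rw [norm_mul, hterm]
  gcongr
  exact norm_rieszKernel_vertical_le hX hκ t

lemma integrable_term_mul_rieszKernel (hX : 0 < X) (hκ : 1 / 2 ≤ κ) (n : ℕ) :
    Integrable fun t : ℝ => LSeries.term a (κ + t * I) n * rieszKernel X (κ + t * I) := by
  obtain rfl | hn := eq_or_ne n 0
  · simp
  · simp_rw [term_mul_rieszKernel hn hX]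
    exact (integrable_rieszKernel (by positivity) hκ).const_mul _

lemma summable_integral_norm_term_mul_rieszKernel (hX : 0 < X) (hκ : 1 / 2 ≤ κ)
    (hs : LSeriesSummable a κ) :
    Summable fun n => ∫ t : ℝ, ‖LSeries.term a (κ + t * I) n * rieszKernel X (κ + t * I)‖ := by
  refine (hs.norm.mul_right (∫ t : ℝ, 4 * X ^ κ * (1 + t ^ 2)⁻¹)).of_nonneg_of_le
    (fun n => integral_nonneg fun t => norm_nonneg _) fun n => ?_
  rw [← integral_const_mul]
  exact integral_mono (integrable_term_mul_rieszKernel hX hκ n).norm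
    ((integrable_inv_one_add_sq.const_mul _).const_mul _)
    (norm_term_mul_rieszKernel_le hX hκ n)

lemma sum_mul_one_sub_div_eq_integral (ha0 : a 0 = 0) (hX : 0 < X) (hκ : 1 / 2 ≤ κ)
    (hs : LSeriesSummable a κ) :
    ∑ n ∈ Finset.range (⌊X⌋₊ + 1), a n * ((1 - n / X : ℝ) : ℂ) =
      (1 / (2 * Real.pi) : ℂ) *
        ∫ t : ℝ, LSeries a (κ + t * I) * rieszKernel X (κ + t * I) := by
  have hint : ∀ n : ℕ, (1 / (2 * Real.pi) : ℂ) *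
      ∫ t : ℝ, LSeries.term a (κ + t * I) n * rieszKernel X (κ + t * I) =
        a n * ((max 0 (1 - n / X) : ℝ) : ℂ) := fun n => by
    obtain rfl | hn := eq_or_ne n 0
    · simp [ha0]
    · simp_rw [term_mul_rieszKernel hn hX]
      rw [integral_const_mul, mul_left_comm, integral_rieszKernel (by positivity) hκ, one_div_div]
  simp_rw [LSeries, ← tsum_mul_right]
  rw [← integral_tsum_of_summable_integral_norm (integrable_term_mul_rieszKernel hX hκ)
    (summable_integral_norm_term_mul_rieszKernel hX hκ hs), ← tsum_mul_left, tsum_congr hint,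
    tsum_eq_sum (s := Finset.range (⌊X⌋₊ + 1))]
  · refine Finset.sum_congr rfl fun n hn => ?_
    have hnX : (n : ℝ) ≤ X := (Nat.le_floor_iff hX.le).1 (Finset.mem_range_succ_iff.1 hn)
    rw [max_eq_right (sub_nonneg.2 ((div_le_one hX).2 hnX))]
  · intro n hn
    have hXn : X ≤ n := (Nat.lt_of_floor_lt
      (Nat.lt_of_succ_le (not_lt.1 fun h => hn (Finset.mem_range.2 h)))).le
    rw [max_eq_left (sub_nonpos.2 ((one_le_div hX).2 hXn)), ofReal_zero, mul_zero]

end Riesz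

section ContourShift

open Complex Set MeasureTheory Filter

variable {g G : ℂ → ℂ} {f : ℝ → ℂ} {σ κ T M X A B : ℝ}

lemma norm_integral_vertical_le (hg : DifferentiableOn ℂ g (uIcc σ κ ×ℂ uIcc (-T) T)) :
    ‖∫ t in -T..T, g (κ + t * I)‖ ≤ ‖∫ t in -T..T, g (σ + t * I)‖ +
      ‖∫ x in σ..κ, g (x + (-T : ℝ) * I)‖ + ‖∫ x in σ..κ, g (x + T * I)‖ := by
  have hrect := integral_boundary_rect_eq_zero_of_differentiableOn g ⟨σ, -T⟩ ⟨κ, T⟩ hg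
  simp only [smul_eq_mul] at hrect
  have hI : ∀ z : ℂ, ‖I * z‖ = ‖z‖ := fun z => by rw [norm_mul, norm_I, one_mul]
  calc ‖∫ t in -T..T, g (κ + t * I)‖
      = ‖I * (∫ t in -T..T, g (σ + t * I)) - (∫ x in σ..κ, g (x + (-T : ℝ) * I)) +
          ∫ x in σ..κ, g (x + T * I)‖ := by
        rw [← hI]
        congr 1
        linear_combination hrect
    _ ≤ ‖I * ∫ t in -T..T, g (σ + t * I)‖ + ‖∫ x in σ..κ, g (x + (-T : ℝ) * I)‖ +
          ‖∫ x in σ..κ, g (x + T * I)‖ :=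
        (norm_add_le _ _).trans (add_le_add_left (norm_sub_le _ _) _)
    _ = _ := by rw [hI]

lemma arctan_le_self (hT : 0 < T) : Real.arctan T ≤ T := by
  have hlt := Real.lt_tan (Real.arctan_pos.2 hT) (Real.arctan_lt_pi_div_two T)
  rw [Real.tan_arctan] at hlt
  exact hlt.le

lemma norm_integral_le_add_of_norm_le_inv_one_add_sq (hf : Integrable f)
    (hM : ∀ t, ‖f t‖ ≤ M * (1 + t ^ 2)⁻¹) (hT : 0 < T) :
    ‖∫ t, f t‖ ≤ ‖∫ t in -T..T, f t‖ + 2 * M / T := by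
  have hM0 : 0 ≤ M := by simpa using (norm_nonneg _).trans (hM 0)
  have hmaj := integrable_inv_one_add_sq.const_mul M
  have htail : M * Real.arctan T⁻¹ ≤ M / T := by
    rw [div_eq_mul_inv]
    gcongr
    exact arctan_le_self (inv_pos.2 hT)
  have hright : ‖∫ t in Ioi T, f t‖ ≤ M / T := by
    refine (norm_integral_le_of_norm_le hmaj.integrableOn (Eventually.of_forall hM)).trans ?_
    rwa [integral_const_mul, integral_Ioi_inv_one_add_sq, ← Real.arctan_inv_of_pos hT]
  have hleft : ‖∫ t in Iic (-T), f t‖ ≤ M / T := by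
    refine (norm_integral_le_of_norm_le hmaj.integrableOn (Eventually.of_forall hM)).trans ?_
    rwa [integral_const_mul, integral_Iic_inv_one_add_sq, Real.arctan_neg, neg_add_eq_sub,
      ← Real.arctan_inv_of_pos hT]
  have hsplit : ∫ t, f t = (∫ t in Iic (-T), f t) +
      ((∫ t in -T..T, f t) + ∫ t in Ioi T, f t) := by
    rw [intervalIntegral.integral_interval_add_Ioi hf.integrableOn hf.integrableOn,
      intervalIntegral.integral_Iic_add_Ioi hf.integrableOn hf.integrableOn]
  have htri := norm_add₃_le (a := ∫ t in Iic (-T), f t) (b := ∫ t in -T..T, f t)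
    (c := ∫ t in Ioi T, f t)
  rw [hsplit, ← add_assoc, mul_div_assoc]
  linarith

lemma norm_intervalIntegral_le_of_norm_le_inv_one_add_sq (hM : 0 ≤ M) (hT : 0 ≤ T)
    (hf : ∀ t ∈ Ioc (-T) T, ‖f t‖ ≤ M * (1 + t ^ 2)⁻¹) : ‖∫ t in -T..T, f t‖ ≤ 4 * M := by
  have hle := intervalIntegral.norm_integral_le_of_norm_le (μ := volume) (neg_le_self hT)
    (Eventually.of_forall hf) (integrable_inv_one_add_sq.const_mul M).intervalIntegrable
  rw [intervalIntegral.integral_const_mul, integral_inv_one_add_sq, Real.arctan_neg,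
    sub_neg_eq_add] at hle
  calc ‖∫ t in -T..T, f t‖ ≤ M * (Real.arctan T + Real.arctan T) := hle
    _ ≤ M * 4 := by
        gcongr
        linarith [Real.arctan_lt_pi_div_two T, Real.pi_lt_four]
    _ = 4 * M := mul_comm _ _

lemma norm_mul_rieszKernel_le (hX : 0 < X) {s : ℂ} (hs : 1 / 2 ≤ s.re) (hA : ‖G s‖ ≤ A) :
    ‖G s * rieszKernel X s‖ ≤ 4 * A * X ^ s.re * (1 + s.im ^ 2)⁻¹ := by
  have hA0 : 0 ≤ A := (norm_nonneg _).trans hA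
  rw [norm_mul]
  calc ‖G s‖ * ‖rieszKernel X s‖ ≤ A * (4 * X ^ s.re * (1 + s.im ^ 2)⁻¹) := by
        gcongr
        exact norm_rieszKernel_le hX hs
    _ = 4 * A * X ^ s.re * (1 + s.im ^ 2)⁻¹ := by ring

lemma norm_integral_horizontal_mul_rieszKernel_le (hσ : 1 / 2 ≤ σ) (hσκ : σ ≤ κ) (hX : 1 ≤ X)
    (hB : ∀ s : ℂ, σ ≤ s.re → s.re ≤ κ → |s.im| ≤ |T| → ‖G s‖ ≤ B) (hT : 1 ≤ |T|) :
    ‖∫ x in σ..κ, G (x + T * I) * rieszKernel X (x + T * I)‖ ≤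
      4 * B * X ^ κ / |T| * (κ - σ) := by
  have hB0 : 0 ≤ B := (norm_nonneg _).trans (hB (κ + T * I) (by simpa) (by simp) (by simp))
  have hbound : ∀ x ∈ uIoc σ κ, ‖G (x + T * I) * rieszKernel X (x + T * I)‖ ≤
      4 * B * X ^ κ / |T| := fun x hx => by
    rw [uIoc_of_le hσκ] at hx
    have hle := norm_mul_rieszKernel_le (s := x + T * I) (by linarith : 0 < X)
      (by simpa using hσ.trans hx.1.le) (hB _ (by simpa using hx.1.le) (by simpa using hx.2)
        (by simp))
    simp only [add_re, ofReal_re, mul_re, I_re, mul_zero, ofReal_im, I_im, mul_one, sub_self,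
      add_zero, add_im, mul_im, zero_add] at hle
    rw [div_eq_mul_inv]
    refine hle.trans ?_
    gcongr
    · exact hx.2
    · rw [← sq_abs]
      nlinarith
  refine (intervalIntegral.norm_integral_le_of_norm_le_const hbound).trans_eq ?_
  rw [abs_of_nonneg (sub_nonneg.2 hσκ)]

lemma norm_integral_mul_rieszKernel_le (hσ : 1 / 2 ≤ σ) (hσκ : σ ≤ κ) (hκ : κ ≤ σ + 2)
    (hT : 1 ≤ T) (hX : 1 ≤ X)
    (hG : ∀ s : ℂ, σ ≤ s.re → s.re ≤ κ → |s.im| ≤ T → DifferentiableAt ℂ G s)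
    (hB : ∀ s : ℂ, σ ≤ s.re → s.re ≤ κ → |s.im| ≤ T → ‖G s‖ ≤ B)
    (hA : ∀ t : ℝ, ‖G (κ + t * I)‖ ≤ A) (hcont : Continuous fun t : ℝ => G (κ + t * I)) :
    ‖∫ t : ℝ, G (κ + t * I) * rieszKernel X (κ + t * I)‖ ≤
      16 * B * X ^ σ + 16 * B * X ^ κ / T + 8 * A * X ^ κ / T := by
  have hX0 : 0 < X := by linarith
  have hTabs : |T| = T := abs_of_nonneg (by linarith)
  have hB0 : 0 ≤ B :=
    (norm_nonneg _).trans (hB κ (by simpa using hσκ) (by simp) (by simp; linarith))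
  have hvert : ∀ x t C : ℝ, 1 / 2 ≤ x → ‖G (x + t * I)‖ ≤ C →
      ‖G (x + t * I) * rieszKernel X (x + t * I)‖ ≤ 4 * C * X ^ x * (1 + t ^ 2)⁻¹ :=
    fun x t C hx hC => by
      simpa using norm_mul_rieszKernel_le hX0 (s := x + t * I) (by simpa using hx) hC
  have hright := fun t : ℝ => hvert κ t A (hσ.trans hσκ) (hA t)
  have hint : Integrable fun t : ℝ => G (κ + t * I) * rieszKernel X (κ + t * I) :=
    (integrable_inv_one_add_sq.const_mul _).mono'
      (hcont.mul (continuous_rieszKernel hX0 (by linarith))).aestronglyMeasurable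
      (Eventually.of_forall hright)
  have hdiff : DifferentiableOn ℂ (fun s => G s * rieszKernel X s)
      (uIcc σ κ ×ℂ uIcc (-T) T) := fun s hs => by
    rw [mem_reProdIm, uIcc_of_le hσκ, uIcc_of_le (by linarith)] at hs
    exact ((hG s hs.1.1 hs.1.2 (abs_le.2 hs.2)).mul
      (differentiableAt_rieszKernel hX0 (by linarith [hs.1.1]))).differentiableWithinAt
  have hleft : ‖∫ t in -T..T, G (σ + t * I) * rieszKernel X (σ + t * I)‖ ≤
      4 * (4 * B * X ^ σ) :=
    norm_intervalIntegral_le_of_norm_le_inv_one_add_sq (by positivity) (by linarith) fun t ht =>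
      hvert σ t B hσ (hB _ (by simp) (by simpa using hσκ) (by simpa using abs_le.2 ⟨ht.1.le, ht.2⟩))
  have hhor : ∀ T' : ℝ, |T'| = T → ‖∫ x in σ..κ, G (x + T' * I) * rieszKernel X (x + T' * I)‖ ≤
      4 * B * X ^ κ / T * 2 := fun T' hT' => by
    have hle := norm_integral_horizontal_mul_rieszKernel_le hσ hσκ hX (by rwa [hT'])
      (by rwa [hT'])
    rw [hT'] at hle
    refine hle.trans ?_
    gcongr
    linarith
  have hshift := norm_integral_vertical_le hdiff
  have htrunc := norm_integral_le_add_of_norm_le_inv_one_add_sq hint hright (by linarith : 0 < T)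
  calc _ ≤ 4 * (4 * B * X ^ σ) + 4 * B * X ^ κ / T * 2 + 4 * B * X ^ κ / T * 2 +
        2 * (4 * A * X ^ κ) / T := by linarith [hhor (-T) (by rwa [abs_neg]), hhor T hTabs]
    _ = 16 * B * X ^ σ + 16 * B * X ^ κ / T + 8 * A * X ^ κ / T := by ring

end ContourShift

section SmoothSum

open Complex MeasureTheory ArithmeticFunction

variable {q : ℕ} [NeZero q] {χ : DirichletCharacter ℂ q} {s : ℂ} {b B a ℓ κ X : ℝ}

lemma differentiableAt_neg_logDeriv_LFunction (hχ : χ ≠ 1) (hs : χ.LFunction s ≠ 0) :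
    DifferentiableAt ℂ (fun s => -logDeriv χ.LFunction s) s :=
  have hdiff := DirichletCharacter.differentiable_LFunction hχ
  ((hdiff.analyticAt s).deriv.differentiableAt.div (hdiff s) hs).neg

lemma sum_mul_vonMangoldt_mul_one_sub_div_eq_integral (hX : 0 < X) (hκ : 1 < κ) :
    ∑ n ∈ Finset.range (⌊X⌋₊ + 1), χ n * Λ n * ((1 - n / X : ℝ) : ℂ) =
      (1 / (2 * Real.pi) : ℂ) *
        ∫ t : ℝ, -logDeriv χ.LFunction (κ + t * I) * rieszKernel X (κ + t * I) := by
  have hriesz := sum_mul_one_sub_div_eq_integral (a := (fun n : ℕ => χ n) * fun n => (Λ n : ℂ))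
    (by simp) hX (by linarith)
    (DirichletCharacter.LSeriesSummable_twist_vonMangoldt χ (s := κ) (by simpa using hκ))
  have hlogDeriv : ∀ t : ℝ, LSeries ((fun n : ℕ => χ n) * fun n => (Λ n : ℂ)) (κ + t * I) =
      -logDeriv χ.LFunction (κ + t * I) :=
    fun t => LSeries_mul_vonMangoldt_eq_neg_logDeriv (by simpa using hκ)
  simp only [hlogDeriv, Pi.mul_apply] at hriesz
  exact hriesz

lemma norm_sum_mul_vonMangoldt_mul_one_sub_div_le (hχ : χ ≠ 1) (hX : 0 < X) (hb : 0 < b)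
    (hb1 : b ≤ 1) (hℓ : 32 ≤ ℓ) (hℓX : Real.log X = ℓ ^ 2)
    (hL : ∀ s : ℂ, 1 - b / ℓ ≤ s.re → s.re ≤ 1 + 1 / ℓ → |s.im| ≤ Real.exp ℓ - 1 →
      χ.LFunction s ≠ 0 ∧ ‖logDeriv χ.LFunction s‖ ≤ B * ℓ) :
    ‖∑ n ∈ Finset.range (⌊X⌋₊ + 1), χ n * Λ n * ((1 - n / X : ℝ) : ℂ)‖ ≤
      16 * (B * ℓ) * X ^ (1 - b / ℓ) + 16 * (B * ℓ) * X ^ (1 + 1 / ℓ ^ 2) / (Real.exp ℓ - 1) +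
        8 * (2001 * ℓ ^ 2) * X ^ (1 + 1 / ℓ ^ 2) / (Real.exp ℓ - 1) := by
  set κ : ℝ := 1 + 1 / ℓ ^ 2 with hκ
  have hℓ0 : 0 < ℓ := by linarith
  have hX1 : 1 ≤ X := (Real.log_nonneg_iff hX).1 (by rw [hℓX]; positivity)
  have hκ1 : 1 < κ := lt_add_of_pos_right 1 (one_div_pos.2 (pow_pos hℓ0 2))
  have hκℓ : κ ≤ 1 + 1 / ℓ := by
    rw [hκ]
    gcongr
    nlinarith
  have hbℓ : b / ℓ ≤ 1 / 32 := by gcongr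
  have hbℓ0 : 0 < b / ℓ := by positivity
  have hone : 1 / ℓ ≤ 1 / 32 := by gcongr
  have hexp := Real.add_one_le_exp ℓ
  have hright : ∀ t : ℝ, ‖-logDeriv χ.LFunction (κ + t * I)‖ ≤ 2001 * ℓ ^ 2 := fun t => by
    rw [norm_neg]
    exact norm_logDeriv_LFunction_le_of_re_eq (ℓ := ℓ ^ 2) (by nlinarith) (by rw [← hκ]; simp)
  have hcont : Continuous fun t : ℝ => -logDeriv χ.LFunction (κ + t * I) :=
    continuous_iff_continuousAt.2 fun t =>
      ContinuousAt.comp (f := fun t : ℝ => (κ : ℂ) + t * I)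
        (differentiableAt_neg_logDeriv_LFunction hχ
          (LFunction_ne_zero_of_one_le_re hχ (by simpa using hκ1.le))).continuousAt (by fun_prop)
  have hintegral := norm_integral_mul_rieszKernel_le (G := fun s => -logDeriv χ.LFunction s)
    (σ := 1 - b / ℓ) (T := Real.exp ℓ - 1) (by linarith) (by linarith) (by linarith) (by linarith)
    hX1
    (fun s hs hs' him => differentiableAt_neg_logDeriv_LFunction hχ (hL s hs (hs'.trans hκℓ) him).1)
    (fun s hs hs' him => by rw [norm_neg]; exact (hL s hs (hs'.trans hκℓ) him).2) hright hcont
  have hpi : ‖(1 / (2 * Real.pi) : ℂ)‖ ≤ 1 := by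
    rw [← ofReal_ofNat, ← ofReal_mul, norm_div, norm_one, norm_real,
      Real.norm_of_nonneg (by positivity), div_le_one (by positivity)]
    linarith [Real.pi_gt_three]
  rw [sum_mul_vonMangoldt_mul_one_sub_div_eq_integral hX hκ1, norm_mul]
  exact (mul_le_of_le_one_left (norm_nonneg _) hpi).trans hintegral

lemma sq_mul_exp_neg_le (ha : 0 < a) (hℓ : 0 ≤ ℓ) :
    ℓ ^ 2 * Real.exp (-a * ℓ) ≤ 8 / a ^ 2 * Real.exp (-(a / 2) * ℓ) := by
  have hsq : ℓ ^ 2 ≤ 8 / a ^ 2 * Real.exp (a / 2 * ℓ) := by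
    have hexp := Real.pow_div_factorial_le_exp (a / 2 * ℓ) (by positivity) 2
    rw [Nat.factorial_two, Nat.cast_ofNat] at hexp
    rw [div_mul_eq_mul_div, le_div_iff₀ (by positivity)]
    linarith
  calc ℓ ^ 2 * Real.exp (-a * ℓ) ≤ 8 / a ^ 2 * Real.exp (a / 2 * ℓ) * Real.exp (-a * ℓ) := by gcongr
    _ = 8 / a ^ 2 * Real.exp (-(a / 2) * ℓ) := by
        rw [mul_assoc, ← Real.exp_add]
        ring_nf

lemma norm_sum_mul_vonMangoldt_mul_one_sub_div_le_exp (hχ : χ ≠ 1) (hX : 0 < X) (hb : 0 < b)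
    (hb1 : b ≤ 1) (hB : 0 ≤ B) (hℓ : 32 ≤ ℓ) (hℓX : Real.log X = ℓ ^ 2)
    (hL : ∀ s : ℂ, 1 - b / ℓ ≤ s.re → s.re ≤ 1 + 1 / ℓ → |s.im| ≤ Real.exp ℓ - 1 →
      χ.LFunction s ≠ 0 ∧ ‖logDeriv χ.LFunction s‖ ≤ B * ℓ) :
    ‖∑ n ∈ Finset.range (⌊X⌋₊ + 1), χ n * Λ n * ((1 - n / X : ℝ) : ℂ)‖ ≤
      (112 * B + 96048) * (8 / b ^ 2) * X * Real.exp (-(b / 2) * ℓ) := by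
  have hℓ0 : 0 < ℓ := by linarith
  have hκ : X ^ (1 + 1 / ℓ ^ 2) ≤ 3 * X := by
    rw [Real.rpow_add hX, Real.rpow_one, Real.rpow_def_of_pos hX, hℓX,
      mul_one_div_cancel (by positivity)]
    nlinarith [Real.exp_one_lt_d9]
  have hσ : X ^ (1 - b / ℓ) = X * Real.exp (-b * ℓ) := by
    rw [sub_eq_add_neg, Real.rpow_add hX, Real.rpow_one, Real.rpow_def_of_pos hX, hℓX]
    congr 2
    field_simp
  have hexp := Real.add_one_le_exp ℓ
  have hT0 : 0 < Real.exp ℓ - 1 := by linarith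
  have hT : (Real.exp ℓ - 1)⁻¹ ≤ 2 * Real.exp (-b * ℓ) := by
    have hmono : Real.exp (-ℓ) ≤ Real.exp (-b * ℓ) := by
      gcongr
      nlinarith
    calc (Real.exp ℓ - 1)⁻¹ ≤ (Real.exp ℓ / 2)⁻¹ := by
          gcongr
          linarith
      _ = 2 * Real.exp (-ℓ) := by rw [inv_div, Real.exp_neg, div_eq_mul_inv]
      _ ≤ 2 * Real.exp (-b * ℓ) := by gcongr
  calc _ ≤ _ := norm_sum_mul_vonMangoldt_mul_one_sub_div_le hχ hX hb hb1 hℓ hℓX hL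
    _ = 16 * (B * ℓ) * (X * Real.exp (-b * ℓ)) +
        (16 * (B * ℓ) + 8 * (2001 * ℓ ^ 2)) * X ^ (1 + 1 / ℓ ^ 2) * (Real.exp ℓ - 1)⁻¹ := by
      rw [hσ]
      ring
    _ ≤ 16 * (B * ℓ) * (X * Real.exp (-b * ℓ)) +
        (16 * (B * ℓ) + 8 * (2001 * ℓ ^ 2)) * (3 * X) * (2 * Real.exp (-b * ℓ)) := by gcongr
    _ = (112 * (B * ℓ) + 96048 * ℓ ^ 2) * (X * Real.exp (-b * ℓ)) := by ring
    _ ≤ (112 * (B * ℓ ^ 2) + 96048 * ℓ ^ 2) * (X * Real.exp (-b * ℓ)) := by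
      gcongr
      nlinarith
    _ = (112 * B + 96048) * X * (ℓ ^ 2 * Real.exp (-b * ℓ)) := by ring
    _ ≤ (112 * B + 96048) * X * (8 / b ^ 2 * Real.exp (-(b / 2) * ℓ)) := by
      gcongr _ * ?_
      exact sq_mul_exp_neg_le hb hℓ0.le
    _ = _ := by ring

lemma exists_abs_sum_oddJacobiSym_mul_vonMangoldt_mul_one_sub_div_le (k : ℕ) :
    ∃ c > 0, c ≤ 1 ∧ ∃ C > 0, ∃ X₀ : ℝ, 3 ≤ X₀ ∧
      ∀ D : ℤ, Squarefree D → D ≠ 1 → ∀ X : ℝ, X₀ ≤ X → (D.natAbs : ℝ) ≤ Real.log X ^ k →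
        |∑ n ∈ Finset.range (⌊X⌋₊ + 1), oddJacobiSym D n * Λ n * (1 - n / X)| ≤
          C * X * Real.exp (-c * √(Real.log X)) := by
  obtain ⟨b, hb, hb1, B, hB, ℓ₀, hℓ₀, hL⟩ := exists_norm_logDeriv_LFunction_jacobiChar_le (2 * k)
  refine ⟨b / 2, by positivity, by linarith, (112 * B + 96048) * (8 / b ^ 2), by positivity,
    Real.exp (ℓ₀ ^ 2), ?_, fun D hD hD1 X hX hDX => ?_⟩
  · nlinarith [Real.add_one_le_exp (ℓ₀ ^ 2)]
  have : NeZero D := ⟨hD.ne_zero⟩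
  have hX0 : 0 < X := (Real.exp_pos _).trans_le hX
  have hlog : ℓ₀ ^ 2 ≤ Real.log X := (Real.le_log_iff_exp_le hX0).2 hX
  have hℓsq : √(Real.log X) ^ 2 = Real.log X := Real.sq_sqrt ((sq_nonneg _).trans hlog)
  have hℓ : ℓ₀ ≤ √(Real.log X) := Real.le_sqrt_of_sq_le hlog
  have hDℓ : (D.natAbs : ℝ) ≤ √(Real.log X) ^ (2 * k) := by rwa [pow_mul, hℓsq]
  have hbound := norm_sum_mul_vonMangoldt_mul_one_sub_div_le_exp
    (jacobiChar_ne_one (not_isSquare_of_squarefree hD hD1)) hX0 hb hb1 hB.le (hℓ₀.trans hℓ)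
    hℓsq.symm (hL D hD hD1 _ hℓ hDℓ)
  rw [← Real.norm_eq_abs, ← norm_real]
  convert hbound using 2
  push_cast
  simp only [jacobiChar_natCast]

end SmoothSum

section Desmoothing

open ArithmeticFunction

variable {a : ℕ → ℝ} {X h Q : ℝ}

lemma mul_sum_mul_one_sub_div (hX : X ≠ 0) (s : Finset ℕ) :
    X * ∑ n ∈ s, a n * (1 - n / X) = ∑ n ∈ s, a n * (X - n) := by
  rw [Finset.mul_sum]
  refine Finset.sum_congr rfl fun n _ => ?_
  field_simp

lemma mul_sum_eq_sub_sub_sum_Ico (hX : 0 < X) (hh : 0 < h) :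
    h * ∑ n ∈ Finset.range (⌊X⌋₊ + 1), a n =
      (X + h) * ∑ n ∈ Finset.range (⌊X + h⌋₊ + 1), a n * (1 - n / (X + h)) -
        X * ∑ n ∈ Finset.range (⌊X⌋₊ + 1), a n * (1 - n / X) -
        ∑ n ∈ Finset.Ico (⌊X⌋₊ + 1) (⌊X + h⌋₊ + 1), a n * (X + h - n) := by
  have hle : ⌊X⌋₊ + 1 ≤ ⌊X + h⌋₊ + 1 := by
    gcongr
    linarith
  rw [mul_sum_mul_one_sub_div (by positivity), mul_sum_mul_one_sub_div hX.ne',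
    Finset.sum_Ico_eq_sub _ hle, sub_right_comm, sub_sub_cancel, ← Finset.sum_sub_distrib,
    Finset.mul_sum]
  exact Finset.sum_congr rfl fun n _ => by ring

lemma abs_sum_Ico_mul_sub_le (ha : ∀ n, |a n| ≤ Λ n) (hX : 2 ≤ X) (hh : 0 < h) (hhX : h ≤ X) :
    |∑ n ∈ Finset.Ico (⌊X⌋₊ + 1) (⌊X + h⌋₊ + 1), a n * (X + h - n)| ≤
      h * ((h + 1) * (2 * Real.log X)) := by
  have hXh : 0 < X + h := by linarith
  have hlogX : 0 ≤ Real.log X := Real.log_nonneg (by linarith)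
  have hle : ⌊X⌋₊ + 1 ≤ ⌊X + h⌋₊ + 1 := by
    gcongr
    linarith
  have hlog : Real.log (X + h) ≤ 2 * Real.log X := by
    rw [← Nat.cast_ofNat, ← Real.log_pow]
    exact Real.log_le_log hXh (by nlinarith)
  have hterm : ∀ n ∈ Finset.Ico (⌊X⌋₊ + 1) (⌊X + h⌋₊ + 1),
      |a n * (X + h - n)| ≤ 2 * Real.log X * h := fun n hn => by
    rw [Finset.mem_Ico, Nat.succ_le_iff, Nat.floor_lt (by linarith), Nat.lt_succ_iff,
      Nat.le_floor_iff hXh.le] at hn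
    have han : |a n| ≤ 2 * Real.log X := calc
      |a n| ≤ Real.log n := (ha n).trans vonMangoldt_le_log
      _ ≤ Real.log (X + h) := Real.log_le_log (by linarith [hn.1]) hn.2
      _ ≤ 2 * Real.log X := hlog
    rw [abs_mul, abs_of_nonneg (sub_nonneg.2 hn.2)]
    exact mul_le_mul han (by linarith [hn.1]) (sub_nonneg.2 hn.2) (by positivity)
  calc _ ≤ ∑ n ∈ Finset.Ico (⌊X⌋₊ + 1) (⌊X + h⌋₊ + 1), 2 * Real.log X * h :=
        (Finset.abs_sum_le_sum_abs _ _).trans (Finset.sum_le_sum hterm)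
    _ = ((⌊X + h⌋₊ : ℝ) - ⌊X⌋₊) * (2 * Real.log X * h) := by
        rw [Finset.sum_const, Nat.card_Ico, nsmul_eq_mul, Nat.cast_sub hle]
        push_cast
        ring
    _ ≤ (h + 1) * (2 * Real.log X * h) := by
        gcongr
        linarith [Nat.floor_le hXh.le, Nat.lt_floor_add_one X]
    _ = h * ((h + 1) * (2 * Real.log X)) := by ring

lemma abs_sum_le_of_abs_sum_mul_one_sub_div_le (ha : ∀ n, |a n| ≤ Λ n) (hX : 2 ≤ X) (hh : 0 < h)
    (hhX : h ≤ X)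
    (hQ : |∑ n ∈ Finset.range (⌊X⌋₊ + 1), a n * (1 - n / X)| ≤ Q)
    (hQh : |∑ n ∈ Finset.range (⌊X + h⌋₊ + 1), a n * (1 - n / (X + h))| ≤ Q) :
    |∑ n ∈ Finset.range (⌊X⌋₊ + 1), a n| ≤ 3 * X * Q / h + (h + 1) * (2 * Real.log X) := by
  have hX0 : 0 < X := by linarith
  have hQ0 : 0 ≤ Q := (abs_nonneg _).trans hQ
  refine le_of_mul_le_mul_left ?_ hh
  calc h * |∑ n ∈ Finset.range (⌊X⌋₊ + 1), a n|
      = |h * ∑ n ∈ Finset.range (⌊X⌋₊ + 1), a n| := by rw [abs_mul, abs_of_pos hh]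
    _ ≤ (X + h) * Q + X * Q + h * ((h + 1) * (2 * Real.log X)) := by
        rw [mul_sum_eq_sub_sub_sum_Ico hX0 hh]
        refine (abs_sub _ _).trans (add_le_add ((abs_sub _ _).trans (add_le_add ?_ ?_))
          (abs_sum_Ico_mul_sub_le ha hX hh hhX))
        · rw [abs_mul, abs_of_pos (by positivity)]
          gcongr
        · rw [abs_mul, abs_of_pos hX0]
          gcongr
    _ ≤ 2 * X * Q + X * Q + h * ((h + 1) * (2 * Real.log X)) := by
        gcongr
        linarith
    _ = h * (3 * X * Q / h + (h + 1) * (2 * Real.log X)) := by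
        field_simp
        ring

lemma one_le_mul_exp_neg {c ℓ : ℝ} (hX : 0 < X) (hℓ : 1 ≤ ℓ) (hℓX : Real.log X = ℓ ^ 2)
    (hc : c ≤ 1) : 1 ≤ X * Real.exp (-c * ℓ) := by
  rw [← Real.exp_log hX, ← Real.exp_add, Real.one_le_exp_iff, hℓX]
  nlinarith

lemma abs_sum_le_of_abs_sum_mul_one_sub_div_le_exp {c C : ℝ} (ha : ∀ n, |a n| ≤ Λ n)
    (hc : 0 < c) (hc1 : c ≤ 1) (hC : 0 ≤ C) (hX : 3 ≤ X)
    (hsmooth : ∀ Y : ℝ, X ≤ Y → |∑ n ∈ Finset.range (⌊Y⌋₊ + 1), a n * (1 - n / Y)| ≤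
      C * Y * Real.exp (-c * √(Real.log Y))) :
    |∑ n ∈ Finset.range (⌊X⌋₊ + 1), a n| ≤
      (6 * C + 128 / c ^ 2) * X * Real.exp (-(c / 4) * √(Real.log X)) := by
  have hX0 : 0 < X := by linarith
  have hlog : 1 ≤ Real.log X :=
    (Real.le_log_iff_exp_le hX0).2 (by linarith [Real.exp_one_lt_d9])
  set ℓ := √(Real.log X)
  have hℓX : Real.log X = ℓ ^ 2 := (Real.sq_sqrt (by linarith)).symm
  have hℓ : 1 ≤ ℓ := Real.one_le_sqrt.2 hlog
  set h := X * Real.exp (-(c / 2) * ℓ) with hh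
  have hh1 : 1 ≤ h := one_le_mul_exp_neg hX0 hℓ hℓX (by linarith)
  have hhX : h ≤ X := mul_le_of_le_one_right hX0.le (Real.exp_le_one_iff.2 (by nlinarith))
  have hQ : ∀ Y : ℝ, X ≤ Y → Y ≤ 2 * X →
      |∑ n ∈ Finset.range (⌊Y⌋₊ + 1), a n * (1 - n / Y)| ≤ C * (2 * X) * Real.exp (-c * ℓ) :=
    fun Y hXY hY => by
      refine (hsmooth Y hXY).trans ?_
      have hsqrt : ℓ ≤ √(Real.log Y) := Real.sqrt_le_sqrt (Real.log_le_log hX0 hXY)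
      rw [neg_mul, neg_mul]
      gcongr
  calc _ ≤ 3 * X * (C * (2 * X) * Real.exp (-c * ℓ)) / h + (h + 1) * (2 * Real.log X) :=
        abs_sum_le_of_abs_sum_mul_one_sub_div_le ha (by linarith) (by linarith) hhX
          (hQ X le_rfl (by linarith)) (hQ (X + h) (by linarith) (by linarith))
    _ = 6 * C * X * Real.exp (-(c / 2) * ℓ) + (h + 1) * (2 * ℓ ^ 2) := by
        rw [hℓX, hh, show -c * ℓ = -(c / 2) * ℓ + -(c / 2) * ℓ by ring, Real.exp_add]
        field_simp
        ring
    _ ≤ 6 * C * X * Real.exp (-(c / 2) * ℓ) + (h + h) * (2 * ℓ ^ 2) := by gcongr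
    _ = 6 * C * X * Real.exp (-(c / 2) * ℓ) + 4 * X * (ℓ ^ 2 * Real.exp (-(c / 2) * ℓ)) := by
        rw [hh]
        ring
    _ ≤ 6 * C * X * Real.exp (-(c / 4) * ℓ) +
          4 * X * (32 / c ^ 2 * Real.exp (-(c / 4) * ℓ)) := by
        gcongr 6 * C * X * Real.exp (?_ * ℓ) + 4 * X * ?_
        · linarith
        · refine (sq_mul_exp_neg_le (by positivity) (by linarith)).trans_eq ?_
          ring_nf
    _ = (6 * C + 128 / c ^ 2) * X * Real.exp (-(c / 4) * ℓ) := by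
        ring

lemma abs_oddJacobiSym_le_one (D : ℤ) (n : ℕ) : |(oddJacobiSym D n : ℝ)| ≤ 1 := by
  obtain h | h | h := oddJacobiSym_trichotomy D n <;> simp [h]

lemma abs_oddJacobiSym_mul_vonMangoldt_le (D : ℤ) (n : ℕ) : |oddJacobiSym D n * Λ n| ≤ Λ n := by
  rw [abs_mul, abs_of_nonneg vonMangoldt_nonneg]
  exact mul_le_of_le_one_left vonMangoldt_nonneg (abs_oddJacobiSym_le_one D n)

lemma exists_abs_sum_oddJacobiSym_mul_vonMangoldt_le (k : ℕ) :
    ∃ c > 0, c ≤ 1 ∧ ∃ C > 0, ∃ X₀ : ℝ, 3 ≤ X₀ ∧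
      ∀ D : ℤ, Squarefree D → D ≠ 1 → ∀ X : ℝ, X₀ ≤ X → (D.natAbs : ℝ) ≤ Real.log X ^ k →
        |∑ n ∈ Finset.range (⌊X⌋₊ + 1), oddJacobiSym D n * Λ n| ≤
          C * X * Real.exp (-c * √(Real.log X)) := by
  obtain ⟨c, hc, hc1, C, hC, X₀, hX₀, hsmooth⟩ :=
    exists_abs_sum_oddJacobiSym_mul_vonMangoldt_mul_one_sub_div_le k
  refine ⟨c / 4, by positivity, by linarith, 6 * C + 128 / c ^ 2, by positivity, X₀, hX₀,
    fun D hD hD1 X hX hDX => ?_⟩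
  have hX1 : 1 ≤ X := by linarith
  refine abs_sum_le_of_abs_sum_mul_one_sub_div_le_exp (abs_oddJacobiSym_mul_vonMangoldt_le D) hc
    hc1 hC.le (hX₀.trans hX) fun Y hY => hsmooth D hD hD1 Y (hX.trans hY) (hDX.trans ?_)
  have := Real.log_nonneg hX1
  gcongr

end Desmoothing

section PrimeSums

open ArithmeticFunction

open Nat (primesLE)

variable {X : ℝ}

lemma one_le_sqrt_log (hX : 3 ≤ X) : 1 ≤ √(Real.log X) :=
  Real.one_le_sqrt.2 <| (Real.le_log_iff_exp_le (by linarith)).2 (by linarith [Real.exp_one_lt_d9])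

lemma sq_sqrt_log (hX : 1 ≤ X) : √(Real.log X) ^ 2 = Real.log X :=
  Real.sq_sqrt (Real.log_nonneg hX)

lemma sqrt_le_mul_exp_neg_sqrt_log (hX : 3 ≤ X) :
    √X ≤ X * Real.exp (-(1 / 2) * √(Real.log X)) := by
  have hX0 : 0 < X := by linarith
  have hℓ := one_le_sqrt_log hX
  have hℓX := sq_sqrt_log (by linarith : 1 ≤ X)
  calc √X = Real.exp (√(Real.log X) ^ 2 / 2) := by rw [hℓX, Real.exp_half, Real.exp_log hX0]
    _ ≤ Real.exp (√(Real.log X) ^ 2 + -(1 / 2) * √(Real.log X)) := by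
        gcongr
        nlinarith
    _ = X * Real.exp (-(1 / 2) * √(Real.log X)) := by rw [Real.exp_add, hℓX, Real.exp_log hX0]

lemma abs_sum_primesLE_oddJacobiSym_mul_log_le (D : ℤ) (hX : 0 ≤ X) :
    |∑ p ∈ primesLE ⌊X⌋₊, oddJacobiSym D p * Real.log p| ≤ 2 * X := by
  have hlog : Real.log 4 ≤ 2 := by
    rw [show (4 : ℝ) = 2 ^ 2 by norm_num, Real.log_pow, Nat.cast_ofNat]
    linarith [Real.log_two_lt_d9]
  have hterm : ∀ p : ℕ, |oddJacobiSym D p * Real.log p| ≤ Real.log p := fun p => by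
    rw [abs_mul, abs_of_nonneg (Real.log_natCast_nonneg p)]
    exact mul_le_of_le_one_left (Real.log_natCast_nonneg p) (abs_oddJacobiSym_le_one D p)
  calc _ ≤ ∑ p ∈ primesLE ⌊X⌋₊, Real.log p :=
        (Finset.abs_sum_le_sum_abs _ _).trans (Finset.sum_le_sum fun p _ => hterm p)
    _ = Chebyshev.theta X := (Chebyshev.theta_eq_sum_primesLE X).symm
    _ ≤ Real.log 4 * X := Chebyshev.theta_le_log4_mul_x hX
    _ ≤ 2 * X := by gcongr

lemma abs_sum_vonMangoldt_sub_sum_primesLE_le (D : ℤ) (hX : 1 ≤ X) :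
    |∑ n ∈ Finset.range (⌊X⌋₊ + 1), oddJacobiSym D n * Λ n -
        ∑ p ∈ primesLE ⌊X⌋₊, oddJacobiSym D p * Real.log p| ≤ 2 * √X * Real.log X := by
  have hterm : ∀ n : ℕ, |oddJacobiSym D n * Λ n -
      if n.Prime then oddJacobiSym D n * Real.log n else 0| ≤
        Λ n - if n.Prime then Real.log n else 0 := fun n => by
    split_ifs with hn
    · simp [vonMangoldt_apply_prime hn]
    · simpa only [sub_zero] using abs_oddJacobiSym_mul_vonMangoldt_le D n
  calc _ ≤ ∑ n ∈ Finset.range (⌊X⌋₊ + 1), (Λ n - if n.Prime then Real.log n else 0) := by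
        rw [Nat.primesLE_eq_filter_range, Finset.sum_filter, ← Finset.sum_sub_distrib]
        exact (Finset.abs_sum_le_sum_abs _ _).trans (Finset.sum_le_sum fun n _ => hterm n)
    _ = Chebyshev.psi X - Chebyshev.theta X := by
        rw [Finset.sum_sub_distrib, ← Finset.sum_filter, Chebyshev.psi_eq_sum_Icc,
          Chebyshev.theta_eq_sum_Icc, Nat.range_succ_eq_Icc_zero]
    _ ≤ 2 * √X * Real.log X := Chebyshev.psi_sub_theta_le hX

lemma exists_abs_sum_primesLE_oddJacobiSym_mul_log_le (k : ℕ) :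
    ∃ c > 0, c ≤ 1 ∧ ∃ C > 0, ∃ X₀ : ℝ, 3 ≤ X₀ ∧
      ∀ D : ℤ, Squarefree D → D ≠ 1 → ∀ X : ℝ, X₀ ≤ X → (D.natAbs : ℝ) ≤ Real.log X ^ k →
        |∑ p ∈ primesLE ⌊X⌋₊, oddJacobiSym D p * Real.log p| ≤
          C * X * Real.exp (-c * √(Real.log X)) := by
  obtain ⟨c, hc, hc1, C, hC, X₀, hX₀, hpsi⟩ := exists_abs_sum_oddJacobiSym_mul_vonMangoldt_le k
  refine ⟨c / 4, by positivity, by linarith, C + 64, by positivity, X₀, hX₀,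
    fun D hD hD1 X hX hDX => ?_⟩
  have hX3 : 3 ≤ X := hX₀.trans hX
  have hℓ := one_le_sqrt_log hX3
  have hℓX := sq_sqrt_log (by linarith : 1 ≤ X)
  set ℓ := √(Real.log X)
  have hpowers : 2 * √X * Real.log X ≤ 64 * X * Real.exp (-(c / 4) * ℓ) := calc
    2 * √X * Real.log X ≤ 2 * (X * Real.exp (-(1 / 2) * ℓ)) * ℓ ^ 2 := by
        rw [hℓX]
        have := sqrt_le_mul_exp_neg_sqrt_log hX3
        have := hℓX ▸ sq_nonneg ℓ
        gcongr
    _ = 2 * X * (ℓ ^ 2 * Real.exp (-(1 / 2) * ℓ)) := by ring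
    _ ≤ 2 * X * (8 / (1 / 2) ^ 2 * Real.exp (-(1 / 2 / 2) * ℓ)) := by
        gcongr 2 * X * ?_
        exact sq_mul_exp_neg_le (by norm_num) (by linarith)
    _ ≤ 2 * X * (8 / (1 / 2) ^ 2 * Real.exp (-(c / 4) * ℓ)) := by
        gcongr 2 * X * (8 / (1 / 2) ^ 2 * Real.exp (?_ * ℓ))
        linarith
    _ = 64 * X * Real.exp (-(c / 4) * ℓ) := by ring
  have hmain : C * X * Real.exp (-c * ℓ) ≤ C * X * Real.exp (-(c / 4) * ℓ) := by
    gcongr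
    linarith
  have htri := abs_sub_le (∑ p ∈ primesLE ⌊X⌋₊, oddJacobiSym D p * Real.log p)
    (∑ n ∈ Finset.range (⌊X⌋₊ + 1), oddJacobiSym D n * Λ n) 0
  rw [sub_zero, sub_zero, abs_sub_comm] at htri
  linarith [abs_sum_vonMangoldt_sub_sum_primesLE_le D (by linarith : 1 ≤ X), hpsi D hD hD1 X hX hDX]

lemma exists_forall_le_abs_sum_primesLE_oddJacobiSym_mul_log_le (k : ℕ) :
    ∃ c > 0, c ≤ 1 ∧ ∃ C > 0, ∃ X₀ : ℝ, 3 ≤ X₀ ∧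
      ∀ D : ℤ, Squarefree D → D ≠ 1 → ∀ X : ℝ, X₀ ≤ X → (D.natAbs : ℝ) ≤ Real.log X ^ k →
        ∀ u : ℝ, 0 ≤ u → u ≤ X →
          |∑ p ∈ primesLE ⌊u⌋₊, oddJacobiSym D p * Real.log p| ≤
            C * X * Real.exp (-c * √(Real.log X)) := by
  obtain ⟨c, hc, hc1, C, hC, X₀, _, htheta⟩ :=
    exists_abs_sum_primesLE_oddJacobiSym_mul_log_le (2 * k)
  refine ⟨c / 2, by positivity, by linarith, C + 2, by positivity, max (X₀ ^ 2) 81,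
    le_max_of_le_right (by norm_num), fun D hD hD1 X hX hDX u hu0 huX => ?_⟩
  obtain ⟨hXX₀, hX81⟩ := max_le_iff.1 hX
  have hX0 : 0 < X := by linarith
  have hℓX := sq_sqrt_log (by linarith : 1 ≤ X)
  set ℓ := √(Real.log X)
  obtain h | h := le_total √X u
  · have hlogu : Real.log X / 2 ≤ Real.log u := by
      rw [← Real.log_sqrt hX0.le]
      exact Real.log_le_log (by positivity) h
    have hlogX : 4 ≤ Real.log X := by
      rw [Real.le_log_iff_exp_le hX0, show (4 : ℝ) = (4 : ℕ) * 1 by norm_num, Real.exp_nat_mul]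
      calc Real.exp 1 ^ 4 ≤ 3 ^ 4 := by
            gcongr
            linarith [Real.exp_one_lt_d9]
        _ ≤ X := by linarith
    have hDu : (D.natAbs : ℝ) ≤ Real.log u ^ (2 * k) := by
      rw [pow_mul]
      refine hDX.trans ?_
      gcongr
      nlinarith
    have hsqrt : ℓ / 2 ≤ √(Real.log u) := Real.le_sqrt_of_sq_le (by linarith)
    calc _ ≤ C * u * Real.exp (-c * √(Real.log u)) :=
          htheta D hD hD1 u ((Real.le_sqrt_of_sq_le hXX₀).trans h) hDu
      _ ≤ (C + 2) * X * Real.exp (-(c / 2) * ℓ) := by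
          gcongr ?_ * ?_ * Real.exp ?_
          · linarith
          · nlinarith
  · calc _ ≤ 2 * u := abs_sum_primesLE_oddJacobiSym_mul_log_le D hu0
      _ ≤ 2 * (X * Real.exp (-(1 / 2) * ℓ)) := by
          gcongr
          exact h.trans (sqrt_le_mul_exp_neg_sqrt_log (by linarith))
      _ = 2 * X * Real.exp (-(1 / 2) * ℓ) := by ring
      _ ≤ (C + 2) * X * Real.exp (-(c / 2) * ℓ) := by
          gcongr
          linarith

lemma abs_sum_range_mul_le_of_antitone {w b : ℕ → ℝ} {M : ℝ} {N : ℕ} (hw : Antitone w)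
    (hw0 : ∀ n, 0 ≤ w n) (hM : ∀ m ≤ N, |∑ i ∈ Finset.range m, b i| ≤ M) :
    |∑ i ∈ Finset.range N, w i * b i| ≤ w 0 * M := by
  have hterm : ∀ i ∈ Finset.range (N - 1),
      |(w (i + 1) - w i) * ∑ j ∈ Finset.range (i + 1), b j| ≤ (w i - w (i + 1)) * M := by
    intro i hi
    have hi' := Finset.mem_range.1 hi
    rw [abs_mul, abs_sub_comm, abs_of_nonneg (sub_nonneg.2 (hw i.le_succ))]
    exact mul_le_mul_of_nonneg_left (hM _ (by omega)) (sub_nonneg.2 (hw i.le_succ))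
  have hparts := Finset.sum_range_by_parts w b N
  simp only [smul_eq_mul] at hparts
  calc _ ≤ |w (N - 1) * ∑ i ∈ Finset.range N, b i| +
        |∑ i ∈ Finset.range (N - 1), (w (i + 1) - w i) * ∑ j ∈ Finset.range (i + 1), b j| := by
        rw [hparts]
        exact abs_sub _ _
    _ ≤ w (N - 1) * M + ∑ i ∈ Finset.range (N - 1), (w i - w (i + 1)) * M := by
        gcongr
        · rw [abs_mul, abs_of_nonneg (hw0 _)]
          exact mul_le_mul_of_nonneg_left (hM N le_rfl) (hw0 _)
        · exact (Finset.abs_sum_le_sum_abs _ _).trans (Finset.sum_le_sum hterm)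
    _ = w 0 * M := by
        rw [← Finset.sum_mul, Finset.sum_range_sub']
        ring

lemma antitone_inv_log_max_two : Antitone fun n : ℕ => (Real.log (max n 2 : ℕ))⁻¹ := by
  intro m n hmn
  have hpos : 0 < Real.log (max m 2 : ℕ) :=
    Real.log_pos (by exact_mod_cast lt_max_of_lt_right one_lt_two)
  have hm : (0 : ℝ) < (max m 2 : ℕ) := by positivity
  exact inv_anti₀ hpos (Real.log_le_log hm (by exact_mod_cast max_le_max_right 2 hmn))

lemma exists_abs_sum_primesLE_oddJacobiSym_le (k : ℕ) :
    ∃ c > 0, c ≤ 1 ∧ ∃ C > 0, ∃ X₀ : ℝ, 3 ≤ X₀ ∧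
      ∀ D : ℤ, Squarefree D → D ≠ 1 → ∀ X : ℝ, X₀ ≤ X → (D.natAbs : ℝ) ≤ Real.log X ^ k →
        |∑ p ∈ primesLE ⌊X⌋₊, (oddJacobiSym D p : ℝ)| ≤
          C * X * Real.exp (-c * √(Real.log X)) := by
  obtain ⟨c, hc, hc1, C, hC, X₀, hX₀, htheta⟩ :=
    exists_forall_le_abs_sum_primesLE_oddJacobiSym_mul_log_le k
  refine ⟨c, hc, hc1, 2 * C, by positivity, X₀, hX₀, fun D hD hD1 X hX hDX => ?_⟩
  have hX0 : 0 < X := by linarith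
  set b : ℕ → ℝ := fun n => if n.Prime then oddJacobiSym D n * Real.log n else 0
  have hpartial : ∀ m ≤ ⌊X⌋₊ + 1,
      |∑ n ∈ Finset.range m, b n| ≤ C * X * Real.exp (-c * √(Real.log X)) := fun m hm => by
    obtain _ | m := m
    · rw [Finset.sum_range_zero, abs_zero]
      positivity
    · have hmX : (m : ℝ) ≤ X := (Nat.le_floor_iff hX0.le).1 (by omega)
      simpa only [b, ← Finset.sum_filter, ← Nat.primesLE_eq_filter_range, Nat.floor_natCast] using
        htheta D hD hD1 X hX hDX m m.cast_nonneg hmX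
  have hweight : ∑ p ∈ primesLE ⌊X⌋₊, (oddJacobiSym D p : ℝ) =
      ∑ n ∈ Finset.range (⌊X⌋₊ + 1), (Real.log (max n 2 : ℕ))⁻¹ * b n := by
    rw [Nat.primesLE_eq_filter_range, Finset.sum_filter]
    refine Finset.sum_congr rfl fun p _ => ?_
    simp only [b]
    split_ifs with hp
    · have hlog : Real.log p ≠ 0 := (Real.log_pos (by exact_mod_cast hp.one_lt)).ne'
      rw [max_eq_left hp.two_le]
      field_simp
    · rw [mul_zero]
  have hlog2 : (Real.log 2)⁻¹ ≤ 2 :=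
    inv_le_of_inv_le₀ (by norm_num) (by linarith [Real.log_two_gt_d9])
  rw [hweight]
  calc _ ≤ (Real.log (max 0 2 : ℕ))⁻¹ * (C * X * Real.exp (-c * √(Real.log X))) :=
        abs_sum_range_mul_le_of_antitone antitone_inv_log_max_two
          (fun n => inv_nonneg.2 (Real.log_natCast_nonneg _)) hpartial
    _ ≤ 2 * (C * X * Real.exp (-c * √(Real.log X))) := by
        gcongr
        simpa using hlog2
    _ = 2 * C * X * Real.exp (-c * √(Real.log X)) := by ring

end PrimeSums

section LegendreSymbols

variable {a b n p : ℕ}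

lemma isSquare_sq_mul_iff_of_squarefree (ha : Squarefree a) (hb : b ≠ 0) :
    IsSquare (b ^ 2 * a) ↔ a = 1 := by
  constructor
  · rintro ⟨m, hm⟩
    obtain ⟨t, rfl⟩ : b ∣ m := (Nat.pow_dvd_pow_iff two_ne_zero).1 ⟨a, by rw [hm, sq]⟩
    obtain rfl : a = t * t := Nat.eq_of_mul_eq_mul_left (pow_pos (Nat.pos_of_ne_zero hb) 2) <| by
      rw [hm]
      ring
    rw [Nat.isUnit_iff.1 (ha t dvd_rfl)]
  · rintro rfl
    exact ⟨b, by ring⟩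

lemma abs_legendreSym'_le_one (p : ℕ) (n : ℤ) : |(legendreSym' p n : ℝ)| ≤ 1 := by
  unfold legendreSym'
  split_ifs with hp
  · have : Fact p.Prime := ⟨hp⟩
    rw [jacobiSym.legendreSym.to_jacobiSym]
    obtain h | h | h := jacobiSym.trichotomy n p <;> norm_num [h]
  · norm_num

lemma legendreSym'_eq_oddJacobiSym (hp : p.Prime) (hodd : Odd p) (n : ℤ) :
    legendreSym' p n = oddJacobiSym n p := by
  have : Fact p.Prime := ⟨hp⟩
  rw [legendreSym', dif_pos hp, jacobiSym.legendreSym.to_jacobiSym, oddJacobiSym_of_odd hodd]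

lemma oddJacobiSym_sq_mul (D : ℤ) (hb : b.Coprime n) :
    oddJacobiSym (b ^ 2 * D) n = oddJacobiSym D n := by
  unfold oddJacobiSym
  split_ifs
  · rw [jacobiSym.mul_left, jacobiSym.sq_one' (by simpa using hb), one_mul]
  · rfl

lemma abs_oddJacobiSym_sq_mul_sub_le (D : ℤ) (hp : p.Prime) :
    |(oddJacobiSym (b ^ 2 * D) p - oddJacobiSym D p : ℝ)| ≤ if p ∣ b then 1 else 0 := by
  split_ifs with hpb
  · have hzero : oddJacobiSym (b ^ 2 * D) p = 0 := by
      unfold oddJacobiSym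
      split_ifs
      · refine jacobiSym.eq_zero_iff.2 ⟨hp.ne_zero, fun h => hp.one_lt.ne' ?_⟩
        have hpD : (p : ℤ) ∣ b ^ 2 * D :=
          ((Int.natCast_dvd_natCast.2 hpb).pow two_ne_zero).mul_right D
        rwa [Int.gcd_eq_natAbs_right hpD, Int.natAbs_natCast] at h
      · rfl
    simpa [hzero] using abs_oddJacobiSym_le_one D p
  · rw [oddJacobiSym_sq_mul D ((hp.coprime_iff_not_dvd.2 hpb).symm), sub_self, abs_zero]

lemma card_filter_dvd_le (hb : b ≠ 0) (S : Finset ℕ) : (S.filter (· ∣ b)).card ≤ b :=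
  calc (S.filter (· ∣ b)).card ≤ b.divisors.card :=
        Finset.card_le_card fun _ hd => Nat.mem_divisors.2 ⟨(Finset.mem_filter.1 hd).2, hb⟩
    _ ≤ b := Nat.card_divisors_le_self b

lemma abs_sum_legendreSym'_sub_sum_oddJacobiSym_le (hb : b ≠ 0) (D : ℤ) {S : Finset ℕ}
    (hS : ∀ p ∈ S, p.Prime ∧ Odd p) :
    |∑ p ∈ S, (legendreSym' p (b ^ 2 * D) : ℝ) - ∑ p ∈ S, (oddJacobiSym D p : ℝ)| ≤ b :=
  calc _ ≤ ∑ p ∈ S, if p ∣ b then (1 : ℝ) else 0 := by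
        rw [← Finset.sum_sub_distrib]
        refine (Finset.abs_sum_le_sum_abs _ _).trans (Finset.sum_le_sum fun p hp => ?_)
        rw [legendreSym'_eq_oddJacobiSym (hS p hp).1 (hS p hp).2]
        exact abs_oddJacobiSym_sq_mul_sub_le D (hS p hp).1
    _ = (S.filter (· ∣ b)).card := by rw [← Finset.sum_filter, Finset.sum_const, nsmul_one]
    _ ≤ b := by exact_mod_cast card_filter_dvd_le hb S

end LegendreSymbols

section ResidueClasses

open Nat (primesLE)

variable {ε N : ℕ} {B : ℝ}

/-- The set of primes `p ≤ N` with `p % 4 = ε`, so that `π(x;4,ε)` is the cardinality of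
`primesModFour ε ⌊x⌋₊`. -/
def primesModFour (ε N : ℕ) : Finset ℕ :=
  (Finset.range (N + 1)).filter fun p => p.Prime ∧ p % 4 = ε

lemma prime_and_odd_of_mem_primesModFour (hε : ε = 1 ∨ ε = 3) :
    ∀ p ∈ primesModFour ε N, p.Prime ∧ Odd p := fun p hp => by
  obtain ⟨_, hprime, hmod⟩ := Finset.mem_filter.1 hp
  exact ⟨hprime, Nat.odd_iff.2 (by omega)⟩

lemma two_mul_ite_oddJacobiSym (hε : ε = 1 ∨ ε = 3) (D : ℤ) (n : ℕ) :
    2 * (if n % 4 = ε then oddJacobiSym D n else 0) =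
      oddJacobiSym D n + ZMod.χ₄ ε * oddJacobiSym (-D) n := by
  obtain hn | hn := n.even_or_odd
  · have hzero : ∀ D, oddJacobiSym D n = 0 := fun D => if_neg (Nat.not_odd_iff_even.2 hn)
    simp [hzero]
  · have hneg : oddJacobiSym (-D) n = ZMod.χ₄ n * oddJacobiSym D n := by
      rw [oddJacobiSym_of_odd hn, oddJacobiSym_of_odd hn, jacobiSym.neg D hn]
    have hn4 : n % 4 = 1 ∨ n % 4 = 3 := by
      have := Nat.odd_iff.1 hn
      omega
    have hχ : ZMod.χ₄ ε * ZMod.χ₄ n = if n % 4 = ε then 1 else -1 := by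
      rw [ZMod.χ₄_nat_mod_four n]
      obtain rfl | rfl := hε <;> obtain h | h := hn4 <;> rw [h] <;> rfl
    rw [hneg, ← mul_assoc, hχ]
    split_ifs <;> ring

lemma two_mul_sum_primesModFour_oddJacobiSym (hε : ε = 1 ∨ ε = 3) (D : ℤ) (N : ℕ) :
    2 * ∑ p ∈ primesModFour ε N, oddJacobiSym D p =
      ∑ p ∈ primesLE N, oddJacobiSym D p +
        ZMod.χ₄ ε * ∑ p ∈ primesLE N, oddJacobiSym (-D) p := by
  rw [primesModFour, ← Finset.filter_filter, ← Nat.primesLE_eq_filter_range, Finset.sum_filter,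
    Finset.mul_sum, Finset.mul_sum, ← Finset.sum_add_distrib]
  exact Finset.sum_congr rfl fun p _ => two_mul_ite_oddJacobiSym hε D p

lemma abs_chi_four_mul (hε : ε = 1 ∨ ε = 3) (t : ℝ) : |ZMod.χ₄ ε * t| = |t| := by
  obtain rfl | rfl := hε
  · rw [ZMod.χ₄_nat_one_mod_four rfl, Int.cast_one, one_mul]
  · rw [ZMod.χ₄_nat_three_mod_four rfl, Int.cast_neg, Int.cast_one, neg_one_mul, abs_neg]

lemma abs_sum_primesModFour_oddJacobiSym_le (hε : ε = 1 ∨ ε = 3) {D : ℤ}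
    (hD : |∑ p ∈ primesLE N, (oddJacobiSym D p : ℝ)| ≤ B)
    (hneg : |∑ p ∈ primesLE N, (oddJacobiSym (-D) p : ℝ)| ≤ B) :
    |∑ p ∈ primesModFour ε N, (oddJacobiSym D p : ℝ)| ≤ B := by
  have h2 := congrArg (Int.cast : ℤ → ℝ) (two_mul_sum_primesModFour_oddJacobiSym hε D N)
  push_cast at h2
  rw [← abs_chi_four_mul hε] at hneg
  rw [abs_le] at *
  constructor <;> linarith

lemma sum_primesModFour_oddJacobiSym_one (hε : ε = 1 ∨ ε = 3) (N : ℕ) :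
    ∑ p ∈ primesModFour ε N, oddJacobiSym 1 p = (primesModFour ε N).card := by
  rw [Finset.cast_card]
  refine Finset.sum_congr rfl fun p hp => ?_
  rw [oddJacobiSym_of_odd (prime_and_odd_of_mem_primesModFour hε p hp).2, jacobiSym.one_left]

lemma primeCounting_sub_one_le_sum_oddJacobiSym_one (N : ℕ) :
    (Nat.primeCounting N : ℤ) - 1 ≤ ∑ p ∈ primesLE N, oddJacobiSym 1 p := by
  have hterm : ∀ p ∈ primesLE N, 1 - (if p = 2 then 1 else 0) ≤ oddJacobiSym 1 p := fun p hp => by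
    obtain rfl | hodd := (Nat.prime_of_mem_primesLE hp).eq_two_or_odd'
    · exact (if_neg (by decide)).ge
    · rw [oddJacobiSym_of_odd hodd, jacobiSym.one_left]
      split_ifs <;> norm_num
  have hsum := Finset.sum_le_sum hterm
  rw [Finset.sum_sub_distrib, ← Finset.cast_card, Nat.primesLE_card_eq_primeCounting,
    Finset.sum_ite_eq'] at hsum
  split_ifs at hsum <;> omega

lemma primeCounting_le_two_mul_card_primesModFour_add (hε : ε = 1 ∨ ε = 3) (N : ℕ) :
    (Nat.primeCounting N : ℝ) ≤ 2 * (primesModFour ε N).card + 1 +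
      |∑ p ∈ primesLE N, (oddJacobiSym (-1) p : ℝ)| := by
  have h2 := congrArg (Int.cast : ℤ → ℝ) (two_mul_sum_primesModFour_oddJacobiSym hε 1 N)
  have hpi : ((Nat.primeCounting N - 1 : ℤ) : ℝ) ≤ (∑ p ∈ primesLE N, oddJacobiSym 1 p : ℤ) := by
    exact_mod_cast primeCounting_sub_one_le_sum_oddJacobiSym_one N
  rw [sum_primesModFour_oddJacobiSym_one hε] at h2
  push_cast at h2 hpi
  rw [← abs_chi_four_mul hε]
  linarith [neg_abs_le (ZMod.χ₄ ε * ∑ p ∈ primesLE N, (oddJacobiSym (-1) p : ℝ))]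

end ResidueClasses

section MainEstimate

open Filter

open Nat (primesLE)

open scoped Topology

variable {ε : ℕ}

lemma tendsto_log_mul_exp_neg_mul_sqrt_log {c : ℝ} (hc : 0 < c) :
    Tendsto (fun x => Real.log x * Real.exp (-c * √(Real.log x))) atTop (𝓝 0) := by
  refine ((tendsto_rpow_mul_exp_neg_mul_atTop_nhds_zero 2 c hc).comp
    (Real.tendsto_sqrt_atTop.comp Real.tendsto_log_atTop)).congr' ?_
  filter_upwards [eventually_ge_atTop 1] with x hx
  simp only [Function.comp_apply, Real.rpow_ofNat, sq_sqrt_log hx]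

lemma eventually_half_le_primeCounting_sub_one_mul_log :
    ∀ᶠ x : ℝ in atTop, x / 2 ≤ (Nat.primeCounting ⌊x⌋₊ - 1) * Real.log x := by
  have hsmall := Real.isLittleO_log_id_atTop.bound (c := 1 / 100) (by norm_num)
  filter_upwards [hsmall, eventually_ge_atTop 100] with x hlog hx
  rw [Real.norm_of_nonneg (Real.log_nonneg (by linarith)), id,
    Real.norm_of_nonneg (by linarith)] at hlog
  have hpi := Chebyshev.pi_ge' (x := x) (by linarith)
  rw [div_le_iff₀ (Real.log_pos (by linarith))] at hpi
  have hlog2 : Real.log (x + 2) ≤ Real.log 2 + Real.log x := by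
    rw [← Real.log_mul (by norm_num) (by linarith)]
    exact Real.log_le_log (by linarith) (by linarith)
  nlinarith [Real.log_two_gt_d9, Real.log_two_lt_d9]

lemma eventually_le_mul_card_primesModFour_mul_log (hε : ε = 1 ∨ ε = 3) :
    ∀ᶠ x : ℝ in atTop, x ≤ 8 * (primesModFour ε ⌊x⌋₊).card * Real.log x := by
  obtain ⟨c, hc, _, C, hC, X₀, _, hsum⟩ := exists_abs_sum_primesLE_oddJacobiSym_le 0
  have hsmall := (tendsto_log_mul_exp_neg_mul_sqrt_log hc).eventually_le_const
    (show 0 < 1 / (4 * C) by positivity)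
  filter_upwards [hsmall, eventually_half_le_primeCounting_sub_one_mul_log,
    eventually_ge_atTop X₀, eventually_ge_atTop 1] with x hsmall hpi hX₀ hx
  have hlog := Real.log_nonneg hx
  have hneg := hsum (-1) isUnit_one.neg.squarefree (by norm_num) x hX₀ (by simp)
  have herror : |∑ p ∈ primesLE ⌊x⌋₊, (oddJacobiSym (-1) p : ℝ)| * Real.log x ≤ x / 4 := calc
    _ ≤ C * x * Real.exp (-c * √(Real.log x)) * Real.log x := by gcongr
    _ = C * x * (Real.log x * Real.exp (-c * √(Real.log x))) := by ring
    _ ≤ C * x * (1 / (4 * C)) := by gcongr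
    _ = x / 4 := by field_simp
  nlinarith [primeCounting_le_two_mul_card_primesModFour_add hε ⌊x⌋₊]

lemma log_pow_le_mul_exp_neg_sqrt_log (k : ℕ) {x : ℝ} (hx : 3 ≤ x) :
    Real.log x ^ k ≤ 2 ^ k * k.factorial * (x * Real.exp (-(1 / 2) * √(Real.log x))) := by
  have hlog : 0 ≤ Real.log x := Real.log_nonneg (by linarith)
  have hpow := Real.pow_div_factorial_le_exp (Real.log x / 2) (by linarith) k
  rw [Real.exp_half, Real.exp_log (by linarith), div_pow, div_div, div_le_iff₀ (by positivity)]
    at hpow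
  calc _ ≤ √x * (2 ^ k * k.factorial) := hpow
    _ ≤ x * Real.exp (-(1 / 2) * √(Real.log x)) * (2 ^ k * k.factorial) := by
        gcongr
        exact sqrt_le_mul_exp_neg_sqrt_log hx
    _ = _ := mul_comm _ _

/-- The error term `Σ_{p ≤ N, p ≡ ε (4)} (n/p) - □(n) π(N;4,ε)`: the deviation of the sum of the
Legendre symbols from its expected value. -/
noncomputable def legendreDeviation (ε N n : ℕ) : ℝ :=
  ∑ p ∈ primesModFour ε N, (legendreSym' p n : ℝ) -
    (if IsSquare n then 1 else 0) * (primesModFour ε N).card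

lemma abs_legendreDeviation_le_two_mul_card (ε N n : ℕ) :
    |legendreDeviation ε N n| ≤ 2 * (primesModFour ε N).card := by
  have hsum : |∑ p ∈ primesModFour ε N, (legendreSym' p n : ℝ)| ≤ (primesModFour ε N).card := by
    rw [Finset.cast_card]
    exact (Finset.abs_sum_le_sum_abs _ _).trans
      (Finset.sum_le_sum fun p _ => abs_legendreSym'_le_one p n)
  have hsquare : |(if IsSquare n then 1 else 0) * ((primesModFour ε N).card : ℝ)| ≤
      (primesModFour ε N).card := by
    split_ifs <;> simp
  exact (abs_sub _ _).trans (by linarith)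

lemma abs_legendreDeviation_le {n N : ℕ} {B : ℝ} (hε : ε = 1 ∨ ε = 3) (hn : 0 < n) (hB : 0 ≤ B)
    (hsum : ∀ D : ℤ, Squarefree D → D ≠ 1 → D.natAbs ≤ n →
      |∑ p ∈ primesLE N, (oddJacobiSym D p : ℝ)| ≤ B) :
    |legendreDeviation ε N n| ≤ n + B := by
  obtain ⟨a, b, hab, ha⟩ := Nat.sq_mul_squarefree n
  have hb : b ≠ 0 := by
    rintro rfl
    exact hn.ne (by rw [← hab, zero_pow two_ne_zero, zero_mul])
  have hbn : b ≤ n := Nat.le_of_dvd hn ⟨b * a, by rw [← hab, sq, mul_assoc]⟩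
  have han : a ≤ n := Nat.le_of_dvd hn ⟨b ^ 2, by rw [← hab, mul_comm]⟩
  have hsymbols := abs_sum_legendreSym'_sub_sum_oddJacobiSym_le hb a
    (prime_and_odd_of_mem_primesModFour (N := N) hε)
  rw [← Nat.cast_pow, ← Nat.cast_mul, hab] at hsymbols
  have hmain : |∑ p ∈ primesModFour ε N, (oddJacobiSym a p : ℝ) -
      (if IsSquare n then 1 else 0) * (primesModFour ε N).card| ≤ B := by
    rw [← hab, ite_cond_congr (propext (isSquare_sq_mul_iff_of_squarefree ha hb))]
    split_ifs with ha1
    · rw [ha1, ← Int.cast_natCast (primesModFour ε N).card, ← sum_primesModFour_oddJacobiSym_one hε]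
      simpa using hB
    · rw [zero_mul, sub_zero]
      refine abs_sum_primesModFour_oddJacobiSym_le hε
        (hsum a (Int.squarefree_natCast.2 ha) (by exact_mod_cast ha1) (by simpa using han))
        (hsum (-a) ?_ (by omega) (by simpa using han))
      rwa [← Int.squarefree_natAbs, Int.natAbs_neg, Int.natAbs_natCast]
  have hbn' : (b : ℝ) ≤ n := by exact_mod_cast hbn
  exact (abs_sub_le _ _ _).trans (by linarith)

lemma exists_abs_legendreDeviation_le_of_le (k : ℕ) (hε : ε = 1 ∨ ε = 3) :
    ∃ c > (0 : ℝ), ∃ C > (0 : ℝ), ∃ X₀ : ℝ, ∀ x : ℝ, X₀ ≤ x → ∀ n : ℕ, 0 < n →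
      (n : ℝ) ≤ Real.log x ^ k → |legendreDeviation ε ⌊x⌋₊ n| ≤
        C * (primesModFour ε ⌊x⌋₊).card * Real.exp (-c * √(Real.log x)) := by
  obtain ⟨c, hc, hc1, C, hC, X₀, hX₀, hsum⟩ := exists_abs_sum_primesLE_oddJacobiSym_le k
  obtain ⟨X₁, hcard⟩ := eventually_atTop.1 (eventually_le_mul_card_primesModFour_mul_log hε)
  set K : ℝ := 2 ^ k * k.factorial
  refine ⟨c / 2 / 2, by positivity, 8 * (K + C) * (8 / (c / 2) ^ 2), by positivity, max X₀ X₁,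
    fun x hx n hn hnx => ?_⟩
  obtain ⟨hxX₀, hxX₁⟩ := max_le_iff.1 hx
  have hx3 : 3 ≤ x := hX₀.trans hxX₀
  have hℓx := sq_sqrt_log (by linarith : 1 ≤ x)
  have hpow := log_pow_le_mul_exp_neg_sqrt_log k hx3
  have hcard := hcard x hxX₁
  have hdeviation := abs_legendreDeviation_le (N := ⌊x⌋₊)
    (B := C * x * Real.exp (-c * √(Real.log x))) hε hn (by positivity) fun D hD hD1 hDn =>
      hsum D hD hD1 x hxX₀ (le_trans (by exact_mod_cast hDn) hnx)
  set S : ℝ := ((primesModFour ε ⌊x⌋₊).card : ℝ)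
  set ℓ := √(Real.log x)
  have hℓ : 0 ≤ ℓ := Real.sqrt_nonneg _
  calc |legendreDeviation ε ⌊x⌋₊ n|
      ≤ K * (x * Real.exp (-(1 / 2) * ℓ)) + C * x * Real.exp (-c * ℓ) := by linarith
    _ ≤ K * (x * Real.exp (-(c / 2) * ℓ)) + C * x * Real.exp (-(c / 2) * ℓ) := by
        gcongr
        linarith
    _ = (K + C) * x * Real.exp (-(c / 2) * ℓ) := by ring
    _ ≤ (K + C) * (8 * S * ℓ ^ 2) * Real.exp (-(c / 2) * ℓ) := by
        rw [hℓx]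
        gcongr
    _ = 8 * (K + C) * S * (ℓ ^ 2 * Real.exp (-(c / 2) * ℓ)) := by ring
    _ ≤ 8 * (K + C) * S * (8 / (c / 2) ^ 2 * Real.exp (-(c / 2 / 2) * ℓ)) := by
        gcongr 8 * (K + C) * S * ?_
        exact sq_mul_exp_neg_le (by positivity) hℓ
    _ = 8 * (K + C) * (8 / (c / 2) ^ 2) * S * Real.exp (-(c / 2 / 2) * ℓ) := by ring

lemma one_le_exp_mul_sqrt_log_mul {c x y : ℝ} (hc : 0 ≤ c) (hx : 0 < x) (hxy : x ≤ y) :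
    1 ≤ Real.exp (c * √(Real.log y)) * Real.exp (-c * √(Real.log x)) := by
  rw [← Real.exp_add, Real.one_le_exp_iff, neg_mul, ← sub_eq_add_neg, sub_nonneg]
  gcongr

end MainEstimate

end SiegelWalfisz

open SiegelWalfisz

/-- **Expectation of Legendre symbols over random primes.** For fixed `k` and
`ε ∈ {1,3}` there are constants `c, C > 0` such that for all `x ≥ 5` and all
`0 < n ≤ (log x)^k`,
`|∑_{p ≤ x, p ≡ ε (4)} (n/p) − □(n) π(x;4,ε)| ≤ C π(x;4,ε) exp(−c √(log x))`,
where `□(n)` is the indicator of the squares. -/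
theorem stmt_9 (k : ℕ) (hk : 0 < k) (ε : ℕ) (hε : ε = 1 ∨ ε = 3) :
    ∃ c > (0 : ℝ), ∃ C > (0 : ℝ), ∀ x : ℝ, 5 ≤ x → ∀ n : ℕ, 0 < n →
      (n : ℝ) ≤ Real.log x ^ k →
      |((∑ p ∈ (Finset.range (⌊x⌋₊ + 1)).filter (fun p => p.Prime ∧ p % 4 = ε),
            legendreSym' p (n : ℤ)) : ℝ) -
          (if IsSquare n then (1 : ℝ) else 0) *
            (((Finset.range (⌊x⌋₊ + 1)).filter
              (fun p => p.Prime ∧ p % 4 = ε)).card : ℝ)| ≤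
        C * (((Finset.range (⌊x⌋₊ + 1)).filter
              (fun p => p.Prime ∧ p % 4 = ε)).card : ℝ) *
          Real.exp (-c * Real.sqrt (Real.log x)) := by
  obtain ⟨c, hc, C, hC, X₀, hlarge⟩ := exists_abs_legendreDeviation_le_of_le k hε
  refine ⟨c, hc, C + 2 * Real.exp (c * √(Real.log X₀)), by positivity, fun x hx n hn hnx => ?_⟩
  change |legendreDeviation ε ⌊x⌋₊ n| ≤ (C + 2 * Real.exp (c * √(Real.log X₀))) *
    (primesModFour ε ⌊x⌋₊).card * Real.exp (-c * √(Real.log x))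
  obtain hX₀ | hX₀ := le_total X₀ x
  · refine (hlarge x hX₀ n hn hnx).trans ?_
    gcongr
    exact le_add_of_nonneg_right (by positivity)
  · calc |legendreDeviation ε ⌊x⌋₊ n| ≤ 2 * (primesModFour ε ⌊x⌋₊).card * 1 := by
          rw [mul_one]
          exact abs_legendreDeviation_le_two_mul_card ε ⌊x⌋₊ n
      _ ≤ 2 * (primesModFour ε ⌊x⌋₊).card *
            (Real.exp (c * √(Real.log X₀)) * Real.exp (-c * √(Real.log x))) := by
          gcongr
          exact one_le_exp_mul_sqrt_log_mul hc.le (by linarith) hX₀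
      _ = 2 * Real.exp (c * √(Real.log X₀)) * (primesModFour ε ⌊x⌋₊).card *
            Real.exp (-c * √(Real.log x)) := by ring
      _ ≤ _ := by
          gcongr
          exact le_add_of_nonneg_left hC.le
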